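/- arXiv:2110.00515 — 2 statements merged into one kernel-verified Lean document; each statement's English description precedes it below -/
import Mathlib

section
/- For every nonzero integer Δ₀, the set of pairs of integers (g₂, g₃) such that g₂³ − 27·g₃² = Δ₀ is finite. (This finiteness, a consequence of Siegel's theorem, is the key step in Shafarevich's proof that there are only finitely many elliptic curves over ℚ with good reduction outside a given finite set of primes.) -/
open Polynomial

/-- Coordinates of `α ^ k` in the basis `1, α, α ^ 2` for a root `α` of `x³ + b x² + c x + d`. -/
def pw (b c d : ℤ) : ℕ → Fin 3 → ℤ
  | 0 => ![1, 0, 0]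
  | k + 1 => ![-d * pw b c d k 2, pw b c d k 0 - c * pw b c d k 2, pw b c d k 1 - b * pw b c d k 2]

lemma pw_spec (b c d : ℤ) (α : ℂ) (h : α ^ 3 + b * α ^ 2 + c * α + d = 0) (k : ℕ) :
    α ^ k = pw b c d k 0 + pw b c d k 1 * α + pw b c d k 2 * α ^ 2 := by
  induction k with
  | zero => simp [pw]
  | succ k ih =>
    rw [pow_succ, ih]
    simp [pw]
    linear_combination (pw b c d k 2 : ℂ) * h

lemma pw_bound (b c d : ℤ) (k : ℕ) (l : Fin 3) :
    |pw b c d k l| ≤ (1 + |b| + |c| + |d|) ^ k := by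
  induction k generalizing l with
  | zero => fin_cases l <;> simp [pw]
  | succ k ih =>
    have h0 := ih 0
    have h1 := ih 1
    have h2 := ih 2
    set K := (1 + |b| + |c| + |d|) ^ k
    have hb : |b * pw b c d k 2| ≤ |b| * K := by rw [abs_mul]; gcongr
    have hc : |c * pw b c d k 2| ≤ |c| * K := by rw [abs_mul]; gcongr
    have hd : |d * pw b c d k 2| ≤ |d| * K := by rw [abs_mul]; gcongr
    have hK : 0 ≤ K := by positivity
    have e : (1 + |b| + |c| + |d|) ^ (k+1) = K + |b| * K + |c| * K + |d| * K := by
      rw [pow_succ]; ring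
    have nb : 0 ≤ |b| * K := by positivity
    have nc : 0 ≤ |c| * K := by positivity
    have nd : 0 ≤ |d| * K := by positivity
    rw [e]
    rw [abs_le] at *
    fin_cases l <;> simp [pw] <;> constructor <;> linarith [hb.1, hb.2, hc.1, hc.2, hd.1, hd.2]

lemma taylor_coeff_sum {R : Type*} [CommRing R] (p : R[X]) (N : ℕ) (hN : p.natDegree < N) (r : R)
    (k : ℕ) : (taylor r p).coeff k
      = ∑ i ∈ Finset.range N, (i.choose k : R) * p.coeff i * r ^ (i - k) := by
  rw [taylor_coeff, hasseDeriv_apply, Polynomial.sum_over_range' _ _ N hN]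
  · simp [eval_finsetSum]
  · simp

attribute [local instance] Matrix.seminormedAddCommGroup in
lemma siegel_aux {ι κ : Type*} [Fintype ι] [Fintype κ] (A : Matrix ι κ ℤ) (m : ℕ) (hm : 0 < m)
    (h1 : Fintype.card ι = 60 * m) (h2 : Fintype.card κ = 62 * m) (K : ℝ) (hK : 1 ≤ K)
    (hA : ∀ i j, |(A i j : ℝ)| ≤ K) :
    ∃ t : κ → ℤ, t ≠ 0 ∧ A.mulVec t = 0 ∧ ∀ j, |(t j : ℝ)| ≤ (62 * m * K) ^ 30 := by
  obtain ⟨t, ht, h, hb⟩ := Int.Matrix.exists_ne_zero_int_vec_norm_le A (by omega) (by omega)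
  refine ⟨t, ht, h, fun j => ?_⟩
  have hm' : (0 : ℝ) < m := by exact_mod_cast hm
  have e : ((Fintype.card ι : ℝ) / (Fintype.card κ - Fintype.card ι)) = (30 : ℕ) := by
    rw [h1, h2]; push_cast; field_simp; norm_num
  rw [e, Real.rpow_natCast, h2] at hb
  have h3 : |(t j : ℝ)| ≤ ‖t‖ := by
    have := norm_le_pi_norm t j
    rwa [Int.norm_eq_abs] at this
  refine h3.trans (hb.trans ?_)
  push_cast
  gcongr
  refine max_le hK ?_
  refine (Matrix.norm_le_iff (by linarith)).2 fun i j => ?_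
  rw [Int.norm_eq_abs]; exact hA i j

lemma aux_poly (b c d : ℤ) (α : ℂ) (h : α ^ 3 + b * α ^ 2 + c * α + d = 0) :
    ∃ C : ℝ, 1 ≤ C ∧ ∀ m : ℕ, 0 < m → ∃ P Q : ℤ[X], (P ≠ 0 ∨ Q ≠ 0) ∧ P.natDegree < 31 * m ∧
      Q.natDegree < 31 * m ∧ (∀ i, |(P.coeff i : ℝ)| ≤ C ^ m) ∧ (∀ i, |(Q.coeff i : ℝ)| ≤ C ^ m) ∧
      ∀ j < 20 * m, (taylor α (P.map (Int.castRingHom ℂ) -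
        Polynomial.C α * Q.map (Int.castRingHom ℂ))).coeff j = 0 := by
  set K : ℤ := 1 + |b| + |c| + |d| with hK
  have hK1 : 1 ≤ K := by have := abs_nonneg b; have := abs_nonneg c; have := abs_nonneg d; omega
  have hK1' : (1 : ℝ) ≤ K := by exact_mod_cast hK1
  refine ⟨(124 * (2 * (K : ℝ)) ^ 31) ^ 30, ?_, ?_⟩
  · apply one_le_pow₀
    have : 1 ≤ (2 * (K : ℝ)) ^ 31 := one_le_pow₀ (by linarith)
    linarith
  intro m hm
  set N := 31 * m with hN
  let A : Matrix (Fin (20 * m) × Fin 3) (Fin N ⊕ Fin N) ℤ := fun x y =>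
    Sum.elim (fun i : Fin N => ((i : ℕ).choose x.1 : ℤ) * pw b c d (i - x.1) x.2)
      (fun i : Fin N => -(((i : ℕ).choose x.1 : ℤ) * pw b c d (i - x.1 + 1) x.2)) y
  have key : ∀ (i j k : ℕ) (l : Fin 3), i < N → k ≤ N →
      |((i.choose j : ℤ) * pw b c d k l)| ≤ (2 * K) ^ N := by
    intro i j k l hi hk
    rw [abs_mul, mul_pow]
    have e1 : |((i.choose j : ℕ) : ℤ)| ≤ 2 ^ N := by
      rw [Nat.abs_cast]
      have : i.choose j ≤ 2 ^ N := (Nat.choose_le_two_pow i j).trans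
        (Nat.pow_le_pow_right (by norm_num) hi.le)
      exact_mod_cast this
    have e2 : |pw b c d k l| ≤ K ^ N := (pw_bound b c d k l).trans (pow_le_pow_right₀ hK1 hk)
    gcongr
  obtain ⟨t, ht, hAt, hb⟩ := siegel_aux A m hm (by simp; ring) (by simp; omega)
    ((2 * (K : ℝ)) ^ N) (one_le_pow₀ (by linarith)) (by
      rintro ⟨j, l⟩ (i | i)
      · exact_mod_cast key i j (i - j) l i.2 (by omega)
      · have := key i j (i - j + 1) l i.2 (by omega)
        rw [← abs_neg] at this
        exact_mod_cast this)
  have hbd : ∀ y, |(t y : ℝ)| ≤ ((124 * (2 * (K : ℝ)) ^ 31) ^ 30) ^ m := by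
    intro y
    refine (hb y).trans ?_
    have e0 : ((124 * (2 * (K : ℝ)) ^ 31) ^ 30) ^ m = (124 ^ m * (2 * (K : ℝ)) ^ N) ^ 30 := by
      have : ∀ x y : ℝ, ((x * y ^ 31) ^ 30) ^ m = (x ^ m * y ^ N) ^ 30 := by
        intro x y; rw [hN]; ring
      exact this _ _
    rw [e0]
    have h2 : (m : ℝ) ≤ 2 ^ m := by exact_mod_cast (Nat.lt_two_pow_self).le
    have h3 : (62 : ℝ) ≤ 62 ^ m := le_self_pow₀ (by norm_num) (by omega)
    have h4 : (62 : ℝ) * m ≤ 124 ^ m := by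
      rw [show (124 : ℝ) = 62 * 2 by norm_num, mul_pow]; gcongr
    gcongr
  have hcoef : ∀ (s : Fin N → ℤ) (j : ℕ), (∑ i : Fin N, monomial (i : ℕ) (s i)).coeff j
      = if hj : j < N then s ⟨j, hj⟩ else 0 := by
    intro s j
    rw [finsetSum_coeff]
    simp only [coeff_monomial]
    split_ifs with hj
    · rw [Finset.sum_eq_single ⟨j, hj⟩]
      · simp
      · intro x _ hx
        rw [if_neg]
        intro e; exact hx (Fin.ext e)
      · simp
    · apply Finset.sum_eq_zero
      intro x _
      rw [if_neg]
      intro e; omega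
  have hNpos : 0 < N := by omega
  have hdeg : ∀ (s : Fin N → ℤ), (∑ i : Fin N, monomial (i : ℕ) (s i)).natDegree < N := by
    intro s
    refine Nat.lt_of_le_pred hNpos (natDegree_le_iff_coeff_eq_zero.2 ?_)
    intro j hj
    rw [hcoef, dif_neg (by rw [Nat.pred_eq_sub_one] at hj; omega)]
  refine ⟨∑ i : Fin N, monomial (i : ℕ) (t (Sum.inl i)), ∑ i : Fin N, monomial (i : ℕ) (t (Sum.inr i)),
    ?_, hdeg _, hdeg _, ?_, ?_, ?_⟩
  · by_contra! hcon
    apply ht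
    funext y
    rcases y with i | i
    · have := congrArg (fun p => p.coeff i) hcon.1
      simpa only [hcoef, i.2, dif_pos, coeff_zero, Fin.eta, Pi.zero_apply] using this
    · have := congrArg (fun p => p.coeff i) hcon.2
      simpa only [hcoef, i.2, dif_pos, coeff_zero, Fin.eta, Pi.zero_apply] using this
  · intro i
    rw [hcoef]
    split_ifs
    · exact hbd _
    · simp only [Int.cast_zero, abs_zero]; positivity
  · intro i
    rw [hcoef]
    split_ifs
    · exact hbd _
    · simp only [Int.cast_zero, abs_zero]; positivity
  · intro j hj
    rw [taylor_coeff_sum _ N]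
    · have hrow : ∀ l : Fin 3, ∑ i : Fin N, (((i : ℕ).choose j : ℂ) * pw b c d (i - j) l * t (Sum.inl i)
          - ((i : ℕ).choose j : ℂ) * pw b c d (i - j + 1) l * t (Sum.inr i)) = 0 := by
        intro l
        have := congrFun hAt (⟨j, hj⟩, l)
        simp only [Matrix.mulVec, dotProduct, A, Fintype.sum_sum_type, Sum.elim_inl, Sum.elim_inr,
          Pi.zero_apply] at this
        have := congrArg (Int.cast : ℤ → ℂ) this
        push_cast at this
        rw [Finset.sum_sub_distrib]
        simpa [sub_eq_add_neg] using this
      rw [← Fin.sum_univ_eq_sum_range (fun i => (i.choose j : ℂ) * coeff _ i * α ^ (i - j))]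
      have e := congrArg₂ (· + ·) (hrow 0) (congrArg₂ (· + ·) (congrArg (· * α) (hrow 1))
        (congrArg (· * α ^ 2) (hrow 2)))
      simp only [Finset.sum_mul, ← Finset.sum_add_distrib, zero_mul, add_zero] at e
      rw [← e]
      refine Finset.sum_congr rfl fun i _ => ?_
      rw [coeff_sub, coeff_C_mul, coeff_map, coeff_map, hcoef, hcoef, dif_pos i.2, dif_pos i.2]
      have s1 := pw_spec b c d α h (i - j)
      have s2 := pw_spec b c d α h (i - j + 1)
      simp only [eq_intCast, Fin.eta]
      rw [pow_succ] at s2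
      linear_combination ((i : ℕ).choose j : ℂ) * t (Sum.inl i) * s1
        - ((i : ℕ).choose j : ℂ) * t (Sum.inr i) * s2
    · refine lt_of_le_of_lt (natDegree_sub_le _ _) (max_lt ?_ ?_)
      · exact lt_of_le_of_lt natDegree_map_le (hdeg _)
      · exact lt_of_le_of_lt (natDegree_C_mul_le _ _) (lt_of_le_of_lt natDegree_map_le (hdeg _))

lemma dvd_of_root (f : ℚ[X]) (hf : Irreducible f) (α : ℂ) (hα : aeval α f = 0) (V : ℚ[X])
    (hV : aeval α V = 0) : f ∣ V := by
  by_contra hn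
  have hc : IsCoprime f V := (hf.coprime_iff_not_dvd).2 hn
  obtain ⟨u, v, huv⟩ := hc
  have := congrArg (aeval α) huv
  simp [hα, hV] at this

lemma pow_dvd_of_root (f : ℚ[X]) (hf : Irreducible f) (α : ℂ) (hα : aeval α f = 0) (n : ℕ) :
    ∀ V : ℚ[X], (X - C α) ^ n ∣ V.map (algebraMap ℚ ℂ) → f ^ n ∣ V := by
  induction n with
  | zero => intro V _; simp
  | succ n ih =>
    intro V hV
    have hroot : aeval α V = 0 := by
      have : (X - C α) ∣ V.map (algebraMap ℚ ℂ) := (dvd_pow_self _ (by omega)).trans hV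
      rw [dvd_iff_isRoot, IsRoot, eval_map_algebraMap] at this
      exact this
    obtain ⟨V', rfl⟩ := dvd_of_root f hf α hα V hroot
    have hfr : (X - C α) ∣ f.map (algebraMap ℚ ℂ) := by
      rw [dvd_iff_isRoot, IsRoot, eval_map_algebraMap]; exact hα
    obtain ⟨g, hg⟩ := hfr
    have hgα : eval α g ≠ 0 := by
      intro h0
      have hsep : (f.map (algebraMap ℚ ℂ)).Separable := hf.separable.map
      rw [hg] at hsep
      have hgd : (X - C α) ∣ g := by rw [dvd_iff_isRoot]; exact h0
      have := hsep.isCoprime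
      have hu := this.isUnit_of_dvd' dvd_rfl hgd
      exact not_isUnit_X_sub_C α hu
    rw [Polynomial.map_mul, hg, pow_succ', mul_assoc] at hV
    have h2 := (mul_dvd_mul_iff_left (X_sub_C_ne_zero α)).1 hV
    have hcop : IsCoprime ((X - C α) ^ n) g := by
      apply IsCoprime.pow_left
      rw [(irreducible_X_sub_C α).coprime_iff_not_dvd, dvd_iff_isRoot]
      exact hgα
    have h3 := hcop.dvd_of_dvd_mul_left h2
    rw [pow_succ']
    exact mul_dvd_mul_left _ (ih V' h3)

lemma wronskian_ne (f : ℚ[X]) (hf : Irreducible f) (hfd : f.natDegree = 3) (α : ℂ)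
    (hα : aeval α f = 0) (m : ℕ) (hm : 0 < m) (P Q : ℚ[X]) (hne : P ≠ 0 ∨ Q ≠ 0)
    (hP : P.natDegree < 31 * m) (hQ : Q.natDegree < 31 * m)
    (hdvd : (X - C α) ^ (20 * m) ∣ P.map (algebraMap ℚ ℂ) - C α * Q.map (algebraMap ℚ ℂ)) :
    wronskian P Q ≠ 0 := by
  intro hW
  have hg0 : gcd P Q ≠ 0 := by
    intro h; rw [gcd_eq_zero_iff] at h; tauto
  obtain ⟨a, b, ha, hb, hu⟩ := extract_gcd P Q
  have hab : IsCoprime a b := (gcd_isUnit_iff a b).1 hu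
  set g := gcd P Q with hg
  have hW2 : wronskian a b = 0 := by
    have : g ^ 2 * wronskian a b = wronskian P Q := by
      rw [ha, hb]; simp only [wronskian, derivative_mul]; ring
    rw [hW] at this
    simpa [hg0] using this
  obtain ⟨da, db⟩ := hab.wronskian_eq_zero_iff.1 hW2
  obtain ⟨u, rfl⟩ : ∃ u, a = C u := ⟨_, eq_C_of_derivative_eq_zero da⟩
  obtain ⟨v, rfl⟩ : ∃ v, b = C v := ⟨_, eq_C_of_derivative_eq_zero db⟩
  have huv : u ≠ 0 ∨ v ≠ 0 := by
    by_contra! h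
    obtain ⟨rfl, rfl⟩ := h
    simp at ha hb
    tauto
  have hgd : g.natDegree < 31 * m := by
    rcases huv with h | h
    · rw [ha, natDegree_mul_C h] at hP; exact hP
    · rw [hb, natDegree_mul_C h] at hQ; exact hQ
  have hne : (u : ℂ) - α * v ≠ 0 := by
    intro h
    by_cases hv : v = 0
    · subst hv; simp at h; simp [h] at huv
    · have hα' : α = ((u / v : ℚ) : ℂ) := by
        have : (v : ℂ) ≠ 0 := by exact_mod_cast hv
        push_cast
        field_simp
        linear_combination -h
      have hd : f ∣ X - C (u / v) := by
        apply dvd_of_root f hf α hα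
        simp [hα']
      have := natDegree_le_of_dvd hd (X_sub_C_ne_zero _)
      rw [natDegree_X_sub_C] at this
      omega
  have e : P.map (algebraMap ℚ ℂ) - C α * Q.map (algebraMap ℚ ℂ)
      = g.map (algebraMap ℚ ℂ) * C ((u : ℂ) - α * v) := by
    conv_lhs => rw [ha, hb]
    simp
    ring
  rw [e] at hdvd
  have hun : IsUnit (C ((u : ℂ) - α * v)) := isUnit_C.2 (isUnit_iff_ne_zero.2 hne)
  rw [hun.dvd_mul_right] at hdvd
  have h1 := natDegree_le_of_dvd (pow_dvd_of_root f hf α hα _ _ hdvd) hg0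
  rw [natDegree_pow, hfd] at h1
  omega

lemma nonvanish (f : ℚ[X]) (hf : Irreducible f) (hfd : f.natDegree = 3) (α : ℂ)
    (hα : aeval α f = 0) (m : ℕ) (hm : 0 < m) (P Q : ℚ[X]) (hne : P ≠ 0 ∨ Q ≠ 0)
    (hP : P.natDegree < 31 * m) (hQ : Q.natDegree < 31 * m)
    (hdvd : (X - C α) ^ (20 * m) ∣ P.map (algebraMap ℚ ℂ) - C α * Q.map (algebraMap ℚ ℂ))
    (x₁ x₂ : ℚ) : ∃ k ≤ 2 * m + 1, (taylor x₁ (P - C x₂ * Q)).coeff k ≠ 0 := by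
  by_contra! hcon
  have hW := wronskian_ne f hf hfd α hα m hm P Q hne hP hQ hdvd
  have hd1 : (X - C x₁) ^ (2 * m + 2) ∣ P - C x₂ * Q := by
    rw [X_sub_C_pow_dvd_iff, X_pow_dvd_iff]
    intro k hk
    exact hcon k (by omega)
  have hd2 : (X - C x₁) ^ (2 * m + 1) ∣ wronskian P Q := by
    have e : wronskian P Q = (P - C x₂ * Q) * derivative Q - derivative (P - C x₂ * Q) * Q := by
      simp [wronskian]; ring
    rw [e]
    refine dvd_sub (Dvd.dvd.mul_right ((pow_dvd_pow _ (by omega)).trans hd1) _)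
      (Dvd.dvd.mul_right ?_ _)
    obtain ⟨g, hg⟩ := hd1
    rw [hg, derivative_mul, derivative_X_sub_C_pow]
    refine dvd_add (Dvd.dvd.mul_right (Dvd.dvd.mul_left ?_ _) _) (Dvd.dvd.mul_right ?_ _)
    · exact pow_dvd_pow _ (by omega)
    · exact pow_dvd_pow _ (by omega)
  have hd3 : f ^ (20 * m - 1) ∣ wronskian P Q := by
    apply pow_dvd_of_root f hf α hα
    set P' := P.map (algebraMap ℚ ℂ)
    set Q' := Q.map (algebraMap ℚ ℂ)
    have e : (wronskian P Q).map (algebraMap ℚ ℂ)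
        = (P' - C α * Q') * derivative Q' - derivative (P' - C α * Q') * Q' := by
      simp [wronskian, P', Q', derivative_map]; ring
    rw [e]
    refine dvd_sub (Dvd.dvd.mul_right ((pow_dvd_pow _ (by omega)).trans hdvd) _)
      (Dvd.dvd.mul_right ?_ _)
    obtain ⟨g, hg⟩ := hdvd
    rw [hg, derivative_mul, derivative_X_sub_C_pow]
    refine dvd_add (Dvd.dvd.mul_right (Dvd.dvd.mul_left dvd_rfl _) _) (Dvd.dvd.mul_right ?_ _)
    exact pow_dvd_pow _ (by omega)
  have hcop : IsCoprime ((X - C x₁) ^ (2 * m + 1)) (f ^ (20 * m - 1)) := by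
    apply IsCoprime.pow
    rw [isCoprime_comm, hf.coprime_iff_not_dvd]
    intro h
    have := natDegree_le_of_dvd h (X_sub_C_ne_zero _)
    rw [natDegree_X_sub_C] at this
    omega
  have h := natDegree_le_of_dvd (hcop.mul_dvd hd2 hd3) hW
  rw [natDegree_mul (pow_ne_zero _ (X_sub_C_ne_zero _)) (pow_ne_zero _ hf.ne_zero), natDegree_pow,
    natDegree_pow, natDegree_X_sub_C, hfd] at h
  have h2 := natDegree_wronskian_lt_add hW
  omega

lemma pow_alg1 (x K T c : ℝ) (m : ℕ) :
    x ^ (31 * m) * (x ^ (31 * m) * (T ^ m * K ^ m) * T ^ (31 * m)) * (c ^ 20) ^ m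
      = (x ^ 62 * K * T ^ 32 * c ^ 20) ^ m := by
  rw [mul_pow, mul_pow, mul_pow, ← pow_mul x, ← pow_mul T]
  have e1 : x ^ (62 * m) = x ^ (31 * m) * x ^ (31 * m) := by rw [← pow_add]; congr 1; omega
  have e2 : T ^ (32 * m) = T ^ m * T ^ (31 * m) := by rw [← pow_add]; congr 1; omega
  rw [e1, e2]
  generalize x ^ (31 * m) = p
  generalize T ^ (31 * m) = q
  generalize (c ^ 20) ^ m = r
  ring

lemma pow_alg2 (x K T c : ℝ) (m : ℕ) :
    x ^ (62 * m) * K ^ m * T ^ (32 * m) * (c ^ 20) ^ m = (x ^ 62 * K * T ^ 32 * c ^ 20) ^ m := by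
  rw [mul_pow, mul_pow, mul_pow, ← pow_mul x, ← pow_mul T]

lemma taylor_bound (p : ℂ[X]) (N : ℕ) (hN : p.natDegree < N) (H T : ℝ)
    (hH : ∀ i, ‖p.coeff i‖ ≤ H) (t : ℂ) (hT : 1 ≤ T) (ht : ‖t‖ ≤ T) (k : ℕ) :
    ‖(taylor t p).coeff k‖ ≤ 4 ^ N * H * T ^ N := by
  rw [taylor_coeff_sum p N hN]
  have hH0 : 0 ≤ H := (norm_nonneg _).trans (hH 0)
  have h1 : ∀ i ∈ Finset.range N, ‖(i.choose k : ℂ) * p.coeff i * t ^ (i - k)‖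
      ≤ 2 ^ N * H * T ^ N := by
    intro i hi
    rw [Finset.mem_range] at hi
    rw [norm_mul, norm_mul, norm_pow]
    have e1 : ‖(i.choose k : ℂ)‖ ≤ 2 ^ N := by
      rw [Complex.norm_natCast]
      have : i.choose k ≤ 2 ^ N := (Nat.choose_le_two_pow i k).trans
        (Nat.pow_le_pow_right (by norm_num) hi.le)
      exact_mod_cast this
    have e2 : ‖t‖ ^ (i - k) ≤ T ^ N :=
      (pow_le_pow_left₀ (norm_nonneg _) ht _).trans (pow_le_pow_right₀ hT (by omega))
    have e3 := hH i
    gcongr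
  refine (norm_sum_le_of_le _ h1).trans ?_
  rw [Finset.sum_const, Finset.card_range, nsmul_eq_mul]
  have h2 : (N : ℝ) ≤ 2 ^ N := by exact_mod_cast (Nat.lt_two_pow_self).le
  calc (N : ℝ) * (2 ^ N * H * T ^ N) ≤ 2 ^ N * (2 ^ N * H * T ^ N) := by gcongr
    _ = 4 ^ N * H * T ^ N := by
      rw [show (4 : ℝ) = 2 * 2 by norm_num, mul_pow]; ring

lemma taylor_bound_low (p : ℂ[X]) (N : ℕ) (hN : p.natDegree < N) (H : ℝ)
    (hH : ∀ i, ‖p.coeff i‖ ≤ H) (t : ℂ) (ht : ‖t‖ ≤ 1) (k n : ℕ)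
    (hlow : ∀ j < n, p.coeff j = 0) :
    ‖(taylor t p).coeff k‖ ≤ 4 ^ N * H * ‖t‖ ^ (n - k) := by
  rw [taylor_coeff_sum p N hN]
  have hH0 : 0 ≤ H := (norm_nonneg _).trans (hH 0)
  have h1 : ∀ i ∈ Finset.range N, ‖(i.choose k : ℂ) * p.coeff i * t ^ (i - k)‖
      ≤ 2 ^ N * H * ‖t‖ ^ (n - k) := by
    intro i hi
    rw [Finset.mem_range] at hi
    by_cases hin : i < n
    · rw [hlow i hin]; simp; positivity
    rw [norm_mul, norm_mul, norm_pow]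
    have e1 : ‖(i.choose k : ℂ)‖ ≤ 2 ^ N := by
      rw [Complex.norm_natCast]
      have : i.choose k ≤ 2 ^ N := (Nat.choose_le_two_pow i k).trans
        (Nat.pow_le_pow_right (by norm_num) hi.le)
      exact_mod_cast this
    have e2 : ‖t‖ ^ (i - k) ≤ ‖t‖ ^ (n - k) :=
      pow_le_pow_of_le_one (norm_nonneg _) ht (by omega)
    have e3 := hH i
    gcongr
  refine (norm_sum_le_of_le _ h1).trans ?_
  rw [Finset.sum_const, Finset.card_range, nsmul_eq_mul]
  have h2 : (N : ℝ) ≤ 2 ^ N := by exact_mod_cast (Nat.lt_two_pow_self).le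
  calc (N : ℝ) * (2 ^ N * H * ‖t‖ ^ (n - k)) ≤ 2 ^ N * (2 ^ N * H * ‖t‖ ^ (n - k)) := by gcongr
    _ = 4 ^ N * H * ‖t‖ ^ (n - k) := by
      rw [show (4 : ℝ) = 2 * 2 by norm_num, mul_pow]; ring

lemma integrality (P Q : ℤ[X]) (N k : ℕ) (hP : P.natDegree < N) (hQ : Q.natDegree < N)
    (u₁ v₁ u₂ v₂ : ℤ) (h₁ : v₁ ≠ 0) (h₂ : v₂ ≠ 0) :
    ∃ z : ℤ, (z : ℚ) = v₁ ^ (N - k) * v₂ * (taylor ((u₁ : ℚ) / v₁)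
      (P.map (Int.castRingHom ℚ) - C ((u₂ : ℚ) / v₂) * Q.map (Int.castRingHom ℚ))).coeff k := by
  have h₁' : (v₁ : ℚ) ≠ 0 := by exact_mod_cast h₁
  have h₂' : (v₂ : ℚ) ≠ 0 := by exact_mod_cast h₂
  refine ⟨∑ i ∈ Finset.range N, (i.choose k : ℤ) * (v₂ * P.coeff i - u₂ * Q.coeff i)
    * (u₁ ^ (i - k) * v₁ ^ (N - i)), ?_⟩
  rw [taylor_coeff_sum _ N]
  · rw [Finset.mul_sum]
    push_cast
    refine Finset.sum_congr rfl fun i hi => ?_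
    rw [Finset.mem_range] at hi
    by_cases hik : i < k
    · simp [Nat.choose_eq_zero_of_lt hik]
    have e : (v₁ : ℚ) ^ (N - k) = v₁ ^ (N - i) * v₁ ^ (i - k) := by
      rw [← pow_add]; congr 1; omega
    rw [e, div_pow, coeff_sub, coeff_C_mul, coeff_map, coeff_map]
    simp only [eq_intCast]
    field_simp
  · refine lt_of_le_of_lt (natDegree_sub_le _ _) (max_lt ?_ ?_)
    · exact lt_of_le_of_lt natDegree_map_le hP
    · exact lt_of_le_of_lt (natDegree_C_mul_le _ _) (lt_of_le_of_lt natDegree_map_le hQ)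

lemma final_ineq (B x y : ℝ) (m k : ℕ) (hB : 1 ≤ B) (hx : 2 * B < x) (hm : 4 ≤ m)
    (hk : k ≤ 2 * m + 1) (hy1 : x ^ (17 * m) ≤ y) (hy2 : y ≤ x ^ (17 * m + 17))
    (h : 1 ≤ x ^ (31 * m - k) * y * (B ^ m * ((1 / x ^ 3) ^ (20 * m - k) + 1 / y ^ 3))) : False := by
  have hx1 : 1 ≤ x := by linarith
  have hx0 : 0 < x := by linarith
  have hy0 : 0 < y := lt_of_lt_of_le (by positivity) hy1
  have t1 : x ^ (31 * m - k) * y * (1 / x ^ 3) ^ (20 * m - k) ≤ 1 / x ^ (3 * m) := by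
    rw [div_pow, one_pow, ← pow_mul, mul_one_div, div_le_div_iff₀ (by positivity) (by positivity),
      one_mul]
    calc x ^ (31 * m - k) * y * x ^ (3 * m)
        ≤ x ^ (31 * m - k) * x ^ (17 * m + 17) * x ^ (3 * m) := by gcongr
      _ = x ^ (31 * m - k + (17 * m + 17) + 3 * m) := by rw [pow_add _ (31 * m - k + (17 * m + 17)), pow_add _ (31 * m - k)]
      _ ≤ x ^ (3 * (20 * m - k)) := pow_le_pow_right₀ hx1 (by omega)
  have t2 : x ^ (31 * m - k) * y * (1 / y ^ 3) ≤ 1 / x ^ (3 * m) := by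
    have : x ^ (31 * m - k) * y * (1 / y ^ 3) = x ^ (31 * m - k) / y ^ 2 := by field_simp
    rw [this, div_le_div_iff₀ (by positivity) (by positivity), one_mul, ← pow_add]
    calc x ^ (31 * m - k + 3 * m) ≤ x ^ (17 * m * 2) := pow_le_pow_right₀ hx1 (by omega)
      _ = (x ^ (17 * m)) ^ 2 := by rw [pow_mul]
      _ ≤ y ^ 2 := by gcongr
  have h2 : 1 ≤ B ^ m * (2 / x ^ (3 * m)) := by
    calc 1 ≤ _ := h
      _ = B ^ m * (x ^ (31 * m - k) * y * (1 / x ^ 3) ^ (20 * m - k)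
        + x ^ (31 * m - k) * y * (1 / y ^ 3)) := by ring
      _ ≤ B ^ m * (1 / x ^ (3 * m) + 1 / x ^ (3 * m)) := by gcongr
      _ = _ := by ring
  rw [← mul_div_assoc, one_le_div (by positivity)] at h2
  have h3 : B ^ m * 2 ≤ (2 * B) ^ m := by
    rw [mul_pow, mul_comm]
    have : (2 : ℝ) ≤ 2 ^ m := le_self_pow₀ (by norm_num) (by omega)
    gcongr
  have h4 : (2 * B) ^ m < x ^ m := pow_lt_pow_left₀ hx (by linarith) (by omega)
  have h5 : x ^ m ≤ x ^ (3 * m) := pow_le_pow_right₀ hx1 (by omega)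
  linarith

lemma thue_pair (b c d : ℤ) (f : ℚ[X]) (hfdef : f = X ^ 3 + C (b : ℚ) * X ^ 2 + C (c : ℚ) * X + C (d : ℚ))
    (hf : Irreducible f) (α : ℂ) (hα : α ^ 3 + b * α ^ 2 + c * α + d = 0) (c₀ : ℝ) (hc₀ : 1 ≤ c₀) :
    ∃ B : ℝ, 1 ≤ B ∧ ∀ u₁ v₁ u₂ v₂ : ℤ, v₁ ≠ 0 → v₂ ≠ 0 → c₀ ≤ |(v₁ : ℝ)| →
      ‖(u₁ : ℂ) / v₁ - α‖ ≤ c₀ / |(v₁ : ℝ)| ^ 3 → ‖(u₂ : ℂ) / v₂ - α‖ ≤ c₀ / |(v₂ : ℝ)| ^ 3 →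
      ∀ m : ℕ, 0 < m → ∃ k ≤ 2 * m + 1,
        1 ≤ |(v₁ : ℝ)| ^ (31 * m - k) * |(v₂ : ℝ)| *
          (B ^ m * ((1 / |(v₁ : ℝ)| ^ 3) ^ (20 * m - k) + 1 / |(v₂ : ℝ)| ^ 3)) := by
  have hfd : f.natDegree = 3 := by rw [hfdef]; compute_degree!
  have hα' : aeval α f = 0 := by rw [hfdef]; simpa using hα
  obtain ⟨K, hK, hpoly⟩ := aux_poly b c d α hα
  set T : ℝ := 1 + ‖α‖ + c₀ with hT
  have hT1 : 1 ≤ T := by have := norm_nonneg α; linarith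
  refine ⟨4 ^ 62 * K * T ^ 32 * c₀ ^ 20, ?_, ?_⟩
  · have h1 : 1 ≤ T ^ 32 := one_le_pow₀ hT1
    have h2 : 1 ≤ c₀ ^ 20 := one_le_pow₀ hc₀
    have h3 : (1 : ℝ) ≤ 4 ^ 62 := by norm_num
    exact one_le_mul_of_one_le_of_one_le (one_le_mul_of_one_le_of_one_le
      (one_le_mul_of_one_le_of_one_le h3 hK) h1) h2
  intro u₁ v₁ u₂ v₂ h₁ h₂ hbig ha₁ ha₂ m hm
  obtain ⟨P, Q, hne, hP, hQ, hPc, hQc, hvan⟩ := hpoly m hm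
  set N := 31 * m with hN
  set PC := P.map (Int.castRingHom ℂ) with hPC
  set QC := Q.map (Int.castRingHom ℂ) with hQC
  set PQ := P.map (Int.castRingHom ℚ) with hPQ
  set QQ := Q.map (Int.castRingHom ℚ) with hQQ
  have eP : PQ.map (algebraMap ℚ ℂ) = PC := by
    rw [hPQ, Polynomial.map_map]; congr 1
  have eQ : QQ.map (algebraMap ℚ ℂ) = QC := by
    rw [hQQ, Polynomial.map_map]; congr 1
  have hinj : Function.Injective (Int.castRingHom ℚ) := Int.cast_injective
  obtain ⟨k, hk, hkne⟩ := nonvanish f hf hfd α hα' m hm PQ QQ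
    (hne.imp (fun h => (Polynomial.map_ne_zero_iff hinj).2 h)
      (fun h => (Polynomial.map_ne_zero_iff hinj).2 h))
    (lt_of_le_of_lt natDegree_map_le hP) (lt_of_le_of_lt natDegree_map_le hQ)
    (by
      rw [eP, eQ, X_sub_C_pow_dvd_iff, X_pow_dvd_iff]
      exact hvan) ((u₁ : ℚ) / v₁) ((u₂ : ℚ) / v₂)
  refine ⟨k, hk, ?_⟩
  obtain ⟨z, hz⟩ := integrality P Q N k hP hQ u₁ v₁ u₂ v₂ h₁ h₂
  set val := (taylor ((u₁ : ℚ) / v₁) (PQ - C ((u₂ : ℚ) / v₂) * QQ)).coeff k with hval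
  have hv₁ : (v₁ : ℚ) ≠ 0 := by exact_mod_cast h₁
  have hv₂ : (v₂ : ℚ) ≠ 0 := by exact_mod_cast h₂
  have hz0 : z ≠ 0 := by
    rintro rfl
    have : (v₁ : ℚ) ^ (N - k) * v₂ * val ≠ 0 := by positivity
    exact this (by rw [← hz]; simp)
  have hz1 : (1 : ℝ) ≤ |(z : ℝ)| := by exact_mod_cast Int.one_le_abs hz0
  have hzr : (z : ℝ) = v₁ ^ (N - k) * v₂ * (val : ℝ) := by exact_mod_cast congrArg (Rat.cast : ℚ → ℝ) hz
  rw [hzr, abs_mul, abs_mul, abs_pow] at hz1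
  refine hz1.trans ?_
  gcongr
  -- bound on the value
  set x₁ : ℂ := (u₁ : ℂ) / v₁ with hx₁
  set x₂ : ℂ := (u₂ : ℂ) / v₂ with hx₂
  have hvalC : (val : ℂ) = (taylor x₁ (PC - C x₂ * QC)).coeff k := by
    have : (val : ℂ) = ((taylor ((u₁ : ℚ) / v₁) (PQ - C ((u₂ : ℚ) / v₂) * QQ)).map
        (algebraMap ℚ ℂ)).coeff k := by rw [coeff_map, hval]; rfl
    rw [this, map_taylor, Polynomial.map_sub, Polynomial.map_mul, eP, eQ, map_C]
    simp [hx₁, hx₂]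
  have hsplit : (val : ℂ) = (taylor (x₁ - α) (taylor α (PC - C α * QC))).coeff k
      - (x₂ - α) * (taylor x₁ QC).coeff k := by
    rw [hvalC, taylor_taylor, sub_add_cancel, ← coeff_C_mul, ← coeff_sub]
    congr 1
    simp only [map_sub, taylor_mul, taylor_C]
    ring
  have hQn : QC.natDegree < N := lt_of_le_of_lt natDegree_map_le hQ
  have hRn : (PC - C α * QC).natDegree < N :=
    lt_of_le_of_lt (natDegree_sub_le _ _) (max_lt (lt_of_le_of_lt natDegree_map_le hP)
      (lt_of_le_of_lt (natDegree_C_mul_le _ _) hQn))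
  have hPb : ∀ i, ‖PC.coeff i‖ ≤ K ^ m := by
    intro i; rw [hPC, coeff_map, eq_intCast, Complex.norm_intCast]; exact hPc i
  have hQb : ∀ i, ‖QC.coeff i‖ ≤ K ^ m := by
    intro i; rw [hQC, coeff_map, eq_intCast, Complex.norm_intCast]; exact hQc i
  have hRb : ∀ i, ‖(PC - C α * QC).coeff i‖ ≤ T * K ^ m := by
    intro i
    rw [coeff_sub, coeff_C_mul]
    have hK0 : 0 ≤ K ^ m := by positivity
    calc _ ≤ ‖PC.coeff i‖ + ‖α * QC.coeff i‖ := norm_sub_le _ _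
      _ ≤ K ^ m + ‖α‖ * K ^ m := by
        rw [norm_mul]
        have := hPb i
        have := hQb i
        gcongr
      _ ≤ T * K ^ m := by rw [hT]; nlinarith
  have hαT : ‖α‖ ≤ T := by linarith
  have hSb := taylor_bound _ N hRn _ T hRb α hT1 hαT
  have hx0 : 0 < |(v₁ : ℝ)| := by positivity
  have hxge1 : 1 ≤ |(v₁ : ℝ)| := hc₀.trans hbig
  have hy0 : 0 < |(v₂ : ℝ)| := by
    have : (v₂ : ℝ) ≠ 0 := by exact_mod_cast h₂
    positivity
  have ht1 : ‖x₁ - α‖ ≤ 1 := by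
    refine ha₁.trans ?_
    rw [div_le_one (by positivity)]
    exact hbig.trans (le_self_pow₀ hxge1 (by norm_num))
  have hx₁T : ‖x₁‖ ≤ T := by
    have : ‖x₁‖ ≤ ‖x₁ - α‖ + ‖α‖ := by simpa using norm_add_le (x₁ - α) α
    linarith
  have b1 := taylor_bound_low (taylor α (PC - C α * QC)) N (by rw [natDegree_taylor]; exact hRn) _
    hSb (x₁ - α) ht1 k (20 * m) hvan
  have b2 := taylor_bound QC N hQn _ T hQb x₁ hT1 hx₁T k
  have hnorm : |(val : ℝ)| = ‖(val : ℂ)‖ := by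
    rw [← Complex.ofReal_ratCast, Complex.norm_real, Real.norm_eq_abs]
  rw [hnorm, hsplit]
  have c20 : (c₀ : ℝ) ^ (20 * m - k) ≤ (c₀ ^ 20) ^ m := by
    rw [← pow_mul]; exact pow_le_pow_right₀ hc₀ (by omega)
  have e1 : ‖x₁ - α‖ ^ (20 * m - k) ≤ (c₀ ^ 20) ^ m * (1 / |(v₁ : ℝ)| ^ 3) ^ (20 * m - k) := by
    calc ‖x₁ - α‖ ^ (20 * m - k) ≤ (c₀ / |(v₁ : ℝ)| ^ 3) ^ (20 * m - k) := by gcongr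
      _ = c₀ ^ (20 * m - k) * (1 / |(v₁ : ℝ)| ^ 3) ^ (20 * m - k) := by
        rw [← mul_pow, mul_one_div]
      _ ≤ _ := by gcongr
  have hTm : T ≤ T ^ m := le_self_pow₀ hT1 (by omega)
  have main1 : ‖(taylor (x₁ - α) (taylor α (PC - C α * QC))).coeff k‖
      ≤ (4 ^ 62 * K * T ^ 32 * c₀ ^ 20) ^ m * (1 / |(v₁ : ℝ)| ^ 3) ^ (20 * m - k) := by
    calc _ ≤ _ := b1
      _ ≤ 4 ^ N * (4 ^ N * (T ^ m * K ^ m) * T ^ N) *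
          ((c₀ ^ 20) ^ m * (1 / |(v₁ : ℝ)| ^ 3) ^ (20 * m - k)) := by gcongr
      _ = _ := by
        have : ∀ x : ℝ, x ^ N * (x ^ N * (T ^ m * K ^ m) * T ^ N) * (c₀ ^ 20) ^ m
          = (x ^ 62 * K * T ^ 32 * c₀ ^ 20) ^ m := by
          intro x; exact pow_alg1 x K T c₀ m
        rw [← this 4, ← mul_assoc]
  have main2 : ‖(x₂ - α) * (taylor x₁ QC).coeff k‖
      ≤ (4 ^ 62 * K * T ^ 32 * c₀ ^ 20) ^ m * (1 / |(v₂ : ℝ)| ^ 3) := by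
    rw [norm_mul]
    have c1 : c₀ ≤ (c₀ ^ 20) ^ m := by
      rw [← pow_mul]; exact le_self_pow₀ hc₀ (by omega)
    calc _ ≤ (c₀ / |(v₂ : ℝ)| ^ 3) * (4 ^ N * K ^ m * T ^ N) := by gcongr
      _ = (4 ^ N * K ^ m * T ^ N * c₀) * (1 / |(v₂ : ℝ)| ^ 3) := by
        generalize (4 : ℝ) ^ N = z
        ring
      _ ≤ (4 ^ (62 * m) * K ^ m * T ^ (32 * m) * (c₀ ^ 20) ^ m) * (1 / |(v₂ : ℝ)| ^ 3) := by
        have g1 : (4 : ℝ) ^ N ≤ 4 ^ (62 * m) := pow_le_pow_right₀ (by norm_num) (by omega)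
        have g2 : T ^ N ≤ T ^ (32 * m) := pow_le_pow_right₀ hT1 (by omega)
        gcongr
      _ = _ := by
        have : ∀ x : ℝ, x ^ (62 * m) * K ^ m * T ^ (32 * m) * (c₀ ^ 20) ^ m
          = (x ^ 62 * K * T ^ 32 * c₀ ^ 20) ^ m := by
          intro x; exact pow_alg2 x K T c₀ m
        rw [this]
  calc _ ≤ _ := norm_sub_le _ _
    _ ≤ _ := add_le_add main1 main2
    _ = _ := by rw [mul_add]

lemma thue_approx (b c d : ℤ) (f : ℚ[X])
    (hfdef : f = X ^ 3 + C (b : ℚ) * X ^ 2 + C (c : ℚ) * X + C (d : ℚ))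
    (hf : Irreducible f) (α : ℂ) (hα : α ^ 3 + b * α ^ 2 + c * α + d = 0) (c₀ : ℝ) (hc₀ : 1 ≤ c₀) :
    ∃ V : ℕ, ∀ u v : ℤ, v ≠ 0 → ‖(u : ℂ) / v - α‖ ≤ c₀ / |(v : ℝ)| ^ 3 → v.natAbs ≤ V := by
  obtain ⟨B, hB, h⟩ := thue_pair b c d f hfdef hf α hα c₀ hc₀
  obtain ⟨V₀, hV₀⟩ := exists_nat_gt (max (2 * B) c₀)
  by_cases hex : ∃ u v : ℤ, v ≠ 0 ∧ ‖(u : ℂ) / v - α‖ ≤ c₀ / |(v : ℝ)| ^ 3 ∧ V₀ < v.natAbs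
  · obtain ⟨u₁, v₁, h₁, ha₁, hV⟩ := hex
    refine ⟨(v₁.natAbs ^ 17) ^ 4, fun u₂ v₂ h₂ ha₂ => ?_⟩
    by_contra! hlt
    set x := v₁.natAbs with hx
    set y := v₂.natAbs with hy
    have hxr : |(v₁ : ℝ)| = x := by rw [hx, Nat.cast_natAbs]; push_cast; rfl
    have hyr : |(v₂ : ℝ)| = y := by rw [hy, Nat.cast_natAbs]; push_cast; rfl
    have hVx : (V₀ : ℝ) < x := by exact_mod_cast hV
    have hxB : 2 * B < x := (le_max_left _ _).trans_lt (hV₀.trans hVx)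
    have hxc : c₀ ≤ x := ((le_max_right _ _).trans_lt (hV₀.trans hVx)).le
    have hx1 : 1 < x := by
      have : (1 : ℝ) < x := by linarith
      exact_mod_cast this
    have hb1 : 1 < x ^ 17 := Nat.one_lt_pow (by norm_num) hx1
    have hy0 : y ≠ 0 := by omega
    set m := Nat.log (x ^ 17) y with hm
    have hm4 : 4 ≤ m := Nat.le_log_of_pow_le hb1 hlt.le
    have hl := Nat.pow_log_le_self (x ^ 17) hy0
    have hu := Nat.lt_pow_succ_log_self hb1 y
    rw [← hm, ← pow_mul] at hl hu
    obtain ⟨k, hk, hfin⟩ := h u₁ v₁ u₂ v₂ h₁ h₂ (by rw [hxr]; exact hxc) ha₁ ha₂ m (by omega)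
    rw [hxr, hyr] at hfin
    refine final_ineq B x y m k hB hxB hm4 hk ?_ ?_ hfin
    · exact_mod_cast hl
    · have : y ≤ x ^ (17 * m + 17) := by
        refine hu.le.trans (le_of_eq ?_)
        congr 1
      exact_mod_cast this
  · push Not at hex
    exact ⟨V₀, fun u v hv ha => hex u v hv ha⟩

lemma near_root_aux (z a₁ a₂ a₃ : ℂ) (δ M : ℝ) (hδ : 0 < δ) (h12 : δ ≤ ‖a₁ - a₂‖)
    (h13 : δ ≤ ‖a₁ - a₃‖) (hM : ‖z - a₁‖ * ‖z - a₂‖ * ‖z - a₃‖ = M)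
    (hm2 : ‖z - a₁‖ ≤ ‖z - a₂‖) (hm3 : ‖z - a₁‖ ≤ ‖z - a₃‖) : ‖z - a₁‖ ≤ 4 / δ ^ 2 * M := by
  have t2 : ‖a₁ - a₂‖ ≤ ‖z - a₂‖ + ‖z - a₁‖ := by
    have := norm_sub_le (z - a₂) (z - a₁); simpa using this
  have t3 : ‖a₁ - a₃‖ ≤ ‖z - a₃‖ + ‖z - a₁‖ := by
    have := norm_sub_le (z - a₃) (z - a₁); simpa using this
  have s2 : δ / 2 ≤ ‖z - a₂‖ := by linarith
  have s3 : δ / 2 ≤ ‖z - a₃‖ := by linarith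
  have : ‖z - a₁‖ * (δ / 2) * (δ / 2) ≤ M := by rw [← hM]; gcongr
  rw [div_mul_eq_mul_div, le_div_iff₀ (by positivity)]
  linarith

lemma near_root (z a₁ a₂ a₃ : ℂ) (δ M : ℝ) (hδ : 0 < δ) (h12 : δ ≤ ‖a₁ - a₂‖)
    (h13 : δ ≤ ‖a₁ - a₃‖) (h23 : δ ≤ ‖a₂ - a₃‖) (hM : ‖z - a₁‖ * ‖z - a₂‖ * ‖z - a₃‖ = M) :
    ‖z - a₁‖ ≤ 4 / δ ^ 2 * M ∨ ‖z - a₂‖ ≤ 4 / δ ^ 2 * M ∨ ‖z - a₃‖ ≤ 4 / δ ^ 2 * M := by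
  rcases le_total ‖z - a₁‖ ‖z - a₂‖ with h | h <;> rcases le_total ‖z - a₁‖ ‖z - a₃‖ with h' | h' <;>
    rcases le_total ‖z - a₂‖ ‖z - a₃‖ with h'' | h''
  · exact Or.inl (near_root_aux z a₁ a₂ a₃ δ M hδ h12 h13 hM h h')
  · exact Or.inl (near_root_aux z a₁ a₂ a₃ δ M hδ h12 h13 hM h h')
  · exact Or.inr (Or.inr (near_root_aux z a₃ a₁ a₂ δ M hδ (by rwa [norm_sub_rev])
      (by rwa [norm_sub_rev]) (by rw [← hM]; ring) h' (by linarith)))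
  · exact Or.inr (Or.inr (near_root_aux z a₃ a₁ a₂ δ M hδ (by rwa [norm_sub_rev])
      (by rwa [norm_sub_rev]) (by rw [← hM]; ring) h' (by linarith)))
  · exact Or.inr (Or.inl (near_root_aux z a₂ a₁ a₃ δ M hδ (by rwa [norm_sub_rev])
      h23 (by rw [← hM]; ring) h (by linarith)))
  · exact Or.inr (Or.inr (near_root_aux z a₃ a₁ a₂ δ M hδ (by rwa [norm_sub_rev])
      (by rwa [norm_sub_rev]) (by rw [← hM]; ring) (by linarith) h''))
  · exact Or.inr (Or.inl (near_root_aux z a₂ a₁ a₃ δ M hδ (by rwa [norm_sub_rev])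
      h23 (by rw [← hM]; ring) h (by linarith)))
  · exact Or.inr (Or.inr (near_root_aux z a₃ a₁ a₂ δ M hδ (by rwa [norm_sub_rev])
      (by rwa [norm_sub_rev]) (by rw [← hM]; ring) h' (by linarith)))

lemma three_roots (f : ℚ[X]) (hf : Irreducible f) (hm : f.Monic) (hfd : f.natDegree = 3) :
    ∃ a₁ a₂ a₃ : ℂ, a₁ ≠ a₂ ∧ a₁ ≠ a₃ ∧ a₂ ≠ a₃ ∧
      f.map (algebraMap ℚ ℂ) = (X - C a₁) * (X - C a₂) * (X - C a₃) := by
  have hs := IsAlgClosed.splits (f.map (algebraMap ℚ ℂ))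
  have hcard := hs.natDegree_eq_card_roots
  have hnd : (f.map (algebraMap ℚ ℂ)).roots.Nodup := nodup_roots hf.separable.map
  have hprod := hs.eq_prod_roots_of_monic (hm.map _)
  rw [natDegree_map, hfd] at hcard
  obtain ⟨x, y, z, hxyz⟩ := Multiset.card_eq_three.1 hcard.symm
  rw [hxyz] at hnd hprod
  refine ⟨x, y, z, ?_, ?_, ?_, ?_⟩
  · rintro rfl; simp at hnd
  · rintro rfl; simp at hnd
  · rintro rfl; simp at hnd
  · rw [hprod]; simp [mul_assoc]

lemma thue_monic (b c d m : ℤ) (hirr : ∀ r : ℚ, r ^ 3 + b * r ^ 2 + c * r + d ≠ 0) :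
    {p : ℤ × ℤ | p.1 ^ 3 + b * p.1 ^ 2 * p.2 + c * p.1 * p.2 ^ 2 + d * p.2 ^ 3 = m}.Finite := by
  set f : ℚ[X] := X ^ 3 + C (b : ℚ) * X ^ 2 + C (c : ℚ) * X + C (d : ℚ) with hfdef
  have hfd : f.natDegree = 3 := by rw [hfdef]; compute_degree!
  have hmon : f.Monic := by rw [hfdef]; monicity!
  have hf : Irreducible f := by
    rw [hmon.irreducible_iff_roots_eq_zero_of_degree_le_three (by omega) (by omega)]
    rw [Multiset.eq_zero_iff_forall_notMem]
    intro r hr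
    have := (mem_roots'.1 hr).2
    apply hirr r
    simpa [hfdef, IsRoot] using this
  obtain ⟨a₁, a₂, a₃, h12, h13, h23, hprod⟩ := three_roots f hf hmon hfd
  have hev : ∀ x : ℂ, x ^ 3 + b * x ^ 2 + c * x + d = (x - a₁) * (x - a₂) * (x - a₃) := by
    intro x
    have := congrArg (eval x) hprod
    simpa [hfdef] using this
  obtain ⟨δ, hδ, d12, d13, d23⟩ : ∃ δ : ℝ, 0 < δ ∧ δ ≤ ‖a₁ - a₂‖ ∧ δ ≤ ‖a₁ - a₃‖ ∧ δ ≤ ‖a₂ - a₃‖ := by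
    refine ⟨min ‖a₁ - a₂‖ (min ‖a₁ - a₃‖ ‖a₂ - a₃‖), ?_, min_le_left _ _,
      (min_le_right _ _).trans (min_le_left _ _), (min_le_right _ _).trans (min_le_right _ _)⟩
    have p1 := norm_pos_iff.2 (sub_ne_zero.2 h12)
    have p2 := norm_pos_iff.2 (sub_ne_zero.2 h13)
    have p3 := norm_pos_iff.2 (sub_ne_zero.2 h23)
    exact lt_min p1 (lt_min p2 p3)
  set c₀ : ℝ := max 1 (4 / δ ^ 2 * |(m : ℝ)|) with hc₀
  have hc1 : 1 ≤ c₀ := le_max_left _ _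
  obtain ⟨V₁, hV₁⟩ := thue_approx b c d f hfdef hf a₁ (by rw [hev]; ring) c₀ hc1
  obtain ⟨V₂, hV₂⟩ := thue_approx b c d f hfdef hf a₂ (by rw [hev]; ring) c₀ hc1
  obtain ⟨V₃, hV₃⟩ := thue_approx b c d f hfdef hf a₃ (by rw [hev]; ring) c₀ hc1
  set V := V₁ + V₂ + V₃ with hV
  set T : ℝ := ‖a₁‖ + ‖a₂‖ + ‖a₃‖ + c₀ with hT
  have hT0 : 0 ≤ T := by positivity
  obtain ⟨U, hU⟩ := exists_nat_gt (T * V + |(m : ℝ)|)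
  refine Set.Finite.subset ((Set.finite_Icc (-(U : ℤ)) U).prod (Set.finite_Icc (-(V : ℤ)) V)) ?_
  rintro ⟨u, v⟩ huv
  simp only [Set.mem_ofPred_eq] at huv
  rw [Set.mem_prod, Set.mem_Icc, Set.mem_Icc, ← abs_le, ← abs_le]
  show |u| ≤ U ∧ |v| ≤ V
  suffices h : |(u : ℝ)| ≤ T * V + |(m : ℝ)| ∧ |v| ≤ V by
    refine ⟨?_, h.2⟩
    have := h.1.trans hU.le
    exact_mod_cast this
  by_cases hv : v = 0
  · subst hv
    simp at huv
    refine ⟨?_, by simp⟩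
    have : |(u : ℝ)| ≤ |(m : ℝ)| := by
      rw [← huv]
      push_cast
      rw [abs_pow]
      by_cases hu : u = 0
      · simp [hu]
      · refine le_self_pow₀ ?_ (by norm_num)
        exact_mod_cast Int.one_le_abs hu
    have : 0 ≤ T * V := by positivity
    linarith
  have hvC : (v : ℂ) ≠ 0 := by exact_mod_cast hv
  have hvR : (v : ℝ) ≠ 0 := by exact_mod_cast hv
  have hvpos : 0 < |(v : ℝ)| := by positivity
  have hv1 : 1 ≤ |(v : ℝ)| := by exact_mod_cast Int.one_le_abs hv
  have hM : ‖(u : ℂ) / v - a₁‖ * ‖(u : ℂ) / v - a₂‖ * ‖(u : ℂ) / v - a₃‖ = |(m : ℝ)| / |(v : ℝ)| ^ 3 := by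
    rw [← norm_mul, ← norm_mul, ← hev]
    have huvC : (u : ℂ) ^ 3 + b * u ^ 2 * v + c * u * v ^ 2 + d * v ^ 3 = m := by exact_mod_cast huv
    have : ((u : ℂ) / v) ^ 3 + b * ((u : ℂ) / v) ^ 2 + c * ((u : ℂ) / v) + d = m / v ^ 3 := by
      rw [← huvC]; field_simp
    rw [this, norm_div, norm_pow, Complex.norm_intCast, Complex.norm_intCast]
  have hle : 4 / δ ^ 2 * (|(m : ℝ)| / |(v : ℝ)| ^ 3) ≤ c₀ / |(v : ℝ)| ^ 3 := by
    rw [← mul_div_assoc]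
    gcongr
    exact le_max_right _ _
  have hnr := near_root ((u : ℂ) / v) a₁ a₂ a₃ δ _ hδ d12 d13 d23 hM
  have hvV : v.natAbs ≤ V := by
    rcases hnr with h | h | h
    · have := hV₁ u v hv (h.trans hle); omega
    · have := hV₂ u v hv (h.trans hle); omega
    · have := hV₃ u v hv (h.trans hle); omega
  have hvV' : |v| ≤ V := by rw [Int.abs_eq_natAbs]; exact_mod_cast hvV
  refine ⟨?_, hvV'⟩
  have hc3 : c₀ / |(v : ℝ)| ^ 3 ≤ c₀ := div_le_self (by linarith) (one_le_pow₀ hv1)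
  have hq : ‖(u : ℂ) / v‖ ≤ T := by
    have n1 := norm_nonneg a₁
    have n2 := norm_nonneg a₂
    have n3 := norm_nonneg a₃
    rcases hnr with h | h | h
    · have := norm_add_le ((u : ℂ) / v - a₁) a₁
      rw [sub_add_cancel] at this
      linarith
    · have := norm_add_le ((u : ℂ) / v - a₂) a₂
      rw [sub_add_cancel] at this
      linarith
    · have := norm_add_le ((u : ℂ) / v - a₃) a₃
      rw [sub_add_cancel] at this
      linarith
  rw [norm_div, Complex.norm_intCast, Complex.norm_intCast, div_le_iff₀ hvpos] at hq
  have hvV'' : |(v : ℝ)| ≤ V := by exact_mod_cast hvV'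
  have : T * |(v : ℝ)| ≤ T * V := by gcongr
  have := abs_nonneg (m : ℝ)
  linarith

lemma thue_cubic (a b c d : ℤ)
    (hirr : ∀ u v : ℤ, a * u ^ 3 + b * u ^ 2 * v + c * u * v ^ 2 + d * v ^ 3 = 0 → u = 0 ∧ v = 0) :
    {p : ℤ × ℤ | a * p.1 ^ 3 + b * p.1 ^ 2 * p.2 + c * p.1 * p.2 ^ 2 + d * p.2 ^ 3 = 1}.Finite := by
  have ha : a ≠ 0 := by
    rintro rfl
    have := hirr 1 0 (by ring)
    omega
  have hfin := thue_monic b (a * c) (a ^ 2 * d) (a ^ 2) (by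
    intro r hr
    have hk : (r.den : ℚ) ≠ 0 := by exact_mod_cast r.den_nz
    have e : (r.num : ℚ) = r * r.den := (Rat.mul_den_eq_num r).symm
    have h0 : (a : ℚ) * r.num ^ 3 + b * r.num ^ 2 * (a * r.den) + c * r.num * (a * r.den) ^ 2
        + d * (a * r.den) ^ 3 = 0 := by
      push_cast at hr
      rw [e]
      linear_combination (a : ℚ) * r.den ^ 3 * hr
    have h1 := hirr r.num (a * r.den) (by exact_mod_cast h0)
    have h2 := h1.2
    simp [ha] at h2)
  have hinj : Function.Injective (fun p : ℤ × ℤ => (a * p.1, p.2)) := by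
    rintro ⟨u, v⟩ ⟨u', v'⟩ h
    simpa [ha] using h
  refine (hfin.preimage hinj.injOn).subset ?_
  rintro ⟨u, v⟩ h
  simp only [Set.mem_ofPred_eq, Set.mem_preimage] at h ⊢
  linear_combination a ^ 2 * h

lemma reduce_form (A B C D : ℝ) (hC : 0 < C) (hD : 0 < D) (hdisc : 4 * A * C - B ^ 2 = D) :
    ∃ p q r s : ℤ, p * s - q * r = 1 ∧
      (A * p ^ 2 + B * p * q + C * q ^ 2) * (A * r ^ 2 + B * r * s + C * s ^ 2) ≤ D / 3 := by
  have hsq : Real.sqrt D ^ 2 = D := Real.sq_sqrt hD.le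
  have hsp : 0 < Real.sqrt D := Real.sqrt_pos.2 hD
  let τ : UpperHalfPlane := ⟨⟨B / (2 * C), Real.sqrt D / (2 * C)⟩, by positivity⟩
  obtain ⟨g, hg⟩ := ModularGroup.exists_smul_mem_fd τ
  refine ⟨g 0 0, g 0 1, g 1 0, g 1 1, ?_, ?_⟩
  · have := g.det_coe
    rw [Matrix.det_fin_two] at this
    exact this
  have hre : (τ : ℂ).re = B / (2 * C) := rfl
  have him : (τ : ℂ).im = Real.sqrt D / (2 * C) := rfl
  have hQ : ∀ x y : ℝ, A * x ^ 2 + B * x * y + C * y ^ 2 = C * Complex.normSq (x * τ + y) := by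
    intro x y
    rw [Complex.normSq_apply]
    simp [-UpperHalfPlane.coe_re, -UpperHalfPlane.coe_im, hre, him]
    field_simp
    linear_combination x ^ 2 * hdisc - x ^ 2 * hsq
  set τ' := g • τ with hτ'
  have h3 := ModularGroup.three_le_four_mul_im_sq_of_mem_fd hg
  have hre' : |τ'.re| ≤ 1 / 2 := hg.2
  have hsm : (τ' : ℂ) = ((g 0 0 : ℝ) * τ + (g 0 1 : ℝ)) / ((g 1 0 : ℝ) * τ + (g 1 1 : ℝ)) := by
    rw [hτ', UpperHalfPlane.specialLinearGroup_apply]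
    simp
  have hn0 : ((g 1 0 : ℝ) * (τ : ℂ) + (g 1 1 : ℝ)) ≠ 0 := by
    have := UpperHalfPlane.denom_ne_zero g τ
    rw [ModularGroup.denom_apply] at this
    simpa using this
  have him' : τ'.im = τ.im / Complex.normSq ((g 1 0 : ℝ) * (τ : ℂ) + (g 1 1 : ℝ)) := by
    rw [hτ', ModularGroup.im_smul_eq_div_normSq, ModularGroup.denom_apply]
    simp
  rw [hQ, hQ]
  set z := ((g 1 0 : ℝ) * (τ : ℂ) + (g 1 1 : ℝ)) with hz
  have hnum : ((g 0 0 : ℝ) * (τ : ℂ) + (g 0 1 : ℝ)) = τ' * z := by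
    rw [hsm]; field_simp
  rw [hnum, Complex.normSq_mul]
  have hzp : 0 < Complex.normSq z := Complex.normSq_pos.2 hn0
  have e1 : τ'.im * Complex.normSq z = Real.sqrt D / (2 * C) := by
    rw [him', div_mul_cancel₀ _ hzp.ne']; rfl
  have hns : Complex.normSq τ' ≤ 4 / 3 * τ'.im ^ 2 := by
    rw [Complex.normSq_apply]
    have : τ'.re ^ 2 ≤ (1 / 2) ^ 2 := sq_le_sq' (by linarith [(abs_le.1 hre').1]) (abs_le.1 hre').2
    simp only [UpperHalfPlane.coe_re, UpperHalfPlane.coe_im]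
    nlinarith
  calc C * (Complex.normSq τ' * Complex.normSq z) * (C * Complex.normSq z)
      = C ^ 2 * Complex.normSq z ^ 2 * Complex.normSq τ' := by ring
    _ ≤ C ^ 2 * Complex.normSq z ^ 2 * (4 / 3 * τ'.im ^ 2) := by gcongr
    _ = 4 / 3 * C ^ 2 * (τ'.im * Complex.normSq z) ^ 2 := by ring
    _ = D / 3 := by
      rw [e1, div_pow, hsq]; field_simp; norm_num

lemma real_root (g₂ g₃ : ℝ) : ∃ ρ : ℝ, ρ ^ 3 - g₂ * ρ - 2 * g₃ = 0 := by
  have hc : Continuous fun x : ℝ => x ^ 3 - g₂ * x - 2 * g₃ := by fun_prop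
  have h1 := abs_nonneg g₂
  have h2 := abs_nonneg g₃
  have h3 := le_abs_self g₂
  have h4 := le_abs_self g₃
  have h5 := neg_abs_le g₃
  set L := 1 + |g₂| + 2 * |g₃| with hL
  have hL1 : 1 ≤ L := by linarith
  have hLL : L ≤ L ^ 2 := le_self_pow₀ hL1 (by norm_num)
  have k : 1 + 2 * |g₃| ≤ L * (L ^ 2 - g₂) := by
    have : 1 + 2 * |g₃| ≤ L ^ 2 - g₂ := by linarith
    nlinarith
  exact mem_range_of_exists_le_of_exists_ge hc ⟨-L, by nlinarith⟩ ⟨L, by nlinarith⟩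

lemma key_bound (g₂ g₃ ρ Δ x y : ℝ) (hρ : ρ ^ 3 - g₂ * ρ - 2 * g₃ = 0)
    (hΔ : g₂ ^ 3 - 27 * g₃ ^ 2 = Δ) :
    64 * |Δ| * (x ^ 3 - g₂ * x * y ^ 2 - 2 * g₃ * y ^ 3) ^ 2 ≤
      (|4 * g₂ - 3 * ρ ^ 2| * (x - ρ * y) ^ 2 + (3 * ρ * x + (3 * ρ ^ 2 - 2 * g₂) * y) ^ 2) ^ 3 := by
  set r := x - ρ * y with hr
  set w := 3 * ρ * x + (3 * ρ ^ 2 - 2 * g₂) * y with hw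
  set e := 4 * g₂ - 3 * ρ ^ 2 with he
  set h := 3 * ρ ^ 2 - g₂ with hh
  set F := x ^ 3 - g₂ * x * y ^ 2 - 2 * g₃ * y ^ 3 with hF
  have i1 : 4 * h * F = r * (w ^ 2 - e * r ^ 2) := by
    have : 2 * g₃ = ρ ^ 3 - g₂ * ρ := by linarith
    rw [hF, this, hh, hr, hw, he]; ring
  have i2 : h ^ 2 * e = 4 * Δ := by
    have : g₃ = (ρ ^ 3 - g₂ * ρ) / 2 := by linarith
    rw [← hΔ, this, hh, he]; ring
  have i3 : h ^ 2 * |e| = 4 * |Δ| := by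
    have := congrArg abs i2
    rw [abs_mul, abs_mul, abs_of_nonneg (sq_nonneg h)] at this
    rw [this]; norm_num
  have i4 : 64 * |Δ| * F ^ 2 = |e| * r ^ 2 * (w ^ 2 - e * r ^ 2) ^ 2 := by
    have : |e| * (4 * h * F) ^ 2 = |e| * (r * (w ^ 2 - e * r ^ 2)) ^ 2 := by rw [i1]
    linear_combination this - 16 * F ^ 2 * i3
  rw [i4]
  have e0 := abs_nonneg e
  have m0 : 0 ≤ |e| * r ^ 2 := by positivity
  have m1 : |e| * r ^ 2 ≤ |e| * r ^ 2 + w ^ 2 := by nlinarith [sq_nonneg w]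
  have m2 : (w ^ 2 - e * r ^ 2) ^ 2 ≤ (|e| * r ^ 2 + w ^ 2) ^ 2 := by
    have a1 : e * r ^ 2 ≤ |e| * r ^ 2 := by gcongr; exact le_abs_self e
    have a2 : -(|e|) * r ^ 2 ≤ e * r ^ 2 := by gcongr; exact neg_abs_le e
    exact sq_le_sq' (by nlinarith [sq_nonneg w]) (by nlinarith [sq_nonneg w])
  calc _ ≤ (|e| * r ^ 2 + w ^ 2) * (|e| * r ^ 2 + w ^ 2) ^ 2 := by gcongr
    _ = _ := by ring

set_option maxHeartbeats 1000000 in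
lemma irr_case (g₂ g₃ Δ : ℤ) (hΔ0 : Δ ≠ 0) (hΔ : g₂ ^ 3 - 27 * g₃ ^ 2 = Δ)
    (hirr : ∀ u v : ℤ, u ^ 3 - g₂ * u * v ^ 2 - 2 * g₃ * v ^ 3 = 0 → u = 0 ∧ v = 0) :
    ∃ a b c d u v : ℤ, |a| ≤ 2 * (64 * (22 * |Δ|) ^ 3) ∧ |b| ≤ 2 * (64 * (22 * |Δ|) ^ 3) ∧
      |c| ≤ 2 * (64 * (22 * |Δ|) ^ 3) ∧ |d| ≤ 2 * (64 * (22 * |Δ|) ^ 3) ∧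
      (∀ u v : ℤ, a * u ^ 3 + b * u ^ 2 * v + c * u * v ^ 2 + d * v ^ 3 = 0 → u = 0 ∧ v = 0) ∧
      a * u ^ 3 + b * u ^ 2 * v + c * u * v ^ 2 + d * v ^ 3 = 1 ∧
      (b ^ 2 - 3 * a * c) * u ^ 2 + (b * c - 9 * a * d) * u * v + (c ^ 2 - 3 * b * d) * v ^ 2
        = 3 * g₂ := by
  obtain ⟨ρ, hρ⟩ := real_root g₂ g₃
  have hΔr : (g₂ : ℝ) ^ 3 - 27 * (g₃ : ℝ) ^ 2 = (Δ : ℝ) := by exact_mod_cast hΔ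
  have hΔ1 : (1 : ℝ) ≤ |(Δ : ℝ)| := by exact_mod_cast Int.one_le_abs hΔ0
  set E : ℝ := |4 * g₂ - 3 * ρ ^ 2| with hE
  set h : ℝ := 3 * ρ ^ 2 - g₂ with hh
  have i2 : h ^ 2 * (4 * g₂ - 3 * ρ ^ 2) = 4 * Δ := by
    have : (g₃ : ℝ) = (ρ ^ 3 - g₂ * ρ) / 2 := by linarith
    rw [← hΔr, this, hh]; ring
  have i3 : h ^ 2 * E = 4 * |(Δ : ℝ)| := by
    have := congrArg abs i2
    rw [abs_mul, abs_mul, abs_of_nonneg (sq_nonneg h)] at this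
    rw [hE, this]; norm_num
  have hE0 : 0 < E := by
    rcases (abs_nonneg (4 * (g₂ : ℝ) - 3 * ρ ^ 2)).lt_or_eq with h' | h'
    · exact h'
    · rw [hE, ← h'] at i3; linarith
  have hh0 : h ≠ 0 := by
    intro h'; rw [h'] at i3; linarith
  set W : ℝ := 3 * ρ ^ 2 - 2 * g₂ with hW
  let Q : ℝ → ℝ → ℝ := fun x y => E * (x - ρ * y) ^ 2 + (3 * ρ * x + W * y) ^ 2
  have hQe : ∀ x y : ℝ, Q x y = (E + 9 * ρ ^ 2) * x ^ 2 + (-2 * E * ρ + 6 * ρ * W) * x * y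
      + (E * ρ ^ 2 + W ^ 2) * y ^ 2 := by intro x y; simp only [Q]; ring
  have hCpos : 0 < E * ρ ^ 2 + W ^ 2 := by
    by_cases hρ0 : ρ = 0
    · have hW0 : W ≠ 0 := by
        intro hW0
        apply hh0
        rw [hh]; rw [hW, hρ0] at hW0; rw [hρ0]; linarith
      positivity
    · positivity
  obtain ⟨p, q, r, s, hdet, hprod⟩ := reduce_form (E + 9 * ρ ^ 2) (-2 * E * ρ + 6 * ρ * W)
    (E * ρ ^ 2 + W ^ 2) (64 * |(Δ : ℝ)|) hCpos (by linarith) (by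
      have : h = (3 * ρ ^ 2 + W) / 2 := by rw [hh, hW]; ring
      rw [this] at i3
      linear_combination 16 * i3)
  rw [← hQe, ← hQe] at hprod
  let F : ℤ → ℤ → ℤ := fun x y => x ^ 3 - g₂ * x * y ^ 2 - 2 * g₃ * y ^ 3
  have hkey : ∀ x y : ℤ, 64 * |(Δ : ℝ)| * (F x y : ℝ) ^ 2 ≤ Q x y ^ 3 := by
    intro x y
    have := key_bound g₂ g₃ ρ Δ x y hρ hΔr
    simpa [F, Q, W, E] using this
  have hQ0 : ∀ x y : ℝ, 0 ≤ Q x y := by intro x y; simp only [Q]; positivity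
  have hF2 : ∀ x y : ℤ, (F x y : ℝ) ^ 2 ≤ Q x y ^ 3 := by
    intro x y
    have := hkey x y
    nlinarith [sq_nonneg (F x y : ℝ)]
  have hQ1 : ∀ x y : ℤ, (x ≠ 0 ∨ y ≠ 0) → 1 ≤ Q x y := by
    intro x y hxy
    have hF0 : F x y ≠ 0 := by
      intro h0
      have := hirr x y h0
      tauto
    have h1 : (1 : ℝ) ≤ (F x y : ℝ) ^ 2 := by
      have : 1 ≤ (F x y) ^ 2 := by
        have := sq_pos_of_ne_zero hF0
        omega
      exact_mod_cast this
    have h2 := h1.trans (hF2 x y)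
    by_contra! hlt
    have := pow_lt_one₀ (hQ0 x y) hlt (n := 3) (by norm_num)
    linarith
  have q1 : 1 ≤ Q p q := hQ1 p q (by
    by_contra! h'; rw [h'.1, h'.2] at hdet; simp at hdet)
  have q2 : 1 ≤ Q r s := hQ1 r s (by
    by_contra! h'; rw [h'.1, h'.2] at hdet; simp at hdet)
  set R : ℝ := 22 * |(Δ : ℝ)| with hR
  have r1 : Q p q ≤ R := by
    have := le_mul_of_one_le_right (hQ0 p q) q2
    linarith
  have r2 : Q r s ≤ R := by
    have := le_mul_of_one_le_left (hQ0 r s) q1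
    linarith
  have hR0 : 0 ≤ R := by positivity
  have hpar : Q (p + r) (q + s) + Q (p - r) (q - s) = 2 * (Q p q + Q r s) := by
    simp only [Q]; ring
  have r3 : Q (p + r) (q + s) ≤ 4 * R := by linarith [hQ0 (p - r) (q - s)]
  have r4 : Q (p - r) (q - s) ≤ 4 * R := by linarith [hQ0 (p + r) (q + s)]
  have hFb : ∀ x y : ℤ, Q x y ≤ 4 * R → |F x y| ≤ 64 * (22 * |Δ|) ^ 3 := by
    intro x y hxy
    have h1 : (F x y : ℝ) ^ 2 ≤ (4 * R) ^ 3 :=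
      (hF2 x y).trans (pow_le_pow_left₀ (hQ0 x y) hxy 3)
    have h2 : (F x y) ^ 2 ≤ 64 * (22 * |Δ|) ^ 3 := by
      have e : (4 * R) ^ 3 = 64 * (22 * |(Δ : ℝ)|) ^ 3 := by rw [hR]; ring
      rw [e] at h1
      exact_mod_cast h1
    have h3 : |F x y| ≤ (F x y) ^ 2 := by
      rw [← sq_abs]; exact Int.le_self_sq _
    exact h3.trans h2
  have f1 := hFb p q (by linarith)
  have f2 := hFb r s (by linarith)
  have f3 := hFb (p + r) (q + s) (by push_cast; exact r3)
  have f4 := hFb (p - r) (q - s) (by push_cast; exact r4)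
  set M := 64 * (22 * |Δ|) ^ 3 with hM
  set b := 3 * p ^ 2 * r - g₂ * (r * q ^ 2 + 2 * p * q * s) - 6 * g₃ * q ^ 2 * s with hb
  set c := 3 * p * r ^ 2 - g₂ * (p * s ^ 2 + 2 * r * s * q) - 6 * g₃ * q * s ^ 2 with hc
  have s1 : F (p + r) (q + s) = F p q + b + c + F r s := by simp only [F, hb, hc]; ring
  have s2 : F (p - r) (q - s) = F p q - b + c - F r s := by simp only [F, hb, hc]; ring
  rw [s1] at f3
  rw [s2] at f4
  have g1 := abs_le.1 f1
  have g2 := abs_le.1 f2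
  have g3 := abs_le.1 f3
  have g4 := abs_le.1 f4
  refine ⟨F p q, b, c, F r s, s, -q, ?_, ?_, ?_, ?_, ?_, ?_, ?_⟩
  · rw [abs_le]; constructor <;> linarith
  · rw [abs_le]; constructor <;> linarith
  · rw [abs_le]; constructor <;> linarith
  · rw [abs_le]; constructor <;> linarith
  · intro u v huv
    have : F (p * u + r * v) (q * u + s * v) = 0 := by
      rw [← huv]; simp only [F, hb, hc]; ring
    obtain ⟨z1, z2⟩ := hirr _ _ this
    constructor
    · linear_combination s * z1 - r * z2 - u * hdet
    · linear_combination p * z2 - q * z1 - v * hdet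
  · have : F p q * s ^ 3 + b * s ^ 2 * (-q) + c * s * (-q) ^ 2 + F r s * (-q) ^ 3
        = (p * s - q * r) ^ 3 := by simp only [F, hb, hc]; ring
    rw [this, hdet]; ring
  · have : (b ^ 2 - 3 * F p q * c) * s ^ 2 + (b * c - 9 * F p q * F r s) * s * (-q)
        + (c ^ 2 - 3 * b * F r s) * (-q) ^ 2 = 3 * g₂ * (p * s - q * r) ^ 4 := by
      simp only [F, hb, hc]; ring
    rw [this, hdet]; ring

lemma red_case (g₂ g₃ Δ : ℤ) (hΔ0 : Δ ≠ 0) (hΔ : g₂ ^ 3 - 27 * g₃ ^ 2 = Δ)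
    (hred : ¬ ∀ u v : ℤ, u ^ 3 - g₂ * u * v ^ 2 - 2 * g₃ * v ^ 3 = 0 → u = 0 ∧ v = 0) :
    |g₂| ≤ 8 * |Δ| := by
  push Not at hred
  obtain ⟨u, v, huv, hne⟩ := hred
  have hv : v ≠ 0 := by
    rintro rfl
    simp at huv
    exact hne huv rfl
  have hvq : (v : ℚ) ≠ 0 := by exact_mod_cast hv
  have hintg : IsIntegral ℤ ((u : ℚ) / v) := by
    refine ⟨X ^ 3 - C g₂ * X - C (2 * g₃), ?_, ?_⟩
    · have : (X ^ 3 - C g₂ * X - C (2 * g₃)) = X ^ 3 + (- C g₂ * X - C (2 * g₃)) := by ring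
      rw [this]
      apply monic_X_pow_add
      compute_degree!
    · have h : (u : ℚ) ^ 3 - g₂ * u * v ^ 2 - 2 * g₃ * v ^ 3 = 0 := by exact_mod_cast huv
      simp only [eval₂_sub, eval₂_mul, eval₂_C, eval₂_X, eval₂_X_pow]
      simp only [algebraMap_int_eq, eq_intCast]
      push_cast
      field_simp
      linear_combination h
  obtain ⟨r, hr⟩ := IsIntegrallyClosed.isIntegral_iff.1 hintg
  have hr3 : r ^ 3 - g₂ * r - 2 * g₃ = 0 := by
    have h : (u : ℚ) ^ 3 - g₂ * u * v ^ 2 - 2 * g₃ * v ^ 3 = 0 := by exact_mod_cast huv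
    have e : (u : ℚ) = r * v := by
      have : (r : ℚ) = u / v := hr
      rw [this]; field_simp
    rw [e] at h
    have h' : (v : ℚ) ^ 3 * ((r : ℚ) ^ 3 - g₂ * r - 2 * g₃) = 0 := by linear_combination h
    have := (mul_eq_zero.1 h').resolve_left (pow_ne_zero _ hvq)
    exact_mod_cast this
  have hfac : (3 * r ^ 2 - g₂) ^ 2 * (4 * g₂ - 3 * r ^ 2) = 4 * Δ := by
    rw [← hΔ]
    linear_combination (-27 : ℤ) * (r ^ 3 - g₂ * r + 2 * g₃) * hr3
  have h4 : 4 * Δ ≠ 0 := by omega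
  have d1 : |3 * r ^ 2 - g₂| ≤ |4 * Δ| := by
    apply Int.le_of_dvd (abs_pos.2 h4)
    rw [abs_dvd_abs, ← hfac]
    exact Dvd.intro_left _ (by ring : (3 * r ^ 2 - g₂) * (4 * g₂ - 3 * r ^ 2) * (3 * r ^ 2 - g₂) = _)
  have d2 : |4 * g₂ - 3 * r ^ 2| ≤ |4 * Δ| := by
    apply Int.le_of_dvd (abs_pos.2 h4)
    rw [abs_dvd_abs, ← hfac]
    exact Dvd.intro_left _ rfl
  rw [abs_mul] at d1 d2
  norm_num at d1 d2
  rw [abs_le] at *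
  constructor <;> linarith [abs_nonneg Δ, d1.1, d1.2, d2.1, d2.2]

/-- For every nonzero integer `Δ₀`, the set of integer pairs `(g₂, g₃)` with
`g₂³ − 27 g₃² = Δ₀` is finite. -/
theorem finite_fibers_of_discriminant (Δ₀ : ℤ) (hΔ₀ : Δ₀ ≠ 0) :
    {p : ℤ × ℤ | p.1 ^ 3 - 27 * p.2 ^ 2 = Δ₀}.Finite := by
  set M : ℤ := 2 * (64 * (22 * |Δ₀|) ^ 3) with hM
  -- the finite set of reduced forms without nontrivial zeros
  let I : Set ℤ := Set.Icc (-M) M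
  let S : Set (ℤ × ℤ × ℤ × ℤ) := {t | t ∈ I ×ˢ I ×ˢ I ×ˢ I ∧ ∀ u v : ℤ,
    t.1 * u ^ 3 + t.2.1 * u ^ 2 * v + t.2.2.1 * u * v ^ 2 + t.2.2.2 * v ^ 3 = 0 → u = 0 ∧ v = 0}
  have hI : I.Finite := Set.finite_Icc _ _
  have hS : S.Finite := (hI.prod (hI.prod (hI.prod hI))).subset fun t ht => ht.1
  let G : Set ℤ := ⋃ t ∈ S, (fun p : ℤ × ℤ => ((t.2.1 ^ 2 - 3 * t.1 * t.2.2.1) * p.1 ^ 2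
      + (t.2.1 * t.2.2.1 - 9 * t.1 * t.2.2.2) * p.1 * p.2
      + (t.2.2.1 ^ 2 - 3 * t.2.1 * t.2.2.2) * p.2 ^ 2) / 3) ''
    {p : ℤ × ℤ | t.1 * p.1 ^ 3 + t.2.1 * p.1 ^ 2 * p.2 + t.2.2.1 * p.1 * p.2 ^ 2
      + t.2.2.2 * p.2 ^ 3 = 1}
  have hG : G.Finite := hS.biUnion fun t ht => (thue_cubic _ _ _ _ ht.2).image _
  have hG' : (G ∪ Set.Icc (-(8 * |Δ₀|)) (8 * |Δ₀|)).Finite := hG.union (Set.finite_Icc _ _)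
  have hmem : ∀ p : ℤ × ℤ, p.1 ^ 3 - 27 * p.2 ^ 2 = Δ₀ →
      p.1 ∈ G ∪ Set.Icc (-(8 * |Δ₀|)) (8 * |Δ₀|) := by
    rintro ⟨g₂, g₃⟩ hp
    simp only at hp
    by_cases hirr : ∀ u v : ℤ, u ^ 3 - g₂ * u * v ^ 2 - 2 * g₃ * v ^ 3 = 0 → u = 0 ∧ v = 0
    · left
      obtain ⟨a, b, c, d, u, v, ha, hb, hc, hd, hz, h1, hH⟩ := irr_case g₂ g₃ Δ₀ hΔ₀ hp hirr
      refine Set.mem_biUnion (x := (a, b, c, d)) ⟨⟨abs_le.1 ha, abs_le.1 hb, abs_le.1 hc,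
        abs_le.1 hd⟩, hz⟩ ⟨(u, v), h1, ?_⟩
      simp only
      rw [hH]
      simp
    · right
      exact abs_le.1 (red_case g₂ g₃ Δ₀ hΔ₀ hp hirr)
  refine Set.Finite.subset (hG'.biUnion (t := fun g => {g} ×ˢ
    Set.Icc (-(|g ^ 3| + |Δ₀|)) (|g ^ 3| + |Δ₀|)) fun g _ =>
      (Set.finite_singleton g).prod (Set.finite_Icc _ _)) ?_
  rintro ⟨g₂, g₃⟩ hp
  refine Set.mem_biUnion (hmem _ hp) ⟨rfl, ?_⟩
  have hp' : g₂ ^ 3 - 27 * g₃ ^ 2 = Δ₀ := hp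
  rw [Set.mem_Icc, ← abs_le]
  show |g₃| ≤ |g₂ ^ 3| + |Δ₀|
  have h1 : |g₃| ≤ g₃ ^ 2 := by rw [← sq_abs]; exact Int.le_self_sq _
  have h2 := le_abs_self (g₂ ^ 3)
  have h3 := neg_abs_le Δ₀
  nlinarith [sq_nonneg g₃]
end

section
/- Roth's theorem: let α be a real number that is algebraic over ℚ and irrational, and let ρ > 1 be a real number. Then the set of pairs of integers (p, q) with q ≥ 1 such that q^ρ · |q·α − p| ≤ 1 is finite. -/
namespace RothPf
open MvPolynomial

/-- multi-index binomial coefficient -/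
noncomputable def bin {n : ℕ} (e I : Fin n →₀ ℕ) : ℕ := ∏ h, (e h).choose (I h)

/-- Hasse derivative -/
noncomputable def D {n : ℕ} {R : Type*} [CommRing R] (I : Fin n →₀ ℕ) (P : MvPolynomial (Fin n) R) :
    MvPolynomial (Fin n) R :=
  ∑ e ∈ P.support, monomial (e - I) ((bin e I : R) * coeff e P)

theorem bin_eq_zero {n : ℕ} {e I : Fin n →₀ ℕ} (h : ¬ I ≤ e) : bin e I = 0 := by
  rw [Finsupp.le_def] at h
  push Not at h
  obtain ⟨i, hi⟩ := h
  exact Finset.prod_eq_zero (Finset.mem_univ i) (Nat.choose_eq_zero_of_lt hi)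

theorem bin_ne_zero {n : ℕ} (f I : Fin n →₀ ℕ) : bin (f + I) I ≠ 0 := by
  unfold bin
  rw [Finset.prod_ne_zero_iff]
  intro i _
  simp only [Finsupp.add_apply]
  exact (Nat.choose_pos (by omega)).ne'

theorem coeff_D {n : ℕ} {R : Type*} [CommRing R] (I f : Fin n →₀ ℕ) (P : MvPolynomial (Fin n) R) :
    coeff f (D I P) = (bin (f + I) I : R) * coeff (f + I) P := by
  classical
  unfold D
  rw [coeff_sum]
  simp only [coeff_monomial]
  rw [Finset.sum_eq_single (f + I)]
  · simp
  · intro b _ hb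
    split_ifs with h
    · by_cases hI : I ≤ b
      · exfalso; apply hb; rw [← h, tsub_add_cancel_of_le hI]
      · simp [bin_eq_zero hI]
    · rfl
  · intro h
    rw [notMem_support_iff] at h
    simp [h]

theorem D_zero {n : ℕ} {R : Type*} [CommRing R] (P : MvPolynomial (Fin n) R) : D 0 P = P := by
  ext f
  rw [coeff_D]
  simp [bin]

theorem D_add {n : ℕ} {R : Type*} [CommRing R] (I : Fin n →₀ ℕ) (P Q : MvPolynomial (Fin n) R) :
    D I (P + Q) = D I P + D I Q := by
  ext f
  simp only [coeff_D, coeff_add]; ring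

theorem D_sum {n : ℕ} {R ι : Type*} [CommRing R] (I : Fin n →₀ ℕ) (s : Finset ι)
    (P : ι → MvPolynomial (Fin n) R) :
    D I (∑ i ∈ s, P i) = ∑ i ∈ s, D I (P i) := by
  ext f
  simp only [coeff_D, coeff_sum, Finset.mul_sum]

theorem D_map {n : ℕ} {R T : Type*} [CommRing R] [CommRing T] (g : R →+* T) (I : Fin n →₀ ℕ)
    (P : MvPolynomial (Fin n) R) :
    D I (map g P) = map g (D I P) := by
  ext f
  simp only [coeff_D, coeff_map, map_mul, map_natCast]

theorem bin_succ {n : ℕ} (f I : Fin n →₀ ℕ) (h : Fin n) :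
    bin (f + Finsupp.single h 1 + I) I * (f h + 1) =
      (I h + 1) * bin (f + (I + Finsupp.single h 1)) (I + Finsupp.single h 1) := by
  classical
  unfold bin
  rw [← Finset.mul_prod_erase _ _ (Finset.mem_univ h), ← Finset.mul_prod_erase _ (fun x => _) (Finset.mem_univ h)]
  have h1 : ∀ x ∈ Finset.univ.erase h,
      ((f + Finsupp.single h 1 + I : Fin n →₀ ℕ) x).choose (I x) =
      ((f + (I + Finsupp.single h 1) : Fin n →₀ ℕ) x).choose ((I + Finsupp.single h 1 : Fin n →₀ ℕ) x) := by
    intro x hx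
    have hx' : x ≠ h := Finset.ne_of_mem_erase hx
    simp [Finsupp.single_apply, hx'.symm]
  rw [Finset.prod_congr rfl h1]
  have h2 : ((f + Finsupp.single h 1 + I : Fin n →₀ ℕ) h).choose (I h) * (f h + 1) =
    (I h + 1) * ((f + (I + Finsupp.single h 1) : Fin n →₀ ℕ) h).choose
      ((I + Finsupp.single h 1 : Fin n →₀ ℕ) h) := by
    simp only [Finsupp.add_apply, Finsupp.single_eq_same]
    have := Nat.choose_succ_right_eq (f h + 1 + I h) (I h)
    rw [show f h + 1 + I h - I h = f h + 1 by omega] at this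
    rw [← this, show f h + (I h + 1) = f h + 1 + I h by omega, mul_comm]
  rw [mul_right_comm, h2]; ring

theorem D_succ {n : ℕ} {R : Type*} [CommRing R] (I : Fin n →₀ ℕ) (h : Fin n)
    (P : MvPolynomial (Fin n) R) :
    pderiv h (D I P) = C ((I h : R) + 1) * D (I + Finsupp.single h 1) P := by
  ext f
  rw [coeff_pderiv, coeff_D, coeff_C_mul, coeff_D]
  have := congrArg (Nat.cast : ℕ → R) (bin_succ f I h)
  push_cast at this
  rw [show f + (I + Finsupp.single h 1) = f + Finsupp.single h 1 + I by abel] at *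
  linear_combination (coeff (f + Finsupp.single h 1 + I) P) * this

/-- translation -/
noncomputable def S {n : ℕ} {R : Type*} [CommRing R] (a : Fin n → R) :
    MvPolynomial (Fin n) R →ₐ[R] MvPolynomial (Fin n) R :=
  aeval (fun i => X i + C (a i))

theorem S_pderiv {n : ℕ} {R : Type*} [CommRing R] (a : Fin n → R) (h : Fin n)
    (P : MvPolynomial (Fin n) R) : S a (pderiv h P) = pderiv h (S a P) := by
  classical
  induction P using MvPolynomial.induction_on with
  | C r => simp [S, algebraMap_eq]
  | add p q hp hq => simp [hp, hq]
  | mul_X p i hp =>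
    simp only [Derivation.leibniz, map_add, smul_eq_mul, map_mul, hp]
    have : S a (pderiv h (X i)) = pderiv h (S a (X i)) := by
      simp only [S, pderiv_X, aeval_X, map_add, pderiv_C, add_zero]
      by_cases hi : i = h
      · subst hi; simp
      · rw [Pi.single_eq_of_ne hi, map_zero]
    rw [this]

theorem S_D {n : ℕ} {K : Type*} [Field K] [CharZero K] (a : Fin n → K) (I : Fin n →₀ ℕ)
    (P : MvPolynomial (Fin n) K) : S a (D I P) = D I (S a P) := by
  generalize hN : I.degree = N
  induction N generalizing I with
  | zero =>
    rw [Finsupp.degree_eq_zero_iff] at hN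
    subst hN
    rw [D_zero, D_zero]
  | succ N ih =>
    obtain ⟨h, hh⟩ : ∃ h, I h ≠ 0 := by
      by_contra hcon
      push Not at hcon
      have : I = 0 := by ext h; simp [hcon h]
      subst this
      simp at hN
    obtain ⟨J, rfl⟩ : ∃ J, I = J + Finsupp.single h 1 := by
      refine ⟨I - Finsupp.single h 1, ?_⟩
      rw [tsub_add_cancel_of_le]
      rw [Finsupp.single_le_iff]; omega
    have hJ : J.degree = N := by
      rw [map_add, Finsupp.degree_single] at hN; omega
    have h1 := ih J hJ
    have h2 := congrArg (pderiv h) h1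
    rw [← S_pderiv, D_succ, D_succ, map_mul] at h2
    have h3 : S a (C ((J h : K) + 1)) = C ((J h : K) + 1) := by simp [S, algebraMap_eq]
    rw [h3] at h2
    refine mul_left_cancel₀ ?_ h2
    rw [Ne, C_eq_zero]
    exact Nat.cast_add_one_ne_zero _

/-- index at `a` w.r.t. weights `1/r` is at least `θ` -/
def Idx {n : ℕ} {K : Type*} [Field K] (a : Fin n → K) (r : Fin n → ℕ) (θ : ℝ)
    (P : MvPolynomial (Fin n) K) : Prop :=
  ∀ f, coeff f (S a P) ≠ 0 → θ ≤ ∑ h, (f h : ℝ) / r h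

section idx
variable {n : ℕ} {K : Type*} [Field K] {a : Fin n → K} {r : Fin n → ℕ}

theorem Idx.mono {θ θ' : ℝ} {P : MvPolynomial (Fin n) K} (h : Idx a r θ P) (hθ : θ' ≤ θ) :
    Idx a r θ' P := fun f hf => hθ.trans (h f hf)

theorem Idx.zero_le (P : MvPolynomial (Fin n) K) : Idx a r 0 P := fun f _ => by positivity

theorem Idx.sum {ι : Type*} {θ : ℝ} {s : Finset ι} {P : ι → MvPolynomial (Fin n) K}
    (h : ∀ i ∈ s, Idx a r θ (P i)) : Idx a r θ (∑ i ∈ s, P i) := by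
  intro f hf
  rw [map_sum, coeff_sum] at hf
  obtain ⟨i, hi, hne⟩ := Finset.exists_ne_zero_of_sum_ne_zero hf
  exact h i hi f hne

theorem Idx.mul {θ θ' : ℝ} {P Q : MvPolynomial (Fin n) K} (h : Idx a r θ P) (h' : Idx a r θ' Q) :
    Idx a r (θ + θ') (P * Q) := by
  intro f hf
  rw [map_mul, coeff_mul] at hf
  obtain ⟨⟨u, v⟩, hi, hne⟩ := Finset.exists_ne_zero_of_sum_ne_zero hf
  rw [Finset.HasAntidiagonal.mem_antidiagonal] at hi
  simp only at hi hne
  have h1 := h u (left_ne_zero_of_mul hne)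
  have h2 := h' v (right_ne_zero_of_mul hne)
  rw [← hi]
  simp only [Finsupp.add_apply, Nat.cast_add, add_div, Finset.sum_add_distrib]
  linarith

theorem Idx.prod {ι : Type*} {s : Finset ι} {θ : ι → ℝ} {P : ι → MvPolynomial (Fin n) K}
    (h : ∀ i ∈ s, Idx a r (θ i) (P i)) : Idx a r (∑ i ∈ s, θ i) (∏ i ∈ s, P i) := by
  classical
  induction s using Finset.induction_on with
  | empty => simpa using Idx.zero_le _
  | insert i s hi ih =>
    rw [Finset.sum_insert hi, Finset.prod_insert hi]
    exact (h i (Finset.mem_insert_self _ _)).mul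
      (ih (fun j hj => h j (Finset.mem_insert_of_mem hj)))

theorem Idx.det {k : ℕ} {θ : Fin k → ℝ} {M : Matrix (Fin k) (Fin k) (MvPolynomial (Fin n) K)}
    (h : ∀ i j, Idx a r (θ j) (M i j)) : Idx a r (∑ j, θ j) M.det := by
  rw [Matrix.det_apply']
  refine Idx.sum fun σ _ => ?_
  have := (Idx.zero_le (a := a) (r := r) (((Equiv.Perm.sign σ : ℤ) : MvPolynomial (Fin n) K))).mul
    (Idx.prod (s := Finset.univ) (θ := θ) (P := fun i => M (σ i) i) (fun i _ => h _ _))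
  simpa using this

theorem Idx.D [CharZero K] {θ : ℝ} {P : MvPolynomial (Fin n) K} (h : Idx a r θ P)
    (I : Fin n →₀ ℕ) : Idx a r (θ - ∑ h, (I h : ℝ) / r h) (D I P) := by
  intro f hf
  rw [S_D, coeff_D] at hf
  have := h _ (right_ne_zero_of_mul hf)
  simp only [Finsupp.add_apply, Nat.cast_add, add_div, Finset.sum_add_distrib] at this
  linarith
end idx

theorem coeff_zero_S {n : ℕ} {K : Type*} [Field K] (a : Fin n → K) (P : MvPolynomial (Fin n) K) :
    coeff 0 (S a P) = eval a P := by
  rw [← constantCoeff_eq]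
  induction P using MvPolynomial.induction_on with
  | C r => simp [S, algebraMap_eq]
  | add p q hp hq => simp [hp, hq]
  | mul_X p i hp => rw [map_mul, map_mul, hp, map_mul]; simp [S]

theorem coeff_S {n : ℕ} {K : Type*} [Field K] [CharZero K] (a : Fin n → K) (I : Fin n →₀ ℕ)
    (P : MvPolynomial (Fin n) K) : coeff I (S a P) = eval a (D I P) := by
  rw [← coeff_zero_S, S_D, coeff_D]
  simp [bin]

/-- Taylor formula -/
theorem eval_taylor {n : ℕ} {K : Type*} [Field K] (a b : Fin n → K) (P : MvPolynomial (Fin n) K) :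
    eval b P = ∑ f ∈ (S a P).support, coeff f (S a P) * ∏ h, (b h - a h) ^ (f h) := by
  rw [← eval_eq']
  induction P using MvPolynomial.induction_on with
  | C r => simp [S, algebraMap_eq]
  | add p q hp hq => simp [hp, hq]
  | mul_X p i hp => rw [map_mul, map_mul, hp, map_mul]; simp [S]

end RothPf

namespace RothPf
open MvPolynomial

/-- sum of absolute values of the coefficients -/
noncomputable def len {n : ℕ} {R : Type*} [NormedCommRing R] (P : MvPolynomial (Fin n) R) : ℝ :=
  ∑ e ∈ P.support, ‖coeff e P‖

section len
variable {n : ℕ} {R : Type*} [NormedCommRing R]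

theorem len_nonneg (P : MvPolynomial (Fin n) R) : 0 ≤ len P := Finset.sum_nonneg fun _ _ => norm_nonneg _

theorem len_eq {P : MvPolynomial (Fin n) R} {s : Finset (Fin n →₀ ℕ)} (h : P.support ⊆ s) :
    len P = ∑ e ∈ s, ‖coeff e P‖ := by
  refine Finset.sum_subset h fun e _ he => ?_
  rw [notMem_support_iff] at he
  simp [he]

theorem norm_coeff_le_len (P : MvPolynomial (Fin n) R) (e : Fin n →₀ ℕ) : ‖coeff e P‖ ≤ len P := by
  by_cases h : e ∈ P.support
  · exact Finset.single_le_sum (f := fun e => ‖coeff e P‖) (fun _ _ => norm_nonneg _) h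
  · rw [notMem_support_iff] at h
    simp [h, len_nonneg]

theorem len_zero : len (0 : MvPolynomial (Fin n) R) = 0 := by simp [len]

theorem len_add_le (P Q : MvPolynomial (Fin n) R) : len (P + Q) ≤ len P + len Q := by
  classical
  rw [len_eq (support_add (p := P) (q := Q)), len_eq (P := P) Finset.subset_union_left,
    len_eq (P := Q) Finset.subset_union_right, ← Finset.sum_add_distrib]
  exact Finset.sum_le_sum fun e _ => by rw [coeff_add]; exact norm_add_le _ _

theorem len_sum_le {ι : Type*} (s : Finset ι) (P : ι → MvPolynomial (Fin n) R) :
    len (∑ i ∈ s, P i) ≤ ∑ i ∈ s, len (P i) := by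
  classical
  induction s using Finset.induction_on with
  | empty => simp [len_zero]
  | insert i s hi ih =>
    rw [Finset.sum_insert hi, Finset.sum_insert hi]
    exact (len_add_le _ _).trans (by gcongr)

theorem len_monomial_le (e : Fin n →₀ ℕ) (c : R) : len (monomial e c) ≤ ‖c‖ := by
  classical
  rw [len_eq (support_monomial_subset (s := e) (a := c))]
  simp

theorem len_mul_le (P Q : MvPolynomial (Fin n) R) : len (P * Q) ≤ len P * len Q := by
  classical
  have h1 : P * Q = ∑ e ∈ P.support, ∑ f ∈ Q.support, monomial (e + f) (coeff e P * coeff f Q) := by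
    conv_lhs => rw [P.as_sum, Q.as_sum]
    rw [Finset.sum_mul_sum]
    simp only [monomial_mul]
  rw [h1]
  refine (len_sum_le _ _).trans ?_
  unfold len
  rw [Finset.sum_mul_sum]
  refine Finset.sum_le_sum fun e _ => (len_sum_le _ _).trans (Finset.sum_le_sum fun f _ => ?_)
  exact (len_monomial_le _ _).trans (norm_mul_le _ _)

theorem len_C_le (c : R) : len (C c : MvPolynomial (Fin n) R) ≤ ‖c‖ := len_monomial_le 0 c

variable [NormOneClass R]

theorem len_one_le : len (1 : MvPolynomial (Fin n) R) ≤ 1 := by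
  have := len_C_le (n := n) (1 : R)
  simpa using this

theorem len_prod_le {ι : Type*} (s : Finset ι) (P : ι → MvPolynomial (Fin n) R) :
    len (∏ i ∈ s, P i) ≤ ∏ i ∈ s, len (P i) := by
  classical
  induction s using Finset.induction_on with
  | empty => simpa using len_one_le
  | insert i s hi ih =>
    rw [Finset.prod_insert hi, Finset.prod_insert hi]
    exact (len_mul_le _ _).trans (mul_le_mul_of_nonneg_left ih (len_nonneg _))

theorem len_pow_le (P : MvPolynomial (Fin n) R) (k : ℕ) : len (P ^ k) ≤ len P ^ k := by
  have := len_prod_le (Finset.range k) (fun _ => P)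
  simpa using this

theorem len_X_le (i : Fin n) : len (X i : MvPolynomial (Fin n) R) ≤ 1 := by
  have := len_monomial_le (Finsupp.single i 1) (1 : R)
  simpa [X] using this

end len

theorem len_det_le {n k : ℕ} (M : Matrix (Fin k) (Fin k) (MvPolynomial (Fin n) ℤ)) {B : ℝ}
    (h : ∀ i j, len (M i j) ≤ B) : len M.det ≤ k.factorial * B ^ k := by
  rw [Matrix.det_apply']
  refine (len_sum_le _ _).trans ?_
  have : ∀ σ ∈ (Finset.univ : Finset (Equiv.Perm (Fin k))),
      len ((((Equiv.Perm.sign σ : ℤ) : MvPolynomial (Fin n) ℤ)) * ∏ i, M (σ i) i) ≤ B ^ k := by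
    intro σ _
    refine (len_mul_le _ _).trans ?_
    have h1 : len (((Equiv.Perm.sign σ : ℤ) : MvPolynomial (Fin n) ℤ)) ≤ 1 := by
      have := len_C_le (n := n) (Equiv.Perm.sign σ : ℤ)
      rcases Int.units_eq_one_or (Equiv.Perm.sign σ) with h | h <;> rw [h] at this ⊢ <;>
        simpa using this
    have h2 : len (∏ i, M (σ i) i) ≤ B ^ k := by
      refine (len_prod_le _ _).trans ?_
      have := Finset.prod_le_prod (s := Finset.univ) (f := fun i => len (M (σ i) i))
        (g := fun _ => B) (fun i _ => len_nonneg _) (fun i _ => h _ _)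
      simpa using this
    calc _ ≤ 1 * len (∏ i, M (σ i) i) := mul_le_mul_of_nonneg_right h1 (len_nonneg _)
      _ ≤ _ := by rw [one_mul]; exact h2
  refine (Finset.sum_le_sum this).trans ?_
  simp [Fintype.card_perm]

theorem degreeOf_det_le {n k : ℕ} {R : Type*} [CommRing R]
    (M : Matrix (Fin k) (Fin k) (MvPolynomial (Fin n) R)) (h : Fin n)
    {d : ℕ} (hd : ∀ i j, degreeOf h (M i j) ≤ d) : degreeOf h M.det ≤ k * d := by
  rw [Matrix.det_apply']
  refine (degreeOf_sum_le _ _ _).trans (Finset.sup_le fun σ _ => ?_)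
  have h0 : (((Equiv.Perm.sign σ : ℤ) : MvPolynomial (Fin n) R)) = C (((Equiv.Perm.sign σ : ℤ) : R)) := by
    simp
  rw [h0]
  refine (degreeOf_C_mul_le _ _ _).trans ((degreeOf_prod_le _ _ _).trans ?_)
  refine (Finset.sum_le_sum fun i _ => hd _ _).trans ?_
  simp

theorem bin_le {n : ℕ} {e I : Fin n →₀ ℕ} {r : Fin n → ℕ} (h : ∀ i, e i ≤ r i) :
    bin e I ≤ 2 ^ (∑ i, r i) := by
  rw [← Finset.prod_pow_eq_pow_sum]
  refine Finset.prod_le_prod (fun _ _ => Nat.zero_le _) fun i _ => ?_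
  exact (Nat.choose_le_two_pow _ _).trans (Nat.pow_le_pow_right (by norm_num) (h i))

theorem len_D_le {n : ℕ} {P : MvPolynomial (Fin n) ℤ} {r : Fin n → ℕ}
    (h : ∀ i, degreeOf i P ≤ r i) (I : Fin n →₀ ℕ) : len (D I P) ≤ 2 ^ (∑ i, r i) * len P := by
  unfold D
  refine (len_sum_le _ _).trans ?_
  rw [len, Finset.mul_sum]
  refine Finset.sum_le_sum fun e he => (len_monomial_le _ _).trans ((norm_mul_le _ _).trans ?_)
  refine mul_le_mul_of_nonneg_right ?_ (norm_nonneg _)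
  have : bin e I ≤ 2 ^ (∑ i, r i) := bin_le fun i => (monomial_le_degreeOf i he).trans (h i)
  simp only [Int.norm_natCast]
  exact_mod_cast this

theorem degreeOf_D_le {n : ℕ} {R : Type*} [CommRing R] {P : MvPolynomial (Fin n) R} (i : Fin n)
    (I : Fin n →₀ ℕ) : degreeOf i (D I P) ≤ degreeOf i P := by
  rw [degreeOf_le_iff]
  intro m hm
  rw [mem_support_iff, coeff_D] at hm
  have := monomial_le_degreeOf i (mem_support_iff.2 (right_ne_zero_of_mul hm))
  simp only [Finsupp.add_apply] at this
  omega

theorem len_S_le {n : ℕ} {P : MvPolynomial (Fin n) ℝ} {r : Fin n → ℕ} {A : ℝ} (a : Fin n → ℝ)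
    (hA : ∀ i, 1 + |a i| ≤ A) (hA1 : 1 ≤ A)
    (h : ∀ i, degreeOf i P ≤ r i) : len (S a P) ≤ A ^ (∑ i, r i) * len P := by
  conv_lhs => rw [P.as_sum, map_sum]
  refine (len_sum_le _ _).trans ?_
  rw [len, Finset.mul_sum]
  refine Finset.sum_le_sum fun e he => ?_
  rw [S, aeval_monomial, algebraMap_eq]
  refine (len_mul_le _ _).trans ?_
  rw [mul_comm]
  refine mul_le_mul ?_ (len_C_le _) (len_nonneg _) (by positivity)
  rw [Finsupp.prod_fintype _ _ (by simp), ← Finset.prod_pow_eq_pow_sum]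
  refine (len_prod_le _ _).trans (Finset.prod_le_prod (fun _ _ => len_nonneg _) fun i _ => ?_)
  refine (len_pow_le _ _).trans ?_
  have h1 : len (X i + C (a i) : MvPolynomial (Fin n) ℝ) ≤ A :=
    (len_add_le _ _).trans ((add_le_add (len_X_le i) (len_C_le _)).trans (hA i))
  calc _ ≤ A ^ e i := pow_le_pow_left₀ (len_nonneg _) h1 _
    _ ≤ A ^ r i := pow_le_pow_right₀ hA1 ((monomial_le_degreeOf i he).trans (h i))

theorem len_map_le {n : ℕ} (P : MvPolynomial (Fin n) ℤ) :
    len (map (Int.castRingHom ℝ) P) ≤ len P := by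
  rw [len_eq (P := map (Int.castRingHom ℝ) P) (s := P.support) (support_map_subset _ _)]
  refine Finset.sum_le_sum fun e _ => ?_
  rw [coeff_map]
  simp [Int.norm_eq_abs]

theorem one_le_len {n : ℕ} {P : MvPolynomial (Fin n) ℤ} (h : P ≠ 0) : 1 ≤ len P := by
  obtain ⟨e, he⟩ := MvPolynomial.ne_zero_iff.1 h
  refine le_trans ?_ (norm_coeff_le_len P e)
  rw [Int.norm_eq_abs]
  exact_mod_cast Int.one_le_abs he

end RothPf

namespace RothPf

/-- `i`-th power of the Euler operator on univariate polynomials -/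
noncomputable def Th (i : ℕ) (g : Polynomial ℚ) : Polynomial ℚ :=
  ∑ n ∈ g.support, Polynomial.monomial n ((n : ℚ) ^ i * g.coeff n)

theorem coeff_Th (i : ℕ) (g : Polynomial ℚ) (n : ℕ) :
    (Th i g).coeff n = (n : ℚ) ^ i * g.coeff n := by
  classical
  unfold Th
  simp only [Polynomial.finsetSum_coeff, Polynomial.coeff_monomial]
  rw [Finset.sum_ite_eq' g.support n (fun n => (n : ℚ) ^ i * g.coeff n)]
  split_ifs with h
  · rfl
  · rw [Polynomial.notMem_support_iff] at h; simp [h]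

theorem natDegree_Th_le (i : ℕ) (g : Polynomial ℚ) : (Th i g).natDegree ≤ g.natDegree := by
  rw [Polynomial.natDegree_le_iff_coeff_eq_zero]
  intro n hn
  rw [coeff_Th, Polynomial.coeff_eq_zero_of_natDegree_lt hn, mul_zero]

theorem coeff_prod_sum {ι : Type*} (s : Finset ι) (f : ι → Polynomial ℚ) (d : ι → ℕ)
    (h : ∀ i ∈ s, (f i).natDegree ≤ d i) :
    (∏ i ∈ s, f i).coeff (∑ i ∈ s, d i) = ∏ i ∈ s, (f i).coeff (d i) := by
  classical
  induction s using Finset.induction_on with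
  | empty => simp
  | insert i s hi ih =>
    rw [Finset.sum_insert hi, Finset.prod_insert hi, Finset.prod_insert hi,
      ← ih (fun j hj => h j (Finset.mem_insert_of_mem hj))]
    refine Polynomial.coeff_mul_add_eq_of_natDegree_le (h i (Finset.mem_insert_self _ _)) ?_
    refine (Polynomial.natDegree_prod_le _ _).trans
      (Finset.sum_le_sum fun j hj => h j (Finset.mem_insert_of_mem hj))

theorem det_Th_ne_zero {k : ℕ} (g : Fin k → Polynomial ℚ) (hg : LinearIndependent ℚ g) :
    (Matrix.of fun (i j : Fin k) => Th i (g j)).det ≠ 0 := by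
  classical
  generalize hN : ∑ j, (g j).natDegree = N
  induction N using Nat.strong_induction_on generalizing g with
  | _ N ih =>
  by_cases hinj : Function.Injective fun j => (g j).natDegree
  · intro h0
    have h1 := congrArg (fun p => Polynomial.coeff p (∑ j, (g j).natDegree)) h0
    simp only [Polynomial.coeff_zero] at h1
    rw [Matrix.det_apply', Polynomial.finsetSum_coeff] at h1
    have h2 : ∀ σ : Equiv.Perm (Fin k),
        ((((Equiv.Perm.sign σ : ℤ) : Polynomial ℚ)) * ∏ i, (Matrix.of fun (i j : Fin k) => Th i (g j)) (σ i) i).coeff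
          (∑ j, (g j).natDegree) =
        ((Equiv.Perm.sign σ : ℤ) : ℚ) * ∏ i, ((Matrix.vandermonde (fun j => ((g j).natDegree : ℚ))).transpose (σ i) i * (g i).leadingCoeff) := by
      intro σ
      rw [← Polynomial.C_eq_intCast, Polynomial.coeff_C_mul]
      simp only [Matrix.of_apply]
      rw [coeff_prod_sum _ _ _ (fun i _ => natDegree_Th_le _ _)]
      simp only [coeff_Th, Matrix.transpose_apply, Matrix.vandermonde_apply]
      rfl
    rw [Finset.sum_congr rfl (fun σ _ => h2 σ)] at h1
    simp only [Finset.prod_mul_distrib, ← mul_assoc] at h1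
    rw [← Finset.sum_mul, ← Matrix.det_apply', Matrix.det_transpose] at h1
    rcases mul_eq_zero.1 h1 with h | h
    · rw [Matrix.det_vandermonde_eq_zero_iff] at h
      obtain ⟨i, j, hij, hne⟩ := h
      exact hne (hinj (by exact_mod_cast hij))
    · rw [Finset.prod_eq_zero_iff] at h
      obtain ⟨i, _, hi⟩ := h
      exact hg.ne_zero i (Polynomial.leadingCoeff_eq_zero.1 hi)
  · rw [Function.Injective] at hinj
    push Not at hinj
    obtain ⟨a, b, hab, hne⟩ := hinj
    change (g a).natDegree = (g b).natDegree at hab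
    set c : ℚ := (g a).leadingCoeff / (g b).leadingCoeff with hc
    have hlb : (g b).leadingCoeff ≠ 0 := Polynomial.leadingCoeff_ne_zero.2 (hg.ne_zero b)
    have hla : (g a).leadingCoeff ≠ 0 := Polynomial.leadingCoeff_ne_zero.2 (hg.ne_zero a)
    set g' := Function.update g a (g a + (-c) • g b) with hg'
    have hli : LinearIndependent ℚ g' := by
      have h5 := (linearIndependent_add_smul_iff (R := ℚ) (v := g) (c := Pi.single a (-c)) (i := b)
        (by rw [Pi.single_eq_of_ne hne.symm])).2 hg
      have h6 : g' = (g + fun x => (Pi.single a (-c) : Fin k → ℚ) x • g b) := by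
        funext j
        by_cases hj : j = a
        · subst hj; simp [hg']
        · simp [hg', hj]
      rw [h6]; exact h5
    have hdet : (Matrix.of fun (i j : Fin k) => Th i (g' j)).det =
        (Matrix.of fun (i j : Fin k) => Th i (g j)).det := by
      rw [← Matrix.det_updateCol_add_smul_self (Matrix.of fun (i j : Fin k) => Th i (g j)) hne
        (Polynomial.C (-c))]
      congr 1
      ext i j n
      rw [Matrix.updateCol_apply]
      split_ifs with h
      · subst h
        simp [hg', coeff_Th]
        ring
      · simp [hg', Function.update_of_ne h]
    rw [← hdet]
    refine ih _ ?_ g' hli rfl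
    have hlt : (g' a).natDegree < (g a).natDegree := by
      have hne0 : g' a ≠ 0 := hli.ne_zero a
      have h3 : (g' a).degree < (g a).degree := by
        simp only [hg', Function.update_self]
        rw [neg_smul, ← sub_eq_add_neg]
        have hcne : c ≠ 0 := div_ne_zero hla hlb
        refine Polynomial.degree_sub_lt_left ?_ (hg.ne_zero a) ?_
        · rw [Polynomial.degree_smul_of_smul_regular _ (IsSMulRegular.of_ne_zero hcne),
            Polynomial.degree_eq_natDegree (hg.ne_zero a),
            Polynomial.degree_eq_natDegree (hg.ne_zero b), hab]
        · rw [Polynomial.smul_eq_C_mul, Polynomial.leadingCoeff_mul, Polynomial.leadingCoeff_C, hc]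
          field_simp
      exact Polynomial.natDegree_lt_natDegree hne0 h3
    rw [← hN]
    refine Finset.sum_lt_sum (fun j _ => ?_) ⟨a, Finset.mem_univ _, hlt⟩
    by_cases hj : j = a
    · subst hj; exact hlt.le
    · simp [hg', Function.update_of_ne hj]

/-- multilinear expansion of a determinant -/
theorem exists_det_ne_zero {R ι : Type*} [CommRing R] {k : ℕ} (M : Matrix (Fin k) (Fin k) R)
    (hM : M.det ≠ 0) (T : Fin k → Finset ι) (c : Fin k → ι → R) (v : ι → Fin k → R)
    (h : ∀ i, M i = ∑ s ∈ T i, c i s • v s) :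
    ∃ s : Fin k → ι, (∀ i, s i ∈ T i) ∧ (Matrix.of fun i => v (s i)).det ≠ 0 := by
  classical
  by_contra hcon
  push Not at hcon
  apply hM
  have h1 : M.det = Matrix.detRowAlternating (fun i => ∑ s ∈ T i, c i s • v s) := by
    have : M = Matrix.of (fun i => ∑ s ∈ T i, c i s • v s) := by
      funext i
      exact h i
    rw [this]
    rfl
  rw [h1]
  have h2 := (Matrix.detRowAlternating (n := Fin k) (R := R)).toMultilinearMap.map_sum_finset
    (fun i s => c i s • v s) T
  refine h2.trans (Finset.sum_eq_zero fun s hs => ?_)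
  rw [MultilinearMap.map_smul_univ]
  rw [Fintype.mem_piFinset] at hs
  have := hcon s hs
  rw [show (Matrix.detRowAlternating (n := Fin k) (R := R)).toMultilinearMap (fun i => v (s i)) =
    (Matrix.of fun i => v (s i)).det from rfl, this, smul_zero]

end RothPf

namespace RothPf
open MvPolynomial

theorem mul_bin {n : ℕ} (e I : Fin n →₀ ℕ) (h : Fin n) :
    e h * bin e I = I h * bin e I + (I h + 1) * bin e (I + Finsupp.single h 1) := by
  classical
  unfold bin
  rw [← Finset.mul_prod_erase _ _ (Finset.mem_univ h), ← Finset.mul_prod_erase _ (fun x => _) (Finset.mem_univ h)]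
  have h1 : ∀ x ∈ Finset.univ.erase h,
      (e x).choose ((I + Finsupp.single h 1 : Fin n →₀ ℕ) x) = (e x).choose (I x) := by
    intro x hx
    have hx' : x ≠ h := Finset.ne_of_mem_erase hx
    simp [hx'.symm]
  rw [Finset.prod_congr rfl h1]
  have h2 : e h * (e h).choose (I h) = I h * (e h).choose (I h) + (I h + 1) *
      (e h).choose ((I + Finsupp.single h 1 : Fin n →₀ ℕ) h) := by
    simp only [Finsupp.add_apply, Finsupp.single_eq_same]
    have h3 := Nat.choose_succ_right_eq (e h) (I h)
    rw [mul_comm] at h3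
    rw [h3]
    by_cases hle : I h ≤ e h
    · obtain ⟨c, hc⟩ := Nat.exists_eq_add_of_le hle
      rw [hc, Nat.add_sub_cancel_left]; ring
    · rw [Nat.choose_eq_zero_of_lt (by omega)]; simp
  rw [← mul_assoc, h2]; ring

/-- weight of an exponent -/
def wt {n : ℕ} (w : Fin n → ℕ) (e : Fin n →₀ ℕ) : ℕ := ∑ h, w h * e h

theorem pow_mem_span {n : ℕ} (w : Fin n → ℕ) (i : ℕ) :
    (fun e : Fin n →₀ ℕ => ((wt w e : ℕ) : ℚ) ^ i) ∈
      Submodule.span ℚ ((fun I (e : Fin n →₀ ℕ) => (bin e I : ℚ)) '' {I | I.degree ≤ i}) := by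
  induction i with
  | zero =>
    apply Submodule.subset_span
    refine ⟨0, by simp, ?_⟩
    funext e
    simp [bin]
  | succ i ih =>
    have key : ∀ u ∈ Submodule.span ℚ ((fun I (e : Fin n →₀ ℕ) => (bin e I : ℚ)) '' {I | I.degree ≤ i}),
        (fun e : Fin n →₀ ℕ => ((wt w e : ℕ) : ℚ) * u e) ∈
        Submodule.span ℚ ((fun I (e : Fin n →₀ ℕ) => (bin e I : ℚ)) '' {I | I.degree ≤ i + 1}) := by
      intro u hu
      induction hu using Submodule.span_induction with
      | mem x hx =>
        obtain ⟨I, hI, rfl⟩ := hx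
        simp only [Set.mem_ofPred_eq] at hI
        have : (fun e : Fin n →₀ ℕ => ((wt w e : ℕ) : ℚ) * (bin e I : ℚ)) =
            ∑ h, (((w h * I h : ℕ) : ℚ) • (fun e : Fin n →₀ ℕ => (bin e I : ℚ)) +
              ((w h * (I h + 1) : ℕ) : ℚ) • (fun e : Fin n →₀ ℕ => (bin e (I + Finsupp.single h 1) : ℚ))) := by
          funext e
          simp only [Finset.sum_apply, Pi.add_apply, Pi.smul_apply, smul_eq_mul]
          norm_cast
          unfold wt
          rw [Finset.sum_mul]
          refine Finset.sum_congr rfl fun h _ => ?_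
          rw [mul_assoc, mul_bin]; ring
        rw [this]
        refine Submodule.sum_mem _ fun h _ => Submodule.add_mem _ ?_ ?_
        · exact Submodule.smul_mem _ _ (Submodule.subset_span ⟨I, by simp; omega, rfl⟩)
        · refine Submodule.smul_mem _ _ (Submodule.subset_span ⟨I + Finsupp.single h 1, ?_, rfl⟩)
          simp [map_add]; omega
      | zero =>
        simp only [Pi.zero_apply, mul_zero]
        exact Submodule.zero_mem (Submodule.span ℚ _)
      | add x y _ _ hx hy =>
        have := Submodule.add_mem _ hx hy
        convert this using 1
        funext e
        simp [mul_add]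
      | smul a x _ hx =>
        have := Submodule.smul_mem _ a hx
        convert this using 1
        funext e
        simp; ring
    have := key _ ih
    convert this using 1
    funext e
    ring

theorem exists_pow_eq {n : ℕ} (w : Fin n → ℕ) (i : ℕ) :
    ∃ T : Finset (Fin n →₀ ℕ), (∀ I ∈ T, I.degree ≤ i) ∧ ∃ c : (Fin n →₀ ℕ) → ℚ,
      ∀ e, ((wt w e : ℕ) : ℚ) ^ i = ∑ I ∈ T, c I * (bin e I : ℚ) := by
  classical
  obtain ⟨t, ht, c, hc⟩ := (Submodule.mem_span_image_iff_exists_fun ℚ).1 (pow_mem_span w i)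
  refine ⟨t, fun I hI => ht hI, fun I => if h : I ∈ t then c ⟨I, h⟩ else 0, fun e => ?_⟩
  have := congrFun hc e
  simp only [Finset.sum_apply, Pi.smul_apply, smul_eq_mul] at this
  rw [← this, ← Finset.sum_coe_sort t]
  refine Finset.sum_congr rfl fun I _ => ?_
  simp

/-- Kronecker substitution -/
noncomputable def kap {n : ℕ} (w : Fin n → ℕ) : MvPolynomial (Fin n) ℚ →ₐ[ℚ] Polynomial ℚ :=
  aeval (fun h => Polynomial.X ^ (w h))

theorem kap_monomial {n : ℕ} (w : Fin n → ℕ) (e : Fin n →₀ ℕ) (c : ℚ) :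
    kap w (monomial e c) = Polynomial.monomial (wt w e) c := by
  unfold kap wt
  rw [aeval_monomial, Finsupp.prod_fintype _ _ (by simp)]
  simp only [← pow_mul]
  rw [Finset.prod_pow_eq_pow_sum, ← Polynomial.C_mul_X_pow_eq_monomial]
  rfl

theorem monomial_mul_D {n : ℕ} (I : Fin n →₀ ℕ) (P : MvPolynomial (Fin n) ℚ) :
    monomial I 1 * D I P = ∑ e ∈ P.support, monomial e ((bin e I : ℚ) * coeff e P) := by
  unfold D
  rw [Finset.mul_sum]
  refine Finset.sum_congr rfl fun e _ => ?_
  rw [monomial_mul, one_mul]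
  by_cases h : I ≤ e
  · rw [add_tsub_cancel_of_le h]
  · simp [bin_eq_zero h]

theorem Th_sum {ι : Type*} (i : ℕ) (s : Finset ι) (f : ι → Polynomial ℚ) :
    Th i (∑ j ∈ s, f j) = ∑ j ∈ s, Th i (f j) := by
  ext n
  simp only [coeff_Th, Polynomial.finsetSum_coeff, Finset.mul_sum]

theorem Th_monomial (i m : ℕ) (c : ℚ) :
    Th i (Polynomial.monomial m c) = Polynomial.monomial m ((m : ℚ) ^ i * c) := by
  ext n
  simp only [coeff_Th, Polynomial.coeff_monomial]
  split_ifs with h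
  · rw [h]
  · simp

theorem Th_kap {n : ℕ} (w : Fin n → ℕ) (i : ℕ) (T : Finset (Fin n →₀ ℕ)) (c : (Fin n →₀ ℕ) → ℚ)
    (h : ∀ e, ((wt w e : ℕ) : ℚ) ^ i = ∑ I ∈ T, c I * (bin e I : ℚ)) (P : MvPolynomial (Fin n) ℚ) :
    Th i (kap w P) = ∑ I ∈ T, Polynomial.C (c I) * kap w (monomial I 1 * D I P) := by
  conv_lhs => rw [P.as_sum, map_sum, Th_sum]
  simp only [kap_monomial, Th_monomial, h, monomial_mul_D, map_sum]
  simp only [Finset.mul_sum, Polynomial.C_mul_monomial]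
  rw [Finset.sum_comm]
  refine Finset.sum_congr rfl fun e _ => ?_
  rw [Finset.sum_mul, map_sum]
  simp only [mul_assoc]

theorem exists_wt_inj {n : ℕ} (E : Finset (Fin n →₀ ℕ)) :
    ∃ w : Fin n → ℕ, Set.InjOn (wt w) E := by
  obtain ⟨N, hN⟩ : ∃ N : ℕ, ∀ e ∈ E, ∀ h, e h < N := by
    refine ⟨(E.sup fun e => e.degree) + 1, fun e he h => ?_⟩
    have h1 : e.degree ≤ E.sup fun e => e.degree := Finset.le_sup (f := fun e => e.degree) he
    have h2 := Finsupp.le_degree h e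
    omega
  refine ⟨fun h => (N + 2) ^ (h : ℕ), fun e he f hf hef => ?_⟩
  have key : ∀ u : Fin n →₀ ℕ, wt (fun h : Fin n => (N + 2) ^ (h : ℕ)) u =
      Nat.ofDigits (N + 2) (List.ofFn u) := by
    intro u
    rw [Nat.ofDigits_eq_sum_mapIdx, List.mapIdx_eq_ofFn]
    simp only [List.get_ofFn, List.sum_ofFn, wt]
    rw [← Fin.sum_congr' _ (List.length_ofFn (f := u)).symm]
    refine Finset.sum_congr rfl fun h _ => ?_
    simp [mul_comm]
  rw [key, key] at hef
  have := Nat.ofDigits_inj_of_len_eq (b := N + 2) (by omega) (by simp) (fun l hl => ?_) (fun l hl => ?_) hef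
  · exact DFunLike.coe_injective (List.ofFn_injective this)
  · rw [List.mem_ofFn] at hl
    obtain ⟨h, rfl⟩ := hl
    have := hN e he h
    omega
  · rw [List.mem_ofFn] at hl
    obtain ⟨h, rfl⟩ := hl
    have := hN f hf h
    omega

theorem kap_eq_zero {n : ℕ} {w : Fin n → ℕ} {E : Finset (Fin n →₀ ℕ)} (hw : Set.InjOn (wt w) E)
    {P : MvPolynomial (Fin n) ℚ} (hP : P.support ⊆ E) (h : kap w P = 0) : P = 0 := by
  classical
  ext e
  rw [coeff_zero]
  by_contra hne
  have he : e ∈ P.support := mem_support_iff.2 hne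
  apply hne
  have h1 := congrArg (fun p => Polynomial.coeff p (wt w e)) h
  simp only [Polynomial.coeff_zero] at h1
  rw [P.as_sum, map_sum, Polynomial.finsetSum_coeff] at h1
  simp only [kap_monomial, Polynomial.coeff_monomial] at h1
  rw [Finset.sum_eq_single e] at h1
  · simpa using h1
  · intro b hb hbe
    rw [if_neg]
    intro hbw
    exact hbe (hw (hP hb) (hP he) hbw)
  · intro h; exact absurd he h

theorem wronskian_mv {n k : ℕ} (φ : Fin k → MvPolynomial (Fin n) ℚ) (hφ : LinearIndependent ℚ φ) :
    ∃ I : Fin k → (Fin n →₀ ℕ), (∀ i, (I i).degree < k) ∧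
      (Matrix.of fun i j => D (I i) (φ j)).det ≠ 0 := by
  classical
  obtain ⟨w, hw⟩ := exists_wt_inj (Finset.univ.biUnion fun j => (φ j).support)
  have hli : LinearIndependent ℚ (fun j => kap w (φ j)) := by
    rw [Fintype.linearIndependent_iff] at hφ ⊢
    intro g hg
    apply hφ
    refine kap_eq_zero hw ?_ (by simpa using hg)
    refine (support_sum).trans ?_
    refine Finset.biUnion_mono fun j _ => support_smul
  have hdet := det_Th_ne_zero _ hli
  choose T hT c hc using fun i : Fin k => exists_pow_eq w i
  obtain ⟨s, hs, hd⟩ := exists_det_ne_zero _ hdet T (fun i I => Polynomial.C (c i I))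
    (fun I j => kap w (monomial I 1 * D I (φ j))) (fun i => by
      funext j
      rw [Matrix.of_apply, Th_kap w i (T i) (c i) (hc i)]
      simp)
  refine ⟨s, fun i => lt_of_le_of_lt (hT i _ (hs i)) i.2, fun h0 => hd ?_⟩
  have h1 : (Matrix.of fun i => (fun I j => kap w (monomial I 1 * D I (φ j))) (s i)) =
      (kap w).mapMatrix (Matrix.of fun i j => monomial (s i) 1 * (Matrix.of fun i j => D (s i) (φ j)) i j) := by
    ext i j
    rfl
  rw [h1, ← AlgHom.map_det, Matrix.det_mul_column, h0, mul_zero, map_zero]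

theorem wronskian_uni {k : ℕ} (ψ : Fin k → Polynomial ℚ) (hψ : LinearIndependent ℚ ψ) :
    (Matrix.of fun (i j : Fin k) => Polynomial.hasseDeriv i (ψ j)).det ≠ 0 := by
  classical
  have hdet := det_Th_ne_zero _ hψ
  choose T hT c hc using fun i : Fin k => exists_pow_eq (n := 1) (fun _ => 1) i
  have hc' : ∀ i : Fin k, ∀ m : ℕ, (m : ℚ) ^ (i : ℕ) = ∑ I ∈ T i, c i I * ((m.choose (I 0) : ℕ) : ℚ) := by
    intro i m
    have := hc i (Finsupp.single 0 m)
    simpa [wt, bin] using this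
  obtain ⟨s, hs, hd⟩ := exists_det_ne_zero _ hdet T (fun i I => Polynomial.C (c i I))
    (fun I j => Polynomial.X ^ (I 0) * Polynomial.hasseDeriv (I 0) (ψ j)) (fun i => by
      funext j
      ext m
      rw [Matrix.of_apply, coeff_Th, hc']
      simp only [Finset.sum_apply, Pi.smul_apply, smul_eq_mul, Polynomial.finsetSum_coeff,
        Polynomial.coeff_C_mul, Polynomial.coeff_X_pow_mul', Polynomial.hasseDeriv_coeff]
      rw [Finset.sum_mul]
      refine Finset.sum_congr rfl fun I _ => ?_
      split_ifs with h
      · rw [Nat.sub_add_cancel h]; ring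
      · rw [Nat.choose_eq_zero_of_lt (by omega)]; simp)
  have hlt : ∀ i, s i 0 < k := fun i => by
    have h1 := hT i _ (hs i)
    have h2 := Finsupp.le_degree 0 (s i)
    have := i.2
    omega
  let σ : Fin k → Fin k := fun i => ⟨s i 0, hlt i⟩
  set A := (Matrix.of fun (i j : Fin k) => Polynomial.hasseDeriv i (ψ j)) with hA
  have h1 : (Matrix.of fun i => (fun (I : Fin 1 →₀ ℕ) j => Polynomial.X ^ (I 0) * Polynomial.hasseDeriv (I 0) (ψ j)) (s i)) =
      (Matrix.of fun i j => (Polynomial.X ^ (s i 0) : Polynomial ℚ) * (A.submatrix σ id) i j) := by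
    ext i j
    rfl
  rw [h1, Matrix.det_mul_column] at hd
  have hd' := right_ne_zero_of_mul hd
  have hinj : Function.Injective σ := by
    intro i j hij
    by_contra hne
    apply hd'
    refine Matrix.det_zero_of_row_eq hne ?_
    ext l
    simp [Matrix.submatrix_apply, hij]
  intro h0
  apply hd'
  have hb : Function.Bijective σ := Finite.injective_iff_bijective.1 hinj
  have := Matrix.det_permute (Equiv.ofBijective σ hb) A
  rw [h0, mul_zero] at this
  exact this

end RothPf

namespace RothPf
open MvPolynomial

/-- embedding in the zeroth variable -/
noncomputable def al (n : ℕ) : Polynomial ℚ →ₐ[ℚ] MvPolynomial (Fin (n + 1)) ℚ :=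
  Polynomial.aeval (X 0)

/-- embedding in the other variables -/
noncomputable def be (n : ℕ) : MvPolynomial (Fin n) ℚ →ₐ[ℚ] MvPolynomial (Fin (n + 1)) ℚ :=
  rename Fin.succ

theorem fse_al {n : ℕ} (V : Polynomial ℚ) : finSuccEquiv ℚ n (al n V) = V.map C := by
  unfold al
  induction V using Polynomial.induction_on' with
  | add p q hp hq => simp [hp, hq]
  | monomial m c =>
    rw [Polynomial.aeval_monomial, map_mul, map_pow, finSuccEquiv_X_zero, Polynomial.map_monomial,
      ← Polynomial.C_mul_X_pow_eq_monomial, algebraMap_eq, finSuccEquiv_apply]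
    simp

theorem fse_be {n : ℕ} (U : MvPolynomial (Fin n) ℚ) :
    finSuccEquiv ℚ n (be n U) = Polynomial.C U := by
  unfold be
  induction U using MvPolynomial.induction_on with
  | C r => simp [finSuccEquiv_apply]
  | add p q hp hq => simp [hp, hq]
  | mul_X p i hp => simp [hp, finSuccEquiv_X_succ]

theorem coeff_tensor {n : ℕ} (V : Polynomial ℚ) (U : MvPolynomial (Fin n) ℚ) (i : ℕ)
    (m : Fin n →₀ ℕ) : coeff (Finsupp.cons i m) (al n V * be n U) = V.coeff i * coeff m U := by
  rw [← finSuccEquiv_coeff_coeff, map_mul, fse_al, fse_be, Polynomial.coeff_mul_C,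
    Polynomial.coeff_map, coeff_C_mul]

theorem mv_ext_cons {n : ℕ} {R : Type*} [CommRing R] {P Q : MvPolynomial (Fin (n + 1)) R}
    (h : ∀ i m, coeff (Finsupp.cons i m) P = coeff (Finsupp.cons i m) Q) : P = Q := by
  ext f
  rw [← Finsupp.cons_tail f]
  exact h _ _

theorem cons_add_cons {n : ℕ} (i j : ℕ) (f g : Fin n →₀ ℕ) :
    Finsupp.cons i f + Finsupp.cons j g = Finsupp.cons (i + j) (f + g) := by
  ext h
  refine Fin.cases ?_ (fun h => ?_) h <;> simp

theorem bin_cons {n : ℕ} (i j : ℕ) (f g : Fin n →₀ ℕ) :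
    bin (Finsupp.cons i f) (Finsupp.cons j g) = i.choose j * bin f g := by
  unfold bin
  rw [Fin.prod_univ_succ]
  simp

theorem D_tensor {n : ℕ} (V : Polynomial ℚ) (U : MvPolynomial (Fin n) ℚ) (j : ℕ)
    (I : Fin n →₀ ℕ) :
    D (Finsupp.cons j I) (al n V * be n U) = al n (Polynomial.hasseDeriv j V) * be n (D I U) := by
  refine mv_ext_cons fun i m => ?_
  rw [coeff_D, cons_add_cons, coeff_tensor, coeff_tensor, coeff_D, Polynomial.hasseDeriv_coeff,
    bin_cons]
  push_cast
  ring

theorem S_tensor {n : ℕ} (a : Fin (n + 1) → ℚ) (V : Polynomial ℚ) (U : MvPolynomial (Fin n) ℚ) :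
    S a (al n V * be n U) =
      al n (V.comp (Polynomial.X + Polynomial.C (a 0))) * be n (S (fun h => a h.succ) U) := by
  rw [map_mul]
  congr 1
  · unfold al
    induction V using Polynomial.induction_on' with
    | add p q hp hq => simp only [map_add, hp, hq, Polynomial.add_comp]
    | monomial m c =>
      rw [← Polynomial.C_mul_X_pow_eq_monomial]
      simp [S, algebraMap_eq]
  · unfold be
    induction U using MvPolynomial.induction_on with
    | C r => simp [S, algebraMap_eq]
    | add p q hp hq => simp only [map_add, hp, hq]
    | mul_X p i hp =>
      simp only [map_mul, hp]
      simp [S]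

theorem exists_decomp {n : ℕ} {P : MvPolynomial (Fin (n + 1)) ℚ} {r : ℕ} (hP : P ≠ 0)
    (hr : degreeOf 0 P ≤ r) :
    ∃ k : ℕ, 0 < k ∧ k ≤ r + 1 ∧ ∃ (ψ : Fin k → Polynomial ℚ) (b : Fin k → MvPolynomial (Fin n) ℚ),
      LinearIndependent ℚ ψ ∧ LinearIndependent ℚ b ∧ P = ∑ l, al n (ψ l) * be n (b l) := by
  classical
  set c : Fin (r + 1) → MvPolynomial (Fin n) ℚ := fun j => (finSuccEquiv ℚ n P).coeff j with hc
  set M := Submodule.span ℚ (Set.range c) with hM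
  have hfin : FiniteDimensional ℚ M := FiniteDimensional.span_of_finite ℚ (Set.finite_range c)
  set k := Module.finrank ℚ M with hk
  let b := Module.finBasis ℚ M
  have hcm : ∀ j, c j ∈ M := fun j => Submodule.subset_span ⟨j, rfl⟩
  have hbc : ∀ (i : ℕ), i ≤ r → (finSuccEquiv ℚ n P).coeff i =
      ∑ l, (if h : i < r + 1 then b.repr ⟨c ⟨i, h⟩, hcm _⟩ l else 0) • (b l : MvPolynomial (Fin n) ℚ) := by
    intro i hi
    have h1 := congrArg Subtype.val (b.sum_repr ⟨c ⟨i, by omega⟩, hcm _⟩)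
    simp only [Submodule.coe_sum, Submodule.coe_smul] at h1
    have h2 : i < r + 1 := by omega
    simp only [h2, dif_pos]
    rw [h1]
  have hdeg : ∀ i, r < i → (finSuccEquiv ℚ n P).coeff i = 0 := by
    intro i hi
    apply Polynomial.coeff_eq_zero_of_natDegree_lt
    rw [natDegree_finSuccEquiv]
    omega
  let ψ : Fin k → Polynomial ℚ := fun l => ∑ j : Fin (r + 1),
    Polynomial.monomial (j : ℕ) (b.repr ⟨c j, hcm j⟩ l)
  have hψ : ∀ l i, (ψ l).coeff i = if h : i < r + 1 then b.repr ⟨c ⟨i, h⟩, hcm _⟩ l else 0 := by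
    intro l i
    simp only [ψ, Polynomial.finsetSum_coeff, Polynomial.coeff_monomial]
    split_ifs with h
    · rw [Finset.sum_eq_single ⟨i, h⟩]
      · simp
      · intro j _ hj
        rw [if_neg]
        intro hji; apply hj; ext; exact hji
      · simp
    · refine Finset.sum_eq_zero fun j _ => if_neg ?_
      have := j.2
      omega
  refine ⟨k, ?_, ?_, ψ, fun l => (b l : MvPolynomial (Fin n) ℚ), ?_, ?_, ?_⟩
  · rw [hk, Module.finrank_pos_iff, Submodule.nontrivial_iff_ne_bot, hM, Ne, Submodule.span_eq_bot]
    intro h0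
    apply hP
    apply (finSuccEquiv ℚ n).injective
    rw [map_zero]
    ext1 i
    by_cases hi : i ≤ r
    · exact h0 _ ⟨⟨i, by omega⟩, rfl⟩
    · exact hdeg i (by omega)
  · have := finrank_range_le_card (R := ℚ) c
    simpa [Set.finrank] using this
  · rw [Fintype.linearIndependent_iff]
    intro g hg
    have h1 : ∀ v : M, ∑ l, g l * b.repr v l = 0 := by
      have h2 : ∀ x (hx : x ∈ M), ∑ l, g l * b.repr ⟨x, hx⟩ l = 0 := by
        intro x hx
        induction hx using Submodule.span_induction with
        | mem x hx =>
          obtain ⟨j, rfl⟩ := hx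
          have h3 := congrArg (fun p => Polynomial.coeff p (j : ℕ)) hg
          simp only [Polynomial.finsetSum_coeff, Polynomial.coeff_smul, Polynomial.coeff_zero, hψ,
            smul_eq_mul] at h3
          simp only [j.2, dif_pos] at h3
          exact h3
        | zero =>
          have : (⟨0, M.zero_mem⟩ : M) = 0 := rfl
          rw [this]; simp
        | add x y hx hy h4 h5 =>
          have : (⟨x + y, M.add_mem hx hy⟩ : M) = ⟨x, hx⟩ + ⟨y, hy⟩ := rfl
          rw [this]
          simp only [map_add, Finsupp.add_apply, mul_add, Finset.sum_add_distrib, h4, h5, add_zero]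
        | smul q x hx h4 =>
          have : (⟨q • x, M.smul_mem q hx⟩ : M) = q • ⟨x, hx⟩ := rfl
          rw [this]
          simp only [map_smul, Finsupp.smul_apply, smul_eq_mul, mul_left_comm _ q]
          rw [← Finset.mul_sum, h4, mul_zero]
      exact fun v => h2 v.1 v.2
    intro l
    have := h1 (b l)
    simpa [Finsupp.single_apply] using this
  · exact b.linearIndependent.map' M.subtype (Submodule.ker_subtype M)
  · refine mv_ext_cons fun i m => ?_
    rw [coeff_sum]
    simp only [coeff_tensor]
    rw [← finSuccEquiv_coeff_coeff]
    by_cases hi : i ≤ r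
    · rw [hbc i hi, coeff_sum]
      refine Finset.sum_congr rfl fun l _ => ?_
      rw [coeff_smul, hψ]; rfl
    · rw [hdeg i (by omega), coeff_zero]
      refine (Finset.sum_eq_zero fun l _ => ?_).symm
      rw [hψ, dif_neg (by omega), zero_mul]

end RothPf

namespace RothPf
open MvPolynomial

theorem uni_aux (x : ℚ) : ∀ (l : ℕ) (V : Polynomial ℤ),
    (Polynomial.X - Polynomial.C x) ^ l ∣ V.map (Int.castRingHom ℚ) →
    (x.den : ℤ) ^ l ∣ V.leadingCoeff := by
  intro l V h
  have hprim : (Polynomial.C (x.den : ℤ) * Polynomial.X + Polynomial.C (-x.num)).IsPrimitive := by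
    rw [Polynomial.isPrimitive_iff_isUnit_of_C_dvd]
    intro r hr
    rw [Polynomial.C_dvd_iff_dvd_coeff] at hr
    have h0 := hr 0
    have h1 := hr 1
    rw [Polynomial.coeff_add, Polynomial.coeff_C_mul, Polynomial.coeff_C] at h0 h1
    simp at h0 h1
    have h2 : IsCoprime x.num (x.den : ℤ) := by
      rw [Int.isCoprime_iff_gcd_eq_one, Int.gcd, Int.natAbs_natCast]
      exact x.reduced
    exact h2.isUnit_of_dvd' h0 h1
  have hdvd : (Polynomial.C (x.den : ℤ) * Polynomial.X + Polynomial.C (-x.num)) ^ l ∣ V := by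
    have hp : ((Polynomial.C (x.den : ℤ) * Polynomial.X + Polynomial.C (-x.num)) ^ l).IsPrimitive := by
      clear h
      induction l with
      | zero => simp
      | succ l ih => rw [pow_succ]; exact ih.mul hprim
    rw [Polynomial.IsPrimitive.Int.dvd_iff_map_cast_dvd_map_cast _ _ hp]
    refine dvd_trans ?_ h
    rw [Polynomial.map_pow]
    have h3 : (Polynomial.C (x.den : ℤ) * Polynomial.X + Polynomial.C (-x.num)).map
        (Int.castRingHom ℚ) = Polynomial.C (x.den : ℚ) * (Polynomial.X - Polynomial.C x) := by
      rw [mul_sub, ← Polynomial.C_mul, mul_comm (x.den : ℚ) x, Rat.mul_den_eq_num]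
      simp [sub_eq_add_neg]
    rw [h3, mul_pow, ← Polynomial.C_pow]
    rw [Polynomial.C_mul_dvd]
    exact pow_ne_zero _ (by exact_mod_cast x.den_nz)
  obtain ⟨q, rfl⟩ := hdvd
  rw [Polynomial.leadingCoeff_mul, Polynomial.leadingCoeff_pow,
    Polynomial.leadingCoeff_linear (by exact_mod_cast x.den_nz)]
  exact Dvd.intro _ rfl

theorem uni_lemma (x : ℚ) (V : Polynomial ℤ) (hV : V ≠ 0) :
    ∃ l : ℕ, ((V.map (Int.castRingHom ℚ)).comp (Polynomial.X + Polynomial.C x)).coeff l ≠ 0 ∧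
      (x.den : ℝ) ^ l ≤ |(V.leadingCoeff : ℝ)| := by
  have hV' : V.map (Int.castRingHom ℚ) ≠ 0 :=
    (Polynomial.map_ne_zero_iff (Int.cast_injective)).2 hV
  refine ⟨(V.map (Int.castRingHom ℚ)).rootMultiplicity x, ?_, ?_⟩
  · rw [Polynomial.rootMultiplicity_eq_natTrailingDegree]
    have : (V.map (Int.castRingHom ℚ)).comp (Polynomial.X + Polynomial.C x) ≠ 0 := by
      intro h
      rw [Polynomial.comp_eq_zero_iff] at h
      rcases h with h | h
      · exact hV' h
      · have := congrArg (fun p => Polynomial.coeff p 1) h.2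
        simp at this
    exact Polynomial.coeff_natTrailingDegree_ne_zero.2 this
  · have h1 := uni_aux x _ V (Polynomial.pow_rootMultiplicity_dvd _ x)
    have h2 := Int.le_of_dvd (abs_pos.2 (Polynomial.leadingCoeff_ne_zero.2 hV)) ((dvd_abs _ _).2 h1)
    exact_mod_cast h2

theorem exists_W {n : ℕ} {P : MvPolynomial (Fin (n + 1)) ℤ} {r : ℕ} (hP : P ≠ 0)
    (hr : degreeOf 0 P ≤ r) :
    ∃ k : ℕ, 0 < k ∧ k ≤ r + 1 ∧ ∃ I : Fin k → (Fin n →₀ ℕ), (∀ i, (I i).degree < k) ∧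
      ∃ (V : Polynomial ℚ) (U : MvPolynomial (Fin n) ℚ), V ≠ 0 ∧ U ≠ 0 ∧
        map (Int.castRingHom ℚ)
          (Matrix.of fun i j : Fin k => D (Finsupp.cons (j : ℕ) (I i)) P).det = al n V * be n U := by
  have hP' : map (Int.castRingHom ℚ) P ≠ 0 := by
    intro h
    apply hP
    apply map_injective (Int.castRingHom ℚ) Int.cast_injective
    rw [h, map_zero]
  have hr' : degreeOf 0 (map (Int.castRingHom ℚ) P) ≤ r := by
    refine le_trans ?_ hr
    rw [degreeOf_eq_sup, degreeOf_eq_sup]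
    exact Finset.sup_mono (support_map_subset _ _)
  obtain ⟨k, hk0, hk, ψ, b, hψ, hb, hPd⟩ := exists_decomp hP' hr'
  obtain ⟨I, hI, hdet⟩ := wronskian_mv b hb
  have hdet2 := wronskian_uni ψ hψ
  refine ⟨k, hk0, hk, I, hI, _, _, hdet2, hdet, ?_⟩
  rw [RingHom.map_det, AlgHom.map_det, AlgHom.map_det, mul_comm, ← Matrix.det_transpose
    ((al n).mapMatrix _), ← Matrix.det_mul]
  congr 1
  ext1 i j
  simp only [RingHom.mapMatrix_apply, Matrix.map_apply, Matrix.of_apply, Matrix.mul_apply,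
    AlgHom.mapMatrix_apply, Matrix.transpose_apply]
  rw [← D_map, hPd, D_sum]
  refine Finset.sum_congr rfl fun l _ => ?_
  rw [D_tensor, mul_comm]

theorem split_W {n : ℕ} {W : MvPolynomial (Fin (n + 1)) ℤ} {V : Polynomial ℚ}
    {U : MvPolynomial (Fin n) ℚ} (hV : V ≠ 0) (hU : U ≠ 0)
    (hW : map (Int.castRingHom ℚ) W = al n V * be n U) (a : Fin (n + 1) → ℚ) :
    ∃ (V' : Polynomial ℤ) (U' : MvPolynomial (Fin n) ℤ), V' ≠ 0 ∧ U' ≠ 0 ∧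
      |(V'.leadingCoeff : ℝ)| ≤ len W ∧ len U' ≤ len W ∧
      (∀ h, degreeOf h U' ≤ degreeOf h.succ W) ∧
      ∀ l I, ((V'.map (Int.castRingHom ℚ)).comp (Polynomial.X + Polynomial.C (a 0))).coeff l ≠ 0 →
        coeff I (S (fun h => a h.succ) (map (Int.castRingHom ℚ) U')) ≠ 0 →
        coeff (Finsupp.cons l I) (S a (map (Int.castRingHom ℚ) W)) ≠ 0 := by
  classical
  obtain ⟨i0, hi0⟩ : ∃ i, V.coeff i ≠ 0 := by
    by_contra h; push Not at h; exact hV (by ext i; simpa using h i)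
  obtain ⟨m0, hm0⟩ : ∃ m, coeff m U ≠ 0 := by
    by_contra h; push Not at h; exact hU (by ext i; simpa using h i)
  have hc : ∀ i m, ((coeff (Finsupp.cons i m) W : ℤ) : ℚ) = V.coeff i * coeff m U := by
    intro i m
    rw [← coeff_tensor, ← hW, coeff_map]; rfl
  let U' : MvPolynomial (Fin n) ℤ := (finSuccEquiv ℤ n W).coeff i0
  have hU'c : ∀ m, coeff m U' = coeff (Finsupp.cons i0 m) W := fun m =>
    finSuccEquiv_coeff_coeff _ _ _
  let V' : Polynomial ℤ := ∑ i ∈ Finset.range (degreeOf 0 W + 1),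
    Polynomial.monomial i (coeff (Finsupp.cons i m0) W)
  have hV'c : ∀ i, V'.coeff i = coeff (Finsupp.cons i m0) W := by
    intro i
    simp only [V', Polynomial.finsetSum_coeff, Polynomial.coeff_monomial]
    rw [Finset.sum_ite_eq']
    split_ifs with h
    · rfl
    · symm
      by_contra h2
      apply h
      have := monomial_le_degreeOf 0 (mem_support_iff.2 h2)
      simp at this
      simp; omega
  have hVm : V'.map (Int.castRingHom ℚ) = Polynomial.C (coeff m0 U) * V := by
    ext i
    rw [Polynomial.coeff_map, hV'c, Polynomial.coeff_C_mul, mul_comm, ← hc]; rfl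
  have hUm : map (Int.castRingHom ℚ) U' = C (V.coeff i0) * U := by
    ext m
    rw [coeff_map, hU'c, coeff_C_mul, ← hc]; rfl
  refine ⟨V', U', ?_, ?_, ?_, ?_, ?_, ?_⟩
  · intro h
    have := hVm
    rw [h, Polynomial.map_zero, eq_comm, mul_eq_zero] at this
    simp [hm0, hV] at this
  · intro h
    have := hUm
    rw [h, map_zero, eq_comm, mul_eq_zero] at this
    simp [hi0, hU] at this
  · rw [Polynomial.leadingCoeff, hV'c]
    exact norm_coeff_le_len W _
  · unfold len
    calc ∑ e ∈ U'.support, ‖coeff e U'‖ = ∑ e ∈ U'.support.image (Finsupp.cons i0),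
          ‖coeff e W‖ := by
          rw [Finset.sum_image]
          · simp [hU'c]
          · intro x _ y _ hxy
            exact (Finsupp.cons_injective2 hxy).2
      _ ≤ _ := by
          apply Finset.sum_le_sum_of_subset_of_nonneg
          · intro e he
            simp only [Finset.mem_image, mem_support_iff] at he
            obtain ⟨m, hm, rfl⟩ := he
            rw [mem_support_iff, ← hU'c]; exact hm
          · intros; positivity
  · intro h
    exact degreeOf_coeff_finSuccEquiv W h i0
  · intro l I h1 h2
    rw [hW, S_tensor, coeff_tensor]
    rw [hVm, Polynomial.mul_comp, Polynomial.C_comp, Polynomial.coeff_C_mul] at h1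
    rw [hUm, map_mul] at h2
    have h3 : S (fun h : Fin n => a h.succ) (C (V.coeff i0)) = C (V.coeff i0) := 
      (S _).commutes _
    rw [h3, coeff_C_mul] at h2
    exact mul_ne_zero (right_ne_zero_of_mul h1) (right_ne_zero_of_mul h2)

end RothPf

namespace RothPf
open MvPolynomial

theorem sum_max_ge {k r : ℕ} {c : ℝ} (hk : k ≤ r + 1) (hr : 0 < r) (hc0 : 0 ≤ c)
    (hc1 : c ≤ 1) : k * (c ^ 2 / 8) ≤ ∑ j : Fin k, max 0 (c - (j : ℕ) / (r : ℝ)) := by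
  rw [Fin.sum_univ_eq_sum_range (fun j => max 0 (c - (j : ℝ) / (r : ℝ))) k]
  have hr' : (1 : ℝ) ≤ r := by exact_mod_cast hr
  have hk' : (k : ℝ) ≤ r + 1 := by exact_mod_cast hk
  set s := min k (⌊c * r / 2⌋₊ + 1) with hs
  have hs1 : (k : ℝ) * c / 4 ≤ s := by
    rw [hs, Nat.cast_min, le_min_iff]
    constructor
    · nlinarith [Nat.cast_nonneg (α := ℝ) k]
    · have := Nat.lt_floor_add_one (c * r / 2)
      push_cast
      nlinarith
  calc (k : ℝ) * (c ^ 2 / 8) ≤ s * (c / 2) := by nlinarith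
    _ = ∑ j ∈ Finset.range s, c / 2 := by simp
    _ ≤ ∑ j ∈ Finset.range s, max 0 (c - (j : ℝ) / (r : ℝ)) := by
        refine Finset.sum_le_sum fun j hj => le_max_of_le_right ?_
        have hj1 : j < ⌊c * r / 2⌋₊ + 1 := (Finset.mem_range.1 hj).trans_le (min_le_right _ _)
        have hj2 : (j : ℝ) ≤ c * r / 2 :=
          (Nat.le_floor_iff (by positivity)).1 (by omega)
        have : (j : ℝ) / r ≤ c / 2 := by
          rw [div_le_iff₀ (by linarith)]; linarith
        linarith
    _ ≤ _ := by
        apply Finset.sum_le_sum_of_subset_of_nonneg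
        · exact Finset.range_subset_range.2 (min_le_left _ _)
        · intros; exact le_max_left _ _

/-- Roth lemma in `m` variables -/
def RL (m : ℕ) : Prop := ∀ ε : ℝ, 0 < ε → ∃ δ : ℝ, 0 < δ ∧ ∀ (r : Fin m → ℕ) (a : Fin m → ℚ)
  (P : MvPolynomial (Fin m) ℤ), (∀ h, 0 < r h) → P ≠ 0 → (∀ h, degreeOf h P ≤ r h) →
  (∀ i j, i < j → (r i : ℝ) ≤ δ * r j) →
  (∀ h, Real.log (len P) + ∑ h, (r h : ℝ) ≤ δ * (r h * Real.log (a h).den)) →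
  ∃ I, coeff I (S a (map (Int.castRingHom ℚ) P)) ≠ 0 ∧ ∑ h, (I h : ℝ) / r h ≤ ε

theorem RL_zero : RL 0 := by
  intro ε hε
  refine ⟨1, one_pos, ?_⟩
  intro r a P _ hP _ _ _
  refine ⟨0, ?_, by simp [hε.le]⟩
  obtain ⟨c, rfl⟩ : ∃ c, P = C c := ⟨_, eq_C_of_isEmpty P⟩
  have : c ≠ 0 := by rintro rfl; simp at hP
  rw [coeff_zero_S]
  simpa using this

theorem log_len_W {n k : ℕ} {r : Fin n → ℕ} {P : MvPolynomial (Fin n) ℤ} (hP : P ≠ 0)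
    (hd : ∀ h, degreeOf h P ≤ r h) (hk0 : 0 < k) (hk : (k : ℝ) ≤ 1 + ∑ h, (r h : ℝ))
    (J : Fin k → Fin k → (Fin n →₀ ℕ))
    (hW : (Matrix.of fun i j : Fin k => D (J i j) P).det ≠ 0) :
    Real.log (len (Matrix.of fun i j : Fin k => D (J i j) P).det) ≤
      2 * k * (Real.log (len P) + ∑ h, (r h : ℝ)) := by
  have h1 := len_det_le (Matrix.of fun i j : Fin k => D (J i j) P) (fun i j => len_D_le hd (J i j))
  have hl := one_le_len hP
  have h2 := one_le_len hW
  have hk1 : (1 : ℝ) ≤ k := by exact_mod_cast hk0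
  have hlog : 0 ≤ Real.log (len P) := Real.log_nonneg hl
  have hf : ((k.factorial : ℕ) : ℝ) ≤ (k : ℝ) ^ k := by exact_mod_cast Nat.factorial_le_pow k
  have hlp : 0 < len P := by linarith
  have h3 : len (Matrix.of fun i j : Fin k => D (J i j) P).det ≤
      (k : ℝ) ^ k * (2 ^ (∑ h, r h) * len P) ^ k := by
    refine h1.trans ?_
    gcongr
  have h4 := Real.log_le_log (by linarith) h3
  rw [Real.log_mul (by positivity) (by positivity), Real.log_pow, Real.log_pow,
    Real.log_mul (by positivity) (by positivity), Real.log_pow] at h4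
  have h5 : Real.log k ≤ k - 1 := Real.log_le_sub_one_of_pos (by linarith)
  have h6 : Real.log 2 ≤ 1 := by linarith [Real.log_two_lt_d9]
  push_cast at h4
  have h7 : (0 : ℝ) ≤ ∑ h, (r h : ℝ) := by positivity
  have h8 : (∑ h, (r h : ℝ)) * Real.log 2 ≤ ∑ h, (r h : ℝ) := by nlinarith
  have h9 : Real.log k + ((∑ h, (r h : ℝ)) * Real.log 2 + Real.log (len P)) ≤
    2 * (Real.log (len P) + ∑ h, (r h : ℝ)) := by linarith
  nlinarith

theorem RL_succ (m : ℕ) (ih : RL m) : RL (m + 1) := by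
  intro ε hε
  set e := min ε 1 with he
  have he0 : 0 < e := lt_min hε one_pos
  have he1 : e ≤ 1 := min_le_right _ _
  obtain ⟨δ', hδ', H⟩ := ih (e ^ 2 / 100) (by positivity)
  set δ := min (δ' / 8) (e ^ 2 / 400) with hδ
  have hδ0 : 0 < δ := lt_min (by positivity) (by positivity)
  have hδ1 : δ ≤ δ' / 8 := min_le_left _ _
  have hδ2 : δ ≤ e ^ 2 / 400 := min_le_right _ _
  refine ⟨δ, hδ0, ?_⟩
  intro r a P hr hP hd hrr hq
  by_contra hcon
  push Not at hcon
  have hIdx : Idx a r e (map (Int.castRingHom ℚ) P) := by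
    intro f hf
    exact (min_le_left _ _).trans (hcon f hf).le
  obtain ⟨k, hk0, hk, I, hI, V, U, hV, hU, hW⟩ := exists_W hP (hd 0)
  set W := (Matrix.of fun i j : Fin k => D (Finsupp.cons (j : ℕ) (I i)) P).det with hWdef
  obtain ⟨V', U', hV', hU', hVl, hUl, hUd, hco⟩ := split_W hV hU hW a
  have hWne : W ≠ 0 := by
    intro h0
    have := hUl
    rw [h0, len_zero] at this
    linarith [one_le_len hU']
  set E := Real.log (len P) + ∑ h, (r h : ℝ) with hE
  have hr0 : (0 : ℝ) < r 0 := by exact_mod_cast hr 0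
  have hsum : (r 0 : ℝ) ≤ ∑ h, (r h : ℝ) :=
    Finset.single_le_sum (f := fun h => (r h : ℝ)) (fun _ _ => by positivity) (Finset.mem_univ 0)
  have hk' : (k : ℝ) ≤ r 0 + 1 := by exact_mod_cast hk
  have hkp : (0 : ℝ) < k := by exact_mod_cast hk0
  have hlenP := Real.log_nonneg (one_le_len hP)
  have hEpos : 0 < E := by linarith
  have hWl : Real.log (len W) ≤ 2 * k * E :=
    log_len_W hP hd hk0 (by linarith) (fun i j => Finsupp.cons (j : ℕ) (I i)) hWne
  -- the other variables
  have hsum' : ∑ h : Fin m, (r h.succ : ℝ) ≤ E := by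
    rw [Fin.sum_univ_succ] at hE
    linarith
  obtain ⟨I', hI'1, hI'2⟩ := H (fun h => k * r h.succ) (fun h => a h.succ) U'
    (fun h => Nat.mul_pos hk0 (hr _)) hU'
    (fun h => (hUd h).trans (degreeOf_det_le _ _ fun i j => (degreeOf_D_le _ _).trans (hd _)))
    (by
      intro i j hij
      have := hrr i.succ j.succ (Fin.succ_lt_succ_iff.2 hij)
      push_cast
      have h2 : δ * r j.succ ≤ δ' * r j.succ := by gcongr; linarith
      nlinarith)
    (by
      intro h
      have h1 := hq h.succ
      have h2 : Real.log (len U') ≤ Real.log (len W) :=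
        Real.log_le_log (by linarith [one_le_len hU']) hUl
      push_cast
      rw [← Finset.mul_sum]
      have h3 : (0 : ℝ) ≤ r h.succ * Real.log (a h.succ).den := by
        have : (0 : ℝ) ≤ Real.log (a h.succ).den := Real.log_natCast_nonneg _
        positivity
      have h4 : 3 * E ≤ δ' * (r h.succ * Real.log (a h.succ).den) := by nlinarith
      calc _ ≤ 2 * k * E + k * E := by gcongr; linarith
        _ = k * (3 * E) := by ring
        _ ≤ k * (δ' * (r h.succ * Real.log (a h.succ).den)) := by gcongr
        _ = _ := by ring)
  obtain ⟨l, hl1, hl2⟩ := uni_lemma (a 0) V' hV'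
  have hq0 := hq 0
  have hlog0 : 0 < Real.log (a 0).den := by
    by_contra h
    push Not at h
    have : δ * (r 0 * Real.log (a 0).den) ≤ 0 :=
      mul_nonpos_of_nonneg_of_nonpos hδ0.le (mul_nonpos_of_nonneg_of_nonpos hr0.le h)
    linarith
  have hlw : (l : ℝ) / r 0 ≤ 2 * k * δ := by
    have h1 : Real.log ((a 0).den ^ l : ℝ) ≤ Real.log (len W) :=
      Real.log_le_log (by have := (a 0).den_pos; positivity) (hl2.trans hVl)
    rw [Real.log_pow] at h1
    have h2 : (l : ℝ) * Real.log (a 0).den ≤ (2 * k * δ * r 0) * Real.log (a 0).den := by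
      calc _ ≤ 2 * k * E := h1.trans hWl
        _ ≤ 2 * k * (δ * (r 0 * Real.log (a 0).den)) := by gcongr
        _ = _ := by ring
    rw [div_le_iff₀ hr0]
    exact le_of_mul_le_mul_right h2 hlog0
  have hne := hco l I' hl1 hI'1
  -- index of W
  set c := e - δ with hc
  have hIW : Idx a r (∑ j : Fin k, max 0 (c - (j : ℕ) / (r 0 : ℝ))) (map (Int.castRingHom ℚ) W) := by
    rw [hWdef, RingHom.map_det]
    apply Idx.det (θ := fun j : Fin k => max 0 (c - (j : ℕ) / (r 0 : ℝ)))
    intro i j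
    simp only [RingHom.mapMatrix_apply, Matrix.map_apply, Matrix.of_apply]
    rcases max_choice 0 (c - ((j : ℕ) : ℝ) / (r 0 : ℝ)) with h | h
    · rw [h]; exact Idx.zero_le _
    · rw [h, ← D_map]
      refine (hIdx.D _).mono ?_
      rw [Fin.sum_univ_succ]
      simp only [Finsupp.cons_zero, Finsupp.cons_succ]
      have h1 : ∑ h : Fin m, ((I i) h : ℝ) / r h.succ ≤ δ := by
        calc ∑ h : Fin m, ((I i) h : ℝ) / r h.succ ≤ ∑ h : Fin m, ((I i) h : ℝ) * (δ / r 0) := by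
              refine Finset.sum_le_sum fun h _ => ?_
              rw [div_eq_mul_inv]
              gcongr
              have := hrr 0 h.succ (Fin.succ_pos h)
              have h3 : (0 : ℝ) < r h.succ := by exact_mod_cast hr _
              rw [inv_eq_one_div, div_le_div_iff₀ h3 hr0]
              linarith
          _ = ((I i).degree : ℝ) * (δ / r 0) := by
              rw [← Finset.sum_mul, Finsupp.degree_eq_sum]; push_cast; rfl
          _ ≤ (r 0 : ℝ) * (δ / r 0) := by
              gcongr
              have := hI i
              omega
          _ = δ := by field_simp
      linarith
  have h1 := hIW _ hne
  rw [Fin.sum_univ_succ] at h1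
  simp only [Finsupp.cons_zero, Finsupp.cons_succ] at h1
  have h2 : ∑ h : Fin m, (I' h : ℝ) / r h.succ ≤ k * (e ^ 2 / 100) := by
    have : ∑ h : Fin m, (I' h : ℝ) / r h.succ =
        k * ∑ h : Fin m, (I' h : ℝ) / ((k * r h.succ : ℕ) : ℝ) := by
      rw [Finset.mul_sum]
      refine Finset.sum_congr rfl fun h _ => ?_
      have h3 : (0 : ℝ) < r h.succ := by exact_mod_cast hr _
      push_cast
      field_simp
    rw [this]
    gcongr
  have hc0 : 0.9 * e ≤ c := by nlinarith
  have h3 := sum_max_ge hk (hr 0) (c := c) (by nlinarith) (by linarith)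
  have h4 : (k : ℝ) * (c ^ 2 / 8) ≤ k * (2 * δ + e ^ 2 / 100) := by
    calc _ ≤ _ := h3
      _ ≤ _ := h1
      _ ≤ 2 * k * δ + k * (e ^ 2 / 100) := add_le_add hlw h2
      _ = _ := by ring
  have h5 := le_of_mul_le_mul_left h4 hkp
  nlinarith

theorem roth_lemma (m : ℕ) : RL m := by
  induction m with
  | zero => exact RL_zero
  | succ m ih => exact RL_succ m ih

end RothPf

namespace RothPf
open MvPolynomial

theorem exp_mean_le (r : ℕ) (hr : 0 < r) (t : ℝ) :
    ∑ i ∈ Finset.range (r + 1), Real.exp (t * (1 / 2 - (i : ℝ) / r)) ≤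
      (r + 1) * Real.exp (t ^ 2 / 8) := by
  have hr' : (0 : ℝ) < r := by exact_mod_cast hr
  have h1 := Finset.sum_flip (n := r) (fun i => Real.exp (t * (1 / 2 - (i : ℝ) / r)))
  have h2 : ∑ i ∈ Finset.range (r + 1), (Real.exp (t * (1 / 2 - (i : ℝ) / r)) +
      Real.exp (t * (1 / 2 - ((r - i : ℕ) : ℝ) / r))) ≤
      ∑ i ∈ Finset.range (r + 1), 2 * Real.exp (t ^ 2 / 8) := by
    refine Finset.sum_le_sum fun i hi => ?_
    have hi' : i ≤ r := by have := Finset.mem_range.1 hi; omega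
    have hi2 : (i : ℝ) ≤ r := by exact_mod_cast hi'
    have h3 : t * (1 / 2 - ((r - i : ℕ) : ℝ) / r) = -(t * (1 / 2 - (i : ℝ) / r)) := by
      rw [Nat.cast_sub hi']; field_simp; ring
    rw [h3]
    have h4 := Real.cosh_le_exp_half_sq (t * (1 / 2 - (i : ℝ) / r))
    rw [Real.cosh_eq] at h4
    have h5 : (t * (1 / 2 - (i : ℝ) / r)) ^ 2 / 2 ≤ t ^ 2 / 8 := by
      have h6 : (i : ℝ) / r ≤ 1 := (div_le_one hr').2 hi2
      have h7 : 0 ≤ (i : ℝ) / r := by positivity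
      have h8 : (1 / 2 - (i : ℝ) / r) ^ 2 ≤ 1 / 4 := by nlinarith
      rw [mul_pow]
      nlinarith [sq_nonneg t]
    have h6 := Real.exp_le_exp.2 h5
    linarith
  rw [Finset.sum_add_distrib, h1, Finset.sum_const, Finset.card_range, nsmul_eq_mul] at h2
  push_cast at h2
  linarith

/-- the box of exponents -/
def Box {m : ℕ} (r : Fin m → ℕ) : Finset (Fin m → ℕ) :=
  Fintype.piFinset fun h => Finset.range (r h + 1)

/-- exponents of small weight -/
noncomputable def Low {m : ℕ} (r : Fin m → ℕ) (ε : ℝ) : Finset (Fin m → ℕ) :=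
  (Box r).filter fun I => ∑ h, (I h : ℝ) / r h ≤ m * (1 / 2 - ε)

theorem card_Low_le {m : ℕ} (r : Fin m → ℕ) (hr : ∀ h, 0 < r h) (ε : ℝ) (hε : 0 ≤ ε) :
    ((Low r ε).card : ℝ) ≤ (Box r).card * Real.exp (-2 * ε ^ 2 * m) := by
  have hw : ∀ I : Fin m → ℕ, Real.exp (4 * ε * (m * (1 / 2 - ε) - ∑ h, (I h : ℝ) / r h)) =
      Real.exp (-4 * ε ^ 2 * m) * ∏ h, Real.exp (4 * ε * (1 / 2 - (I h : ℝ) / r h)) := by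
    intro I
    rw [← Real.exp_sum, ← Real.exp_add, ← Finset.mul_sum, Finset.sum_sub_distrib]
    congr 1
    simp
    ring
  calc ((Low r ε).card : ℝ) = ∑ I ∈ Low r ε, (1 : ℝ) := by simp
    _ ≤ ∑ I ∈ Low r ε, Real.exp (4 * ε * (m * (1 / 2 - ε) - ∑ h, (I h : ℝ) / r h)) := by
        refine Finset.sum_le_sum fun I hI => ?_
        have := (Finset.mem_filter.1 hI).2
        apply Real.one_le_exp
        apply mul_nonneg (by positivity); linarith
    _ ≤ ∑ I ∈ Box r, Real.exp (4 * ε * (m * (1 / 2 - ε) - ∑ h, (I h : ℝ) / r h)) := by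
        apply Finset.sum_le_sum_of_subset_of_nonneg
        · exact Finset.filter_subset _ _
        · intros; positivity
    _ = Real.exp (-4 * ε ^ 2 * m) *
        ∏ h, ∑ i ∈ Finset.range (r h + 1), Real.exp (4 * ε * (1 / 2 - (i : ℝ) / r h)) := by
        simp only [hw]
        rw [← Finset.mul_sum, Finset.prod_univ_sum]
        rfl
    _ ≤ Real.exp (-4 * ε ^ 2 * m) * ∏ h, ((r h + 1 : ℝ) * Real.exp ((4 * ε) ^ 2 / 8)) := by
        gcongr with h
        exact exp_mean_le (r h) (hr h) (4 * ε)
    _ = (Box r).card * Real.exp (-2 * ε ^ 2 * m) := by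
        rw [Finset.prod_mul_distrib, Finset.prod_const, ← Real.exp_nat_mul, Box, Fintype.card_piFinset]
        simp only [Finset.card_range, Finset.card_univ, Fintype.card_fin]
        push_cast
        rw [mul_left_comm, ← Real.exp_add]
        congr 2
        ring

attribute [local instance] Matrix.seminormedAddCommGroup in
theorem siegel {ι κ : Type*} (s : Finset ι) (q : Finset κ) (A : κ → ι → ℤ) (B : ℝ) (hB : 1 ≤ B)
    (hA : ∀ k ∈ q, ∀ i ∈ s, |(A k i : ℝ)| ≤ B) (hq : q.Nonempty) (hqs : 2 * q.card ≤ s.card) :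
    ∃ t : ι → ℤ, (∃ i ∈ s, t i ≠ 0) ∧ (∀ k ∈ q, ∑ i ∈ s, A k i * t i = 0) ∧
      ∀ i ∈ s, |(t i : ℝ)| ≤ s.card * B := by
  classical
  have hq0 : 0 < q.card := hq.card_pos
  let M : Matrix q s ℤ := Matrix.of fun k i => A k i
  obtain ⟨t, ht0, ht1, ht2⟩ := Int.Matrix.exists_ne_zero_int_vec_norm_le M
    (by simp only [Fintype.card_coe]; omega) (by simpa using hq0)
  simp only [Fintype.card_coe] at ht2
  have hM : max 1 ‖M‖ ≤ B := by
    refine max_le hB ?_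
    rw [Matrix.norm_le_iff (by linarith)]
    intro k i
    exact hA k k.2 i i.2
  have hs1 : (1 : ℝ) ≤ s.card := by
    have : 1 ≤ s.card := by omega
    exact_mod_cast this
  have hqs' : 2 * (q.card : ℝ) ≤ s.card := by exact_mod_cast hqs
  have hq0' : (0 : ℝ) < q.card := by exact_mod_cast hq0
  have hb : ‖t‖ ≤ s.card * B := by
    refine ht2.trans ?_
    calc _ ≤ ((s.card : ℝ) * max 1 ‖M‖) ^ (1 : ℝ) := by
          apply Real.rpow_le_rpow_of_exponent_le
          · nlinarith [le_max_left 1 ‖M‖]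
          · rw [div_le_one (by linarith)]; linarith
      _ ≤ _ := by rw [Real.rpow_one]; gcongr
  refine ⟨fun i => if h : i ∈ s then t ⟨i, h⟩ else 0, ?_, ?_, ?_⟩
  · obtain ⟨i, hi⟩ := Function.ne_iff.1 ht0
    exact ⟨i, i.2, by simpa using hi⟩
  · intro k hk
    have := congrFun ht1 ⟨k, hk⟩
    simp only [Matrix.mulVec, dotProduct, Pi.zero_apply] at this
    rw [← Finset.sum_coe_sort]
    simpa [M] using this
  · intro i hi
    simp only [hi, dif_pos]
    exact (norm_le_pi_norm t ⟨i, hi⟩).trans hb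

theorem power_rep {α : ℝ} (hα : IsAlgebraic ℚ α) : ∃ (d : ℕ) (a : ℤ) (H : ℝ) (c : ℕ → ℕ → ℤ),
    0 < d ∧ a ≠ 0 ∧ 1 ≤ H ∧ |(a : ℝ)| ≤ H ∧ (∀ n j, |(c n j : ℝ)| ≤ (2 * H) ^ n) ∧
    ∀ n, (a : ℝ) ^ n * α ^ n = ∑ j ∈ Finset.range d, (c n j : ℝ) * α ^ j := by
  have hα' : IsAlgebraic ℤ α := by
    rw [IsFractionRing.isAlgebraic_iff ℤ ℚ ℝ]; exact hα
  obtain ⟨p, hp0, hp⟩ := hα'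
  have hd : p.natDegree ≠ 0 := by
    intro h
    rw [Polynomial.eq_C_of_natDegree_eq_zero h] at hp hp0
    simp at hp hp0
    exact hp0 hp
  obtain ⟨e, he⟩ := Nat.exists_eq_succ_of_ne_zero hd
  have ha : p.coeff (e + 1) ≠ 0 := by
    have := Polynomial.leadingCoeff_ne_zero.2 hp0
    rwa [Polynomial.leadingCoeff, he] at this
  have hrel : (p.coeff (e + 1) : ℝ) * α ^ (e + 1) =
      - ∑ i ∈ Finset.range (e + 1), (p.coeff i : ℝ) * α ^ i := by
    rw [Polynomial.aeval_eq_sum_range, he, Nat.succ_eq_add_one, Finset.sum_range_succ] at hp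
    simp only [zsmul_eq_mul] at hp
    linarith
  set H : ℝ := ∑ i ∈ Finset.range (e + 2), |(p.coeff i : ℝ)| with hH
  have hHc : ∀ i < e + 2, |(p.coeff i : ℝ)| ≤ H := fun i hi =>
    Finset.single_le_sum (f := fun i => |(p.coeff i : ℝ)|) (fun _ _ => abs_nonneg _)
      (Finset.mem_range.2 hi)
  have hH1 : 1 ≤ H := by
    refine le_trans ?_ (hHc (e + 1) (by omega))
    have := Int.one_le_abs ha
    exact_mod_cast this
  have key : ∀ n, ∃ c : ℕ → ℤ, (∀ j, |(c j : ℝ)| ≤ (2 * H) ^ n) ∧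
      (p.coeff (e + 1) : ℝ) ^ n * α ^ n = ∑ j ∈ Finset.range (e + 1), (c j : ℝ) * α ^ j := by
    intro n
    induction n with
    | zero =>
      refine ⟨fun j => if j = 0 then 1 else 0, ?_, ?_⟩
      · intro j; dsimp only; split_ifs <;> simp
      · rw [Finset.sum_range_succ']; simp
    | succ n ih =>
      obtain ⟨c, hc1, hc2⟩ := ih
      refine ⟨fun j => if j < e + 1 then (if j = 0 then 0 else p.coeff (e + 1) * c (j - 1)) -
        c e * p.coeff j else 0, ?_, ?_⟩
      · intro j
        have hb : ∀ i k, i < e + 2 → |((p.coeff i : ℝ) * c k)| ≤ H * (2 * H) ^ n := by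
          intro i k hi
          rw [abs_mul]
          exact mul_le_mul (hHc i hi) (hc1 k) (abs_nonneg _) (by linarith)
        have h0 : (2 * H) ^ (n + 1) = H * (2 * H) ^ n + H * (2 * H) ^ n := by ring
        have h1 : (0 : ℝ) ≤ H * (2 * H) ^ n := by positivity
        rw [h0]
        dsimp only
        split_ifs with hj hj2
        · have := hb j e (by omega)
          rw [mul_comm (p.coeff j : ℝ)] at this
          push_cast
          rw [zero_sub, abs_neg]
          linarith
        · have h2 := hb j e (by omega)
          have h3 := hb (e + 1) (j - 1) (by omega)
          rw [mul_comm (p.coeff j : ℝ)] at h2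
          push_cast
          exact (abs_sub _ _).trans (add_le_add h3 h2)
        · simp; linarith
      · have h1 : ∀ j ∈ Finset.range (e + 1), ((if j < e + 1 then
            (if j = 0 then 0 else p.coeff (e + 1) * c (j - 1)) -
            c e * p.coeff j else 0 : ℤ) : ℝ) * α ^ j =
            (if j = 0 then 0 else (p.coeff (e + 1) : ℝ) * c (j - 1)) * α ^ j
              - c e * (p.coeff j * α ^ j) := by
          intro j hj
          rw [if_pos (Finset.mem_range.1 hj)]
          split_ifs <;> push_cast <;> ring
        rw [Finset.sum_congr rfl h1, Finset.sum_sub_distrib, ← Finset.mul_sum, 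
          Finset.sum_range_succ']
        simp only [Nat.add_eq_zero_iff, one_ne_zero, and_false, if_false, if_true, zero_mul,
          add_zero, Nat.add_sub_cancel]
        have h2 : (p.coeff (e + 1) : ℝ) ^ (n + 1) * α ^ (n + 1) = p.coeff (e + 1) * α *
          ((p.coeff (e + 1) : ℝ) ^ n * α ^ n) := by ring
        rw [h2, hc2, Finset.sum_range_succ]
        have h3 : ∑ x ∈ Finset.range e, (p.coeff (e + 1) : ℝ) * c x * α ^ (x + 1) =
            p.coeff (e + 1) * α * ∑ x ∈ Finset.range e, c x * α ^ x := by
          rw [Finset.mul_sum]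
          exact Finset.sum_congr rfl fun x _ => by ring
        rw [h3]
        linear_combination (c e : ℝ) * hrel
  choose c hc1 hc2 using key
  exact ⟨e + 1, p.coeff (e + 1), H, c, by omega, ha, hH1, hHc _ (by omega), hc1, hc2⟩

end RothPf

namespace RothPf
open MvPolynomial

theorem D_monomial {n : ℕ} {R : Type*} [CommRing R] (I e : Fin n →₀ ℕ) (c : R) :
    D I (monomial e c) = monomial (e - I) ((bin e I : R) * c) := by
  classical
  by_cases hc : c = 0
  · simp [hc, D]
  · unfold D
    rw [support_monomial, if_neg hc]
    simp

theorem aux_poly {α : ℝ} (hα : IsAlgebraic ℚ α) : ∃ (d : ℕ) (K : ℝ), 0 < d ∧ 1 ≤ K ∧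
    ∀ (m : ℕ) (ε : ℝ) (r : Fin m → ℕ), 0 ≤ ε → ε ≤ 1 / 2 →
      2 * d * Real.exp (-2 * ε ^ 2 * m) ≤ 1 → (∀ h, 0 < r h) →
      ∃ P : MvPolynomial (Fin m) ℤ, P ≠ 0 ∧ (∀ h, degreeOf h P ≤ r h) ∧ len P ≤ K ^ (∑ h, r h) ∧
        Idx (fun _ => α) r (m * (1 / 2 - ε)) (map (Int.castRingHom ℝ) P) := by
  classical
  obtain ⟨d, a, H, c, hd, ha, hH, haH, hc1, hc2⟩ := power_rep hα
  refine ⟨d, 4 * (2 * H * (2 * H)), hd, by nlinarith, ?_⟩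
  intro m ε r hε0 hε1 hm hr
  set R := ∑ h, r h with hR
  let φ : (Fin m → ℕ) → (Fin m →₀ ℕ) := fun e => Finsupp.equivFunOnFinite.symm e
  have hφ : ∀ e h, φ e h = e h := fun e h => rfl
  let N : (Fin m → ℕ) → (Fin m → ℕ) → ℕ := fun e I => ∑ h, (e h - I h)
  let A : ((Fin m → ℕ) × ℕ) → (Fin m → ℕ) → ℤ := fun k e =>
    (bin (φ e) (φ k.1) : ℤ) * (a ^ (R - N e k.1) * c (N e k.1) k.2)
  have hbox : ∀ e : Fin m → ℕ, e ∈ Box r ↔ ∀ h, e h ≤ r h := by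
    intro e; simp [Box, Nat.lt_succ_iff]
  have hN : ∀ e ∈ Box r, ∀ I, N e I ≤ R := by
    intro e he I
    refine Finset.sum_le_sum fun h _ => ?_
    have := (hbox e).1 he h
    omega
  have hA : ∀ k ∈ (Low r ε) ×ˢ (Finset.range d), ∀ e ∈ Box r,
      |(A k e : ℝ)| ≤ (2 * H * (2 * H)) ^ R := by
    intro k _ e he
    have h1 : (bin (φ e) (φ k.1) : ℝ) ≤ 2 ^ R := by
      have := bin_le (e := φ e) (r := r) (I := φ k.1) ((hbox e).1 he)
      exact_mod_cast this
    have h2 : |(a : ℝ)| ^ (R - N e k.1) ≤ H ^ R :=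
      (pow_le_pow_left₀ (abs_nonneg _) haH _).trans (pow_le_pow_right₀ hH (Nat.sub_le _ _))
    have h3 : |(c (N e k.1) k.2 : ℝ)| ≤ (2 * H) ^ R :=
      (hc1 _ _).trans (pow_le_pow_right₀ (by linarith) (hN e he _))
    simp only [A]
    push_cast
    rw [abs_mul, abs_mul, abs_pow, Nat.abs_cast, mul_pow (2 * H) (2 * H), mul_pow 2 H, mul_assoc,
      ← mul_pow 2 H]
    gcongr
  have hcard : 2 * ((Low r ε) ×ˢ (Finset.range d)).card ≤ (Box r).card := by
    rw [Finset.card_product, Finset.card_range]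
    have h1 := card_Low_le r hr ε hε0
    have h2 : (2 * (((Low r ε).card : ℝ) * d)) ≤ (Box r).card := by
      calc 2 * (((Low r ε).card : ℝ) * d) ≤
          2 * (((Box r).card * Real.exp (-2 * ε ^ 2 * m)) * d) := by gcongr
        _ = (Box r).card * (2 * d * Real.exp (-2 * ε ^ 2 * m)) := by ring
        _ ≤ (Box r).card * 1 := by gcongr
        _ = _ := mul_one _
    exact_mod_cast h2
  have hne : ((Low r ε) ×ˢ (Finset.range d)).Nonempty := by
    refine ⟨(0, 0), Finset.mem_product.2 ⟨Finset.mem_filter.2 ⟨(hbox _).2 (by simp), ?_⟩,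
      Finset.mem_range.2 hd⟩⟩
    simp
    have : (0 : ℝ) ≤ m := by positivity
    apply mul_nonneg this
    linarith
  have hB1 : (1 : ℝ) ≤ 2 * H * (2 * H) := by nlinarith
  obtain ⟨t, ⟨e0, he0, he0t⟩, ht1, ht2⟩ := siegel (Box r) _ A _ (one_le_pow₀ hB1) hA hne hcard
  have hcardB : ((Box r).card : ℝ) ≤ 2 ^ R := by
    rw [Box, Fintype.card_piFinset, hR, ← Finset.prod_pow_eq_pow_sum]
    simp only [Finset.card_range]
    push_cast
    refine Finset.prod_le_prod (fun _ _ => by positivity) fun h _ => ?_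
    have := Nat.lt_two_pow_self (n := r h)
    exact_mod_cast this
  let P : MvPolynomial (Fin m) ℤ := ∑ e ∈ Box r, monomial (φ e) (t e)
  have hPc : ∀ f, coeff f P = if (f : Fin m → ℕ) ∈ Box r then t f else 0 := by
    intro f
    simp only [P, coeff_sum, coeff_monomial]
    have : ∀ e : Fin m → ℕ, φ e = f ↔ e = f := by
      intro e
      constructor
      · rintro rfl; rfl
      · rintro rfl; ext; rfl
    simp only [this]
    rw [Finset.sum_ite_eq']
  refine ⟨P, ?_, ?_, ?_, ?_⟩
  · intro h
    have := hPc (φ e0)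
    rw [h, coeff_zero] at this
    have h2 : ((φ e0 : Fin m →₀ ℕ) : Fin m → ℕ) = e0 := rfl
    rw [h2, if_pos he0] at this
    exact he0t this.symm
  · intro h
    rw [degreeOf_le_iff]
    intro f hf
    by_contra hlt
    rw [mem_support_iff, hPc, if_neg] at hf
    · exact hf rfl
    · intro h2
      exact hlt ((hbox _).1 h2 h)
  · calc len P ≤ ∑ e ∈ Box r, len (monomial (φ e) (t e)) := len_sum_le _ _
      _ ≤ ∑ e ∈ Box r, (2 ^ R * (2 * H * (2 * H)) ^ R) := by
          refine Finset.sum_le_sum fun e he => (len_monomial_le _ _).trans ?_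
          refine (ht2 e he).trans ?_
          gcongr
      _ = (Box r).card * (2 ^ R * (2 * H * (2 * H)) ^ R) := by simp
      _ ≤ 2 ^ R * (2 ^ R * (2 * H * (2 * H)) ^ R) := by gcongr
      _ = _ := by rw [← mul_assoc, ← mul_pow, ← mul_pow]; norm_num
  · intro f hf
    by_contra hlt
    push Not at hlt
    apply hf
    rw [coeff_S, D_map]
    have hev : eval (fun _ => α) (map (Int.castRingHom ℝ) (D f P)) =
        ∑ e ∈ Box r, (bin (φ e) f : ℝ) * t e * α ^ (N e f) := by
      simp only [P]
      rw [D_sum, map_sum, map_sum]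
      refine Finset.sum_congr rfl fun e _ => ?_
      rw [D_monomial, map_monomial, eval_monomial, Finsupp.prod_fintype _ _ (by simp),
        Finset.prod_pow_eq_pow_sum]
      simp [N, hφ]
    rw [hev]
    by_cases hfb : (f : Fin m → ℕ) ∈ Box r
    · have hfl : (f : Fin m → ℕ) ∈ Low r ε := Finset.mem_filter.2 ⟨hfb, hlt.le⟩
      have hff : φ (f : Fin m → ℕ) = f := by ext; rfl
      have haR : (a : ℝ) ^ R ≠ 0 := pow_ne_zero _ (by exact_mod_cast ha)
      apply (mul_eq_zero_iff_left haR).1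
      rw [Finset.mul_sum]
      calc ∑ e ∈ Box r, (a : ℝ) ^ R * ((bin (φ e) f : ℝ) * t e * α ^ (N e f))
          = ∑ e ∈ Box r, ∑ j ∈ Finset.range d, ((A (f, j) e : ℝ) * t e) * α ^ j := by
            refine Finset.sum_congr rfl fun e he => ?_
            have h1 : (a : ℝ) ^ R = a ^ (R - N e f) * a ^ (N e f) := by
              rw [← pow_add, Nat.sub_add_cancel (hN e he f)]
            have h2 : (a : ℝ) ^ R * ((bin (φ e) f : ℝ) * t e * α ^ (N e f)) =
              (a ^ (R - N e f) * bin (φ e) f * t e) * (a ^ (N e f) * α ^ (N e f)) := by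
              rw [h1]; ring
            rw [h2, hc2, Finset.mul_sum]
            refine Finset.sum_congr rfl fun j _ => ?_
            simp only [A, hff]
            push_cast
            ring
        _ = ∑ j ∈ Finset.range d, ((∑ e ∈ Box r, A (f, j) e * t e : ℤ) : ℝ) * α ^ j := by
            rw [Finset.sum_comm]
            refine Finset.sum_congr rfl fun j _ => ?_
            push_cast
            rw [Finset.sum_mul]
        _ = 0 := by
            refine Finset.sum_eq_zero fun j hj => ?_
            rw [ht1 (f, j) (Finset.mem_product.2 ⟨hfl, hj⟩)]
            simp
    · refine Finset.sum_eq_zero fun e he => ?_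
      rw [bin_eq_zero, Nat.cast_zero, zero_mul, zero_mul]
      intro hle
      apply hfb
      rw [hbox] at he ⊢
      exact fun h => (hle h).trans (he h)

end RothPf

namespace RothPf
open MvPolynomial

theorem lower_bound {m : ℕ} {r : Fin m → ℕ} {x : Fin m → ℚ} {Q : MvPolynomial (Fin m) ℤ}
    (hd : ∀ h, degreeOf h Q ≤ r h) (hne : eval x (map (Int.castRingHom ℚ) Q) ≠ 0) :
    1 ≤ |eval x (map (Int.castRingHom ℚ) Q)| * ∏ h, ((x h).den : ℚ) ^ r h := by
  have hx : ∀ h, x h * (x h).den = (x h).num := fun h => Rat.mul_den_eq_num _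
  have hZint : ∃ z : ℤ, eval x (map (Int.castRingHom ℚ) Q) * ∏ h, ((x h).den : ℚ) ^ r h = z := by
    refine ⟨∑ e ∈ Q.support, coeff e Q * ∏ h, ((x h).num ^ (e h) * (x h).den ^ (r h - e h)), ?_⟩
    rw [eval_map, eval₂_eq', Finset.sum_mul]
    push_cast
    refine Finset.sum_congr rfl fun e he => ?_
    rw [mul_assoc, ← Finset.prod_mul_distrib]
    congr 1
    refine Finset.prod_congr rfl fun h _ => ?_
    have h1 : e h ≤ r h := (monomial_le_degreeOf h he).trans (hd h)
    rw [← hx h, mul_pow, mul_assoc, ← pow_add, Nat.add_sub_cancel' h1]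
  obtain ⟨z, hz⟩ := hZint
  have hp : 0 < ∏ h, ((x h).den : ℚ) ^ r h :=
    Finset.prod_pos fun h _ => pow_pos (by exact_mod_cast (x h).den_pos) _
  rw [← abs_of_pos hp, ← abs_mul, hz]
  have hz0 : z ≠ 0 := by
    rintro rfl
    rw [Int.cast_zero] at hz
    exact (mul_ne_zero hne hp.ne') hz
  have := Int.one_le_abs hz0
  exact_mod_cast this

theorem upper_bound {m : ℕ} {r : Fin m → ℕ} {x L : Fin m → ℝ} {α μ Λ θ T : ℝ}
    {Q : MvPolynomial (Fin m) ℝ} (hr : ∀ h, 0 < r h)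
    (hI : Idx (fun _ => α) r θ Q) (hμ : 0 ≤ μ) (hΛ : 0 ≤ Λ)
    (hx : ∀ h, |x h - α| ≤ Real.exp (-μ * L h)) (hL : ∀ h, Λ ≤ r h * L h)
    (hT : len (S (fun _ => α) Q) ≤ T) :
    |eval x Q| ≤ T * Real.exp (-μ * (Λ * θ)) := by
  rw [eval_taylor (fun _ => α) x Q]
  calc |∑ f ∈ (S (fun _ => α) Q).support, coeff f (S (fun _ => α) Q) * ∏ h, (x h - α) ^ f h|
      ≤ ∑ f ∈ (S (fun _ => α) Q).support,
        |coeff f (S (fun _ => α) Q) * ∏ h, (x h - α) ^ f h| := Finset.abs_sum_le_sum_abs _ _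
    _ ≤ ∑ f ∈ (S (fun _ => α) Q).support,
        ‖coeff f (S (fun _ => α) Q)‖ * Real.exp (-μ * (Λ * θ)) := by
        refine Finset.sum_le_sum fun f hf => ?_
        rw [abs_mul, Finset.abs_prod]
        refine mul_le_mul_of_nonneg_left ?_ (abs_nonneg _)
        calc ∏ h, |(x h - α) ^ f h| ≤ ∏ h, Real.exp (-μ * (Λ * (f h / r h))) := by
              refine Finset.prod_le_prod (fun _ _ => abs_nonneg _) fun h _ => ?_
              rw [abs_pow]
              refine (pow_le_pow_left₀ (abs_nonneg _) (hx h) _).trans ?_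
              rw [← Real.exp_nat_mul]
              apply Real.exp_le_exp.2
              have h1 : (0 : ℝ) < r h := by exact_mod_cast hr h
              have h2 : Λ * (f h / r h) ≤ L h * f h := by
                calc Λ * (f h / r h) ≤ (r h * L h) * (f h / r h) := by
                      gcongr; exact hL h
                  _ = _ := by field_simp
              nlinarith
          _ = Real.exp (-μ * (Λ * ∑ h, (f h : ℝ) / r h)) := by
              rw [← Real.exp_sum, Finset.mul_sum, Finset.mul_sum]
          _ ≤ _ := by
              apply Real.exp_le_exp.2
              have := hI f (mem_support_iff.1 hf)
              have h3 : Λ * θ ≤ Λ * ∑ h, (f h : ℝ) / r h := by gcongr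
              nlinarith
    _ = len (S (fun _ => α) Q) * Real.exp (-μ * (Λ * θ)) := by
        rw [← Finset.sum_mul]; rfl
    _ ≤ _ := by gcongr

set_option maxHeartbeats 1000000 in
theorem core {α μ : ℝ} (hα : IsAlgebraic ℚ α) (hμ : 2 < μ)
    (hx : ∀ B : ℝ, ∃ x : ℚ, B ≤ Real.log x.den ∧ |(x : ℝ) - α| ≤ Real.exp (-μ * Real.log x.den)) :
    False := by
  obtain ⟨d, K, hd, hK, haux⟩ := aux_poly hα
  obtain ⟨η, hη0, hη1, hη⟩ : ∃ η : ℝ, 0 < η ∧ η ≤ 1 / 10 ∧ 1 + 2 * η < μ * (1 / 2 - 2 * η) := by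
    refine ⟨(μ - 2) / (10 * μ), by apply div_pos <;> linarith, ?_, ?_⟩
    · rw [div_le_div_iff₀ (by linarith) (by norm_num)]; linarith
    · have h1 : μ * ((μ - 2) / (10 * μ)) = (μ - 2) / 10 := by field_simp
      have h2 : (μ - 2) / (10 * μ) ≤ (μ - 2) / 10 := by
        apply div_le_div_of_nonneg_left <;> linarith
      nlinarith
  -- choice of m
  obtain ⟨m, hm0, hm⟩ : ∃ m : ℕ, 0 < m ∧ 2 * d * Real.exp (-2 * η ^ 2 * m) ≤ 1 := by
    obtain ⟨m, hm⟩ := exists_nat_ge (2 * d / (2 * η ^ 2) : ℝ)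
    have hd' : (0 : ℝ) < d := by exact_mod_cast hd
    have hmp : (0 : ℝ) < m := lt_of_lt_of_le (by positivity) hm
    refine ⟨m, by exact_mod_cast hmp, ?_⟩
    rw [div_le_iff₀ (by positivity)] at hm
    have h1 := Real.add_one_le_exp (2 * η ^ 2 * m)
    have h2 : -2 * η ^ 2 * m = -(2 * η ^ 2 * m) := by ring
    rw [h2, Real.exp_neg, ← div_eq_mul_inv, div_le_one (Real.exp_pos _)]
    linarith
  obtain ⟨δ, hδ0, hRL⟩ := roth_lemma m η hη0
  set A : ℝ := 1 + |α| with hA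
  have hA1 : 1 ≤ A := by rw [hA]; linarith [abs_nonneg α]
  have hlK : 0 ≤ Real.log K := Real.log_nonneg hK
  have hlT : 0 ≤ Real.log (2 * A * K) := Real.log_nonneg (by nlinarith)
  set B : ℝ := 1 + 2 * m * (Real.log K + 1) / δ + 2 * Real.log (2 * A * K) / η with hB
  have hmp : (0 : ℝ) < m := by exact_mod_cast hm0
  have hm1 : (1 : ℝ) ≤ m := by exact_mod_cast hm0
  have hB0 : 0 ≤ 2 * m * (Real.log K + 1) / δ := by positivity
  have hB0' : 0 ≤ 2 * Real.log (2 * A * K) / η := by positivity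
  have hB1 : 1 ≤ B := by linarith
  have hB2 : 2 * m * (Real.log K + 1) ≤ B * δ := by
    rw [← div_le_iff₀ hδ0]; linarith
  have hB3 : 2 * Real.log (2 * A * K) ≤ B * η := by
    rw [← div_le_iff₀ hη0]; linarith
  -- choice of the approximations
  obtain ⟨y, hy1, hy2⟩ := exists_seq_of_forall_finset_exists
    (fun x : ℚ => B ≤ Real.log x.den ∧ |(x : ℝ) - α| ≤ Real.exp (-μ * Real.log x.den))
    (fun x x' : ℚ => Real.log x.den ≤ Real.log x'.den ∧
      2 / δ * Real.log x.den ≤ Real.log x'.den) (by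
      intro s hs
      obtain ⟨x, hx1, hx2⟩ := hx (B + ∑ x ∈ s, (1 + 2 / δ) * Real.log x.den)
      have hnn : ∀ x ∈ s, 0 ≤ (1 + 2 / δ) * Real.log x.den := fun x hx => by
        have := Real.log_natCast_nonneg x.den
        positivity
      have hsn := Finset.sum_nonneg hnn
      refine ⟨x, ⟨by linarith, hx2⟩, fun z hz => ?_⟩
      have h1 := Finset.single_le_sum hnn hz
      have h2 := Real.log_natCast_nonneg z.den
      have h3 : 0 ≤ 2 / δ * Real.log z.den := by positivity
      constructor <;> nlinarith)
  let x : Fin m → ℚ := fun h => y (m - 1 - h)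
  set L : Fin m → ℝ := fun h => Real.log (x h).den with hLdef
  have hLB : ∀ h, B ≤ L h := fun h => (hy1 _).1
  have hLx : ∀ h, |(x h : ℝ) - α| ≤ Real.exp (-μ * L h) := fun h => (hy1 _).2
  have hLL : ∀ i j : Fin m, i < j → L j ≤ L i ∧ 2 / δ * L j ≤ L i := fun i j hij =>
    hy2 _ _ (by have := j.2; have : (i : ℕ) < j := hij; omega)
  let z : Fin m := ⟨0, hm0⟩
  have hLz : ∀ h, L h ≤ L z := by
    intro h
    by_cases hh : h = z
    · rw [hh]
    · refine (hLL z h ?_).1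
      rw [Fin.lt_def]
      have : (h : ℕ) ≠ 0 := fun h0 => hh (Fin.ext h0)
      simp only [z]; omega
  obtain ⟨R0, hR0⟩ := exists_nat_ge (1 / η)
  set Λ : ℝ := R0 * L z with hΛ
  have hLpos : ∀ h, 0 < L h := fun h => by linarith [hLB h]
  have hR0p : (0 : ℝ) < R0 := lt_of_lt_of_le (by positivity) hR0
  have hΛ0 : 0 < Λ := mul_pos hR0p (hLpos z)
  let r : Fin m → ℕ := fun h => ⌈Λ / L h⌉₊
  have hr1 : ∀ h, Λ ≤ r h * L h := by
    intro h
    rw [← div_le_iff₀ (hLpos h)]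
    exact Nat.le_ceil _
  have hr2 : ∀ h, r h * L h ≤ (1 + η) * Λ := by
    intro h
    have h1 := (Nat.ceil_lt_add_one (a := Λ / L h) (div_nonneg hΛ0.le (hLpos h).le)).le
    have h2 : r h * L h ≤ (Λ / L h + 1) * L h := mul_le_mul_of_nonneg_right h1 (hLpos h).le
    rw [add_mul, div_mul_cancel₀ _ (hLpos h).ne'] at h2
    have h3 : L z ≤ η * Λ := by
      rw [div_le_iff₀ hη0] at hR0
      rw [hΛ]
      nlinarith [hLpos z]
    linarith [hLz h]
  have hrpos : ∀ h, 0 < r h := fun h => Nat.ceil_pos.2 (div_pos hΛ0 (hLpos h))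
  have hsumr : B * ∑ h, (r h : ℝ) ≤ 2 * m * Λ := by
    calc B * ∑ h, (r h : ℝ) = ∑ h, B * (r h : ℝ) := Finset.mul_sum _ _ _
      _ ≤ ∑ h : Fin m, 2 * Λ := by
          refine Finset.sum_le_sum fun h _ => ?_
          have h1 := hr2 h
          have h2 : B * (r h : ℝ) ≤ r h * L h := by
            rw [mul_comm]; gcongr; exact hLB h
          nlinarith
      _ = 2 * m * Λ := by simp; ring
  obtain ⟨P, hP0, hPd, hPl, hPI⟩ := haux m η r hη0.le (by linarith) hm hrpos
  have hSr : (((∑ h, r h : ℕ)) : ℝ) = ∑ h, (r h : ℝ) := by push_cast; rfl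
  have hSr0 : 0 ≤ ∑ h, (r h : ℝ) := by positivity
  obtain ⟨J, hJ1, hJ2⟩ := hRL r x P hrpos hP0 hPd
    (by
      intro i j hij
      have h1 := (hLL i j hij).2
      have h2 := hr2 i
      have h3 := hr1 j
      have h4 : 2 * L j ≤ δ * L i := by
        rw [div_mul_eq_mul_div, div_le_iff₀ hδ0] at h1; linarith
      have h5 : (r i : ℝ) * (2 * L j) ≤ δ * r j * (2 * L j) := by
        calc (r i : ℝ) * (2 * L j) ≤ r i * (δ * L i) := by gcongr
          _ = δ * (r i * L i) := by ring
          _ ≤ δ * (2 * Λ) := by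
              apply mul_le_mul_of_nonneg_left _ hδ0.le
              nlinarith only [h2, hΛ0, hη1]
          _ ≤ δ * (2 * (r j * L j)) := by gcongr
          _ = _ := by ring
      exact le_of_mul_le_mul_right h5 (by linarith [hLpos j]))
    (by
      intro h
      have h1 : Real.log (len P) ≤ (∑ h, (r h : ℝ)) * Real.log K := by
        rw [← hSr, ← Real.log_pow]
        exact Real.log_le_log (by linarith [one_le_len hP0]) hPl
      have h2 : B * ((∑ h, (r h : ℝ)) * (Real.log K + 1)) ≤ B * (δ * Λ) := by
        calc B * ((∑ h, (r h : ℝ)) * (Real.log K + 1))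
            = (B * ∑ h, (r h : ℝ)) * (Real.log K + 1) := by ring
          _ ≤ (2 * m * Λ) * (Real.log K + 1) := by gcongr
          _ = (2 * m * (Real.log K + 1)) * Λ := by ring
          _ ≤ (B * δ) * Λ := by gcongr
          _ = _ := by ring
      have h3 := le_of_mul_le_mul_left h2 (by linarith)
      have h4 : δ * Λ ≤ δ * (r h * L h) := by gcongr; exact hr1 h
      calc _ ≤ (∑ h, (r h : ℝ)) * (Real.log K + 1) := by linarith
        _ ≤ _ := h3
        _ ≤ _ := h4)
  rw [coeff_S, D_map] at hJ1
  set Q := D J P with hQ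
  have hQd : ∀ h, degreeOf h Q ≤ r h := fun h => (degreeOf_D_le _ _).trans (hPd h)
  have hlow := lower_bound hQd hJ1
  -- transfer to reals
  have hreal : ((eval x (map (Int.castRingHom ℚ) Q) : ℚ) : ℝ) =
      eval (fun h => (x h : ℝ)) (map (Int.castRingHom ℝ) Q) := by
    rw [eval_map, eval_map, eval₂_eq', eval₂_eq']
    push_cast
    simp
  have hlow' : 1 ≤ |eval (fun h => (x h : ℝ)) (map (Int.castRingHom ℝ) Q)| *
      ∏ h, ((x h).den : ℝ) ^ r h := by
    rw [← hreal]
    exact_mod_cast hlow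
  have hprod : ∏ h, ((x h).den : ℝ) ^ r h ≤ Real.exp (m * ((1 + η) * Λ)) := by
    calc ∏ h, ((x h).den : ℝ) ^ r h = ∏ h, Real.exp (r h * L h) := by
          refine Finset.prod_congr rfl fun h _ => ?_
          rw [Real.exp_nat_mul, hLdef, Real.exp_log]
          exact_mod_cast (x h).den_pos
      _ = Real.exp (∑ h, r h * L h) := (Real.exp_sum _ _).symm
      _ ≤ _ := by
          apply Real.exp_le_exp.2
          calc ∑ h, r h * L h ≤ ∑ h : Fin m, (1 + η) * Λ := Finset.sum_le_sum fun h _ => hr2 h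
            _ = _ := by simp
  have hQI : Idx (fun _ => α) r (m * (1 / 2 - 2 * η)) (map (Int.castRingHom ℝ) Q) := by
    rw [hQ, ← D_map]
    refine (hPI.D J).mono ?_
    have h9 : η ≤ m * η := by nlinarith only [hm1, hη0]
    linarith only [h9, hJ2]
  have hQd' : ∀ h, degreeOf h (map (Int.castRingHom ℝ) Q) ≤ r h := by
    intro h
    refine le_trans ?_ (hQd h)
    rw [degreeOf_eq_sup, degreeOf_eq_sup]
    exact Finset.sup_mono (support_map_subset _ _)
  have hlenS : len (S (fun _ => α) (map (Int.castRingHom ℝ) Q)) ≤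
      (2 * A * K) ^ (∑ h, r h) := by
    calc _ ≤ A ^ (∑ h, r h) * len (map (Int.castRingHom ℝ) Q) :=
          len_S_le (fun _ => α) (fun _ => le_rfl) hA1 hQd'
      _ ≤ A ^ (∑ h, r h) * (2 ^ (∑ h, r h) * K ^ (∑ h, r h)) := by
          gcongr
          refine (len_map_le Q).trans ((len_D_le hPd J).trans ?_)
          gcongr
      _ = _ := by rw [← mul_pow, ← mul_pow]; congr 1; ring
  have hup := upper_bound (x := fun h => (x h : ℝ)) (L := L) hrpos hQI (by linarith : 0 ≤ μ)
    hΛ0.le hLx hr1 hlenS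
  have hTexp : (2 * A * K) ^ (∑ h, r h) = Real.exp ((∑ h, (r h : ℝ)) * Real.log (2 * A * K)) := by
    rw [← hSr, Real.exp_nat_mul, Real.exp_log (by nlinarith)]
  rw [hTexp, ← Real.exp_add] at hup
  have hfin : (1 : ℝ) ≤ Real.exp (((∑ h, (r h : ℝ)) * Real.log (2 * A * K) +
      -μ * (Λ * (m * (1 / 2 - 2 * η)))) + m * ((1 + η) * Λ)) := by
    rw [Real.exp_add]
    refine hlow'.trans ?_
    gcongr
  rw [Real.one_le_exp_iff] at hfin
  have h6 : B * ((∑ h, (r h : ℝ)) * Real.log (2 * A * K)) ≤ B * (η * (m * Λ)) := by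
    calc B * ((∑ h, (r h : ℝ)) * Real.log (2 * A * K))
        = (B * ∑ h, (r h : ℝ)) * Real.log (2 * A * K) := by ring
      _ ≤ (2 * m * Λ) * Real.log (2 * A * K) := by gcongr
      _ = m * Λ * (2 * Real.log (2 * A * K)) := by ring
      _ ≤ m * Λ * (B * η) := by gcongr
      _ = _ := by ring
  have h7 := le_of_mul_le_mul_left h6 (by linarith)
  have h8 : 0 < m * Λ := by positivity
  nlinarith only [h7, h8, hη, hfin]

end RothPf

theorem roth_theorem (α : ℝ) (hα : IsAlgebraic ℚ α) (hirr : Irrational α)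
    (ρ : ℝ) (hρ : 1 < ρ) :
    {pq : ℤ × ℤ | 1 ≤ pq.2 ∧ (pq.2 : ℝ) ^ ρ * |(pq.2 : ℝ) * α - (pq.1 : ℝ)| ≤ 1}.Finite := by
  have hcore : ∃ B : ℝ, ∀ x : ℚ, B ≤ Real.log x.den →
      ¬ |(x : ℝ) - α| ≤ Real.exp (-(1 + ρ) * Real.log x.den) := by
    by_contra hcon
    push Not at hcon
    exact RothPf.core hα (by linarith) hcon
  obtain ⟨B, hB⟩ := hcore
  obtain ⟨N, hN⟩ := exists_nat_ge (Real.exp B)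
  have hF : (0 : ℝ) < (N.factorial : ℝ) := by exact_mod_cast N.factorial_pos
  have hirr2 : Irrational ((N.factorial : ℝ) * α) := by
    exact_mod_cast hirr.natCast_mul N.factorial_ne_zero
  set η : ℝ := |(N.factorial : ℝ) * α - round ((N.factorial : ℝ) * α)| with hη
  have hη0 : 0 < η := by
    rw [hη, abs_pos, sub_ne_zero]
    exact hirr2.ne_int _
  obtain ⟨M, hM⟩ := exists_nat_ge ((N.factorial : ℝ) / η)
  obtain ⟨T, hT⟩ := exists_nat_ge (M * |α| + 1)
  refine Set.Finite.subset (Set.finite_Icc ((-(T : ℤ)), (1 : ℤ)) ((T : ℤ), (M : ℤ))) ?_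
  rintro ⟨p, q⟩ ⟨hq, h⟩
  simp only at hq h
  have hq1 : (1 : ℝ) ≤ q := by exact_mod_cast hq
  have hq0 : (0 : ℝ) < q := by linarith
  have hpow1 : (q : ℝ) ≤ (q : ℝ) ^ ρ := by
    calc (q : ℝ) = (q : ℝ) ^ (1 : ℝ) := (Real.rpow_one _).symm
      _ ≤ _ := Real.rpow_le_rpow_of_exponent_le hq1 hρ.le
  have hqa : (q : ℝ) * |(q : ℝ) * α - p| ≤ 1 :=
    (mul_le_mul_of_nonneg_right hpow1 (abs_nonneg _)).trans h
  have hpa : |(q : ℝ) * α - p| ≤ 1 := by nlinarith [abs_nonneg ((q : ℝ) * α - p)]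
  set x : ℚ := (p : ℚ) / (q : ℚ) with hx
  have hxr : (x : ℝ) = (p : ℝ) / q := by rw [hx]; push_cast; rfl
  have hxa : |(x : ℝ) - α| = |(q : ℝ) * α - p| / q := by
    rw [hxr, abs_sub_comm, ← abs_of_pos hq0, ← abs_div, abs_of_pos hq0]
    congr 1
    field_simp
  have hden : (x.den : ℝ) ≤ q := by
    have h1 : (x.den : ℤ) ∣ q := by
      rw [hx, ← Rat.divInt_eq_div]; exact Rat.den_dvd p q
    exact_mod_cast Int.le_of_dvd (by linarith) h1
  have hden0 : (0 : ℝ) < x.den := by exact_mod_cast x.den_pos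
  have happ : |(x : ℝ) - α| ≤ Real.exp (-(1 + ρ) * Real.log x.den) := by
    calc |(x : ℝ) - α| ≤ (q : ℝ) ^ (-(1 + ρ)) := by
          rw [hxa, Real.rpow_neg hq0.le, Real.rpow_add hq0, Real.rpow_one, div_le_iff₀ hq0, mul_inv]
          have hp : (0 : ℝ) < (q : ℝ) ^ ρ := Real.rpow_pos_of_pos hq0 _
          have : (q : ℝ)⁻¹ * ((q : ℝ) ^ ρ)⁻¹ * q = ((q : ℝ) ^ ρ)⁻¹ := by field_simp
          rw [this, inv_eq_one_div, le_div_iff₀ hp, mul_comm]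
          exact h
      _ ≤ (x.den : ℝ) ^ (-(1 + ρ)) :=
          Real.rpow_le_rpow_of_nonpos hden0 hden (by linarith)
      _ = _ := by rw [Real.rpow_def_of_pos hden0, mul_comm]
  have hdN : x.den ≤ N := by
    by_contra hlt
    push Not at hlt
    refine hB x ?_ happ
    rw [Real.le_log_iff_exp_le hden0]
    have : (N : ℝ) ≤ x.den := by exact_mod_cast hlt.le
    linarith
  obtain ⟨w, hw⟩ : x.den ∣ N.factorial := Nat.dvd_factorial x.den_pos hdN
  have hZint : (N.factorial : ℝ) * x = ((w * x.num : ℤ) : ℝ) := by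
    have h1 : (x : ℝ) * x.den = x.num := by exact_mod_cast Rat.mul_den_eq_num x
    rw [hw]
    push_cast
    rw [← h1]; ring
  have hηle : η ≤ (N.factorial : ℝ) * |(x : ℝ) - α| := by
    have h1 := round_le ((N.factorial : ℝ) * α) (w * x.num : ℤ)
    rw [← hZint, ← mul_sub, abs_mul, abs_of_pos hF, abs_sub_comm α] at h1
    exact h1
  have hqM : (q : ℝ) ≤ M := by
    refine le_trans ?_ hM
    rw [le_div_iff₀ hη0]
    have h2 : q * (|(x : ℝ) - α|) ≤ 1 := by
      rw [hxa, mul_div_cancel₀ _ hq0.ne']; exact hpa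
    calc (q : ℝ) * η ≤ q * ((N.factorial : ℝ) * |(x : ℝ) - α|) := by gcongr
      _ = N.factorial * (q * |(x : ℝ) - α|) := by ring
      _ ≤ N.factorial * 1 := by gcongr
      _ = _ := mul_one _
  have hpT : |(p : ℝ)| ≤ T := by
    refine le_trans ?_ hT
    have h1 : |(p : ℝ)| ≤ |(q : ℝ) * α| + |(q : ℝ) * α - p| := by
      have := abs_sub ((q : ℝ) * α) ((q : ℝ) * α - p)
      simpa using this
    rw [abs_mul, abs_of_pos hq0] at h1
    have h2 : (q : ℝ) * |α| ≤ M * |α| := by gcongr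
    linarith
  have hp1 := abs_le.1 hpT
  have hp2 : -(T : ℤ) ≤ p ∧ p ≤ T := ⟨by exact_mod_cast hp1.1, by exact_mod_cast hp1.2⟩
  rw [Set.mem_Icc, Prod.mk_le_mk, Prod.mk_le_mk]
  exact ⟨⟨hp2.1, hq⟩, hp2.2, by exact_mod_cast hqM⟩
end
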